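/- Let N ⊆ E be a coisotropic smooth submanifold and let ψ be a symplectic homeomorphism of E such that ψ(N) is a smooth submanifold of E. Then ψ(N) is coisotropic. (The Humilière–Leclercq–Seyfaddini rigidity theorem for coisotropic submanifolds, in the standard symplectic vector space.) -/

import Mathlib

/-!
Suppose that `ψ(N)` is not coisotropic at `p = ψ(q)`. Then two functions `H` and `D` vanishing on
`ψ(N)` near `p` have Poisson bracket `1` at `p` (`exists_bracket`). This is played off against the
Lagrangian rigidity of `C⁰` limits of symplectomorphisms.

*Flattening.* After an affine symplectic change of coordinates at `q`, the submanifold `N` is a graph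
`y_j = g_j`, `j ∈ J`, whose defining functions Poisson commute along it (`exists_linear`,
`exists_adapted`, `exists_graph`). Its characteristic curves issuing from the points with `x_j = 0`
(`j ∈ J`) and `y_i = 0` (`i ∉ J`) sweep out the graph of the differential of their action, a `C¹`
function `S` (`exists_bvp`, `first_variation`, `exists_generating`). Mollifying `S`, the shear
`(x, y) ↦ (x, y + dS(x))` is a `C⁰` limit of symplectomorphisms; in this way one gets a homeomorphism
`σ`, a `C⁰` limit of symplectomorphisms, with `σ(0) = q`, which maps a ball of the plane `y = 0` into
`N` (`exists_flattening`). It remains to contradict the following situation (`core`): the map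
`Ψ = ψ ∘ σ` is a `C⁰` limit of symplectomorphisms `Ψ_m`, the functions `H` and `D` vanish on the image
of a ball of the plane `y = 0`, and `{H, D}(Ψ(0)) ≠ 0`.

*Contradiction.* Near `p`, the Hamiltonian `K = τ δ sin(H / δ)` has the vector field
`τ cos(H / δ) X_H`. On `H = 0` it moves `D` at a speed of order `τ`, so that approximate Euler
solutions starting where `H` and `D` are small cannot end near `p` with `D` small (`no_escape`). On
the other hand `K` is of size `τ δ` in the `C⁰` norm, and so is `K ∘ Ψ_m`. A discretised action
functional for `K ∘ Ψ_m`, with a boundary term `s f(x)`, has critical points by a finite-dimensional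
linking argument; they are solutions of the symplectic Euler scheme which lead from `y = 0` to a point
of the graph of `-s df` close to the origin (`linking`, `discrete_chord`). Since `Ψ_m` carries them to
approximate Euler solutions for `K` (`euler_push`), these contradict `no_escape` once `m` is large and
`δ` is small.

The topological input of the linking argument is that a bounded `C¹` perturbation of the identity of a
finite-dimensional space has a zero (`exists_zero_bounded`), which follows from the change of variables
formula: for `z + t g(z)` both sides of the signed formula are polynomials in `t` for polynomial
weights, and they agree for small `t`.
-/


open scoped ENNReal Topology

noncomputable section

/-- The standard symplectic vector space `E = ℝⁿ × ℝⁿ`. -/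
abbrev E (n : ℕ) := (Fin n → ℝ) × (Fin n → ℝ)

/-- The standard symplectic form `ω₀((x,y),(x',y')) = ⟨x,y'⟩ − ⟨y,x'⟩`. -/
def omega0 (n : ℕ) (z w : E n) : ℝ :=
  (∑ i, z.1 i * w.2 i) - ∑ i, z.2 i * w.1 i

/-- The Hamiltonian vector field `X_{H_t}(x,y) = (∂_y H(t,x,y), −∂_x H(t,x,y))`. -/
def XH (n : ℕ) (H : ℝ × E n → ℝ) (t : ℝ) (z : E n) : E n :=
  ((fun i => fderiv ℝ (fun w => H (t, w)) z (0, Pi.single i 1)),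
   (fun i => -fderiv ℝ (fun w => H (t, w)) z (Pi.single i 1, 0)))

/-- `Φ` is the Hamiltonian flow of `H`: `Φ 0 = id` and `(d/dt) Φ t z = X_{H_t} (Φ t z)`. -/
def IsHamFlow (n : ℕ) (H : ℝ × E n → ℝ) (Φ : ℝ → E n → E n) : Prop :=
  (∀ z, Φ 0 z = z) ∧ ∀ z t, HasDerivAt (fun s => Φ s z) (XH n H t (Φ t z)) t

/-- `H : ℝ × E → ℝ` is smooth with support a compact subset of `[0,1] × W`. -/
def AdmissibleH (n : ℕ) (W : Set (E n)) (H : ℝ × E n → ℝ) : Prop :=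
  ContDiff ℝ (⊤ : ℕ∞) H ∧ IsCompact (tsupport H) ∧
    tsupport H ⊆ Set.Icc (0 : ℝ) 1 ×ˢ W

/-- `Ham(W)`: time-one maps of Hamiltonian flows of admissible Hamiltonians. -/
def HamGrp (n : ℕ) (W : Set (E n)) : Set (E n → E n) :=
  {φ | ∃ H Φ, AdmissibleH n W H ∧ IsHamFlow n H Φ ∧ φ = Φ 1}

/-- `‖H‖ = ∫₀¹ (sup H(t,·) − inf H(t,·)) dt`. -/
def HNorm (n : ℕ) (H : ℝ × E n → ℝ) : ℝ :=
  ∫ t in (0:ℝ)..(1:ℝ),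
    (sSup (Set.range fun z => H (t, z)) - sInf (Set.range fun z => H (t, z)))

/-- The Hofer norm `‖φ‖_W` of `φ ∈ Ham(W)`. -/
def hoferNorm (n : ℕ) (W : Set (E n)) (φ : E n → E n) : ℝ :=
  sInf {c | ∃ H Φ, AdmissibleH n W H ∧ IsHamFlow n H Φ ∧ φ = Φ 1 ∧ c = HNorm n H}

/-- The displacement energy `e_W(U,N)`, valued in `ℝ≥0∞` (so `inf ∅ = ⊤`).
`closure U ∩ W` is the closure of `U` in `W`. -/
def dispE (n : ℕ) (W U N : Set (E n)) : ℝ≥0∞ :=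
  sInf {c | ∃ φ ∈ HamGrp n W, φ '' (closure U ∩ W) ∩ N = ∅ ∧
    c = ENNReal.ofReal (hoferNorm n W φ)}

/-- `p` is rigid with respect to `N` in `W`. -/
def RigidWrt (n : ℕ) (W N : Set (E n)) (p : E n) : Prop :=
  ∀ U : Set (E n), IsOpen U → p ∈ U → U ⊆ W → 0 < dispE n W U N

/-- `N` is a subset of `W` which is closed as a subset of `W`. -/
def ClosedIn (n : ℕ) (W N : Set (E n)) : Prop :=
  N ⊆ W ∧ closure N ∩ W ⊆ N

/-- `N` is locally closed. -/
def LocallyClosedSet (n : ℕ) (N : Set (E n)) : Prop :=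
  ∀ q ∈ N, ∃ V : Set (E n), IsOpen V ∧ q ∈ V ∧ ClosedIn n V (N ∩ V)

/-- `p` is locally rigid with respect to `N`. -/
def LocRigid (n : ℕ) (N : Set (E n)) (p : E n) : Prop :=
  ∃ W : Set (E n), IsOpen W ∧ p ∈ W ∧ ClosedIn n W (N ∩ W) ∧
    RigidWrt n W (N ∩ W) p

/-- `ψ` is a symplectomorphism from the open set `W` onto its (open) image. -/
def IsSymplecto (n : ℕ) (W : Set (E n)) (ψ : E n → E n) : Prop :=
  IsOpen W ∧ IsOpen (ψ '' W) ∧ Set.InjOn ψ W ∧ ContDiffOn ℝ (⊤ : ℕ∞) ψ W ∧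
  (∃ g : E n → E n, ContDiffOn ℝ (⊤ : ℕ∞) g (ψ '' W) ∧ ∀ z ∈ W, g (ψ z) = z) ∧
  ∀ z ∈ W, ∀ u v, omega0 n (fderiv ℝ ψ z u) (fderiv ℝ ψ z v) = omega0 n u v

/-- `ψ` is a symplectic homeomorphism of `E`: a homeomorphism which is a `C⁰`-limit
(uniformly on compact sets, together with inverses) of symplectomorphisms of `E` onto `E`. -/
def IsSympHomeo (n : ℕ) (ψ : E n ≃ₜ E n) : Prop :=
  ∃ Ψ : ℕ → E n ≃ E n,
    (∀ m, IsSymplecto n Set.univ (Ψ m)) ∧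
    TendstoLocallyUniformly (fun m z => Ψ m z) (fun z => ψ z) Filter.atTop ∧
    TendstoLocallyUniformly (fun m z => (Ψ m).symm z) (fun z => ψ.symm z) Filter.atTop

/-- A fixed `k`-dimensional coordinate subspace `ℝᵏ × {0}` of `E`. -/
def coordSubspace (n k : ℕ) : Set (E n) :=
  {z | (∀ i : Fin n, k ≤ (i : ℕ) → z.1 i = 0) ∧
       (∀ i : Fin n, k ≤ n + (i : ℕ) → z.2 i = 0)}

/-- `N` is a smooth `k`-dimensional submanifold of `E`. -/
def IsSubmanifold (n k : ℕ) (N : Set (E n)) : Prop :=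
  ∀ p ∈ N, ∃ (V : Set (E n)) (Φ : E n → E n),
    IsOpen V ∧ p ∈ V ∧ IsOpen (Φ '' V) ∧ Set.InjOn Φ V ∧
    ContDiffOn ℝ (⊤ : ℕ∞) Φ V ∧
    (∃ g : E n → E n, ContDiffOn ℝ (⊤ : ℕ∞) g (Φ '' V) ∧ ∀ z ∈ V, g (Φ z) = z) ∧
    Φ '' (N ∩ V) = coordSubspace n k ∩ Φ '' V

/-- The tangent space `T_pN`, as velocities of curves through `p` lying locally in `N`. -/
def TangentSet (n : ℕ) (N : Set (E n)) (p : E n) : Set (E n) :=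
  {v | ∃ γ : ℝ → E n, γ 0 = p ∧ (∀ᶠ t in 𝓝 (0:ℝ), γ t ∈ N) ∧ HasDerivAt γ v 0}

/-- The symplectic orthogonal complement `T^{ω₀}`. -/
def symplOrth (n : ℕ) (T : Set (E n)) : Set (E n) :=
  {v | ∀ u ∈ T, omega0 n v u = 0}

/-- `N` is coisotropic: `(T_pN)^{ω₀} ⊆ T_pN` for all `p ∈ N`. -/
def IsCoisotropic (n : ℕ) (N : Set (E n)) : Prop :=
  ∀ p ∈ N, symplOrth n (TangentSet n N p) ⊆ TangentSet n N p

/-- `N` is Lagrangian: `(T_pN)^{ω₀} = T_pN` for all `p ∈ N`. -/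
def IsLagrangian (n : ℕ) (N : Set (E n)) : Prop :=
  ∀ p ∈ N, symplOrth n (TangentSet n N p) = TangentSet n N p

/-- `Σ_N`: Hamiltonian diffeomorphisms preserving `N`. -/
def SigmaGrp (n : ℕ) (N : Set (E n)) : Set (E n → E n) :=
  {φ | φ ∈ HamGrp n Set.univ ∧ φ '' N = N}

/-- `Σ̄_N`: the closure of `Σ_N` in the Hofer metric. -/
def SigmaBar (n : ℕ) (N : Set (E n)) : Set (E n → E n) :=
  {φ | φ ∈ HamGrp n Set.univ ∧ ∀ ε : ℝ, 0 < ε →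
    ∃ ψ ∈ SigmaGrp n N, ∃ χ : E n → E n,
      Function.LeftInverse χ ψ ∧ Function.RightInverse χ ψ ∧
      hoferNorm n Set.univ (χ ∘ φ) < ε}

/-- The rigid locus `R_N = ⋂_{φ ∈ Σ̄_N} φ⁻¹(N)`. -/
def rigidLocus (n : ℕ) (N : Set (E n)) : Set (E n) :=
  ⋂ φ ∈ SigmaBar n N, φ ⁻¹' N

namespace HLS

/-! ### Zeros of bounded perturbations of the identity -/

section Degree
open MeasureTheory

/-- Squared Euclidean length on `ℝᵈ`, used because it is polynomial along lines. -/
def sqLen {d : ℕ} (z : Fin d → ℝ) : ℝ := ∑ i, z i ^ 2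

lemma continuous_sqLen {d : ℕ} : Continuous (sqLen (d := d)) := by
  unfold sqLen; fun_prop

lemma sqLen_nonneg {d : ℕ} (z : Fin d → ℝ) : 0 ≤ sqLen z :=
  Finset.sum_nonneg fun _ _ => sq_nonneg _

lemma sqLen_pos {d : ℕ} {z : Fin d → ℝ} (hz : z ≠ 0) : 0 < sqLen z := by
  obtain ⟨i, hi⟩ := Function.ne_iff.mp hz
  exact Finset.sum_pos' (fun _ _ => sq_nonneg _) ⟨i, Finset.mem_univ _, by
    have : z i ≠ 0 := hi
    positivity⟩

/-- Along a line, `det (1 + t A) * (1 - |z + t w|² / m) ^ N` is a polynomial in `t` of degree at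
most `d + 2 N`. -/
lemma exists_line_poly {d : ℕ} (A : (Fin d → ℝ) →L[ℝ] (Fin d → ℝ)) (z w : Fin d → ℝ)
    (m : ℝ) (N : ℕ) : ∃ p : Polynomial ℝ, p.natDegree ≤ d + 2 * N ∧
      ∀ t : ℝ, p.eval t =
        (ContinuousLinearMap.id ℝ (Fin d → ℝ) + t • A).det * (1 - sqLen (z + t • w) / m) ^ N := by
  classical
  let MA : Matrix (Fin d) (Fin d) ℝ := LinearMap.toMatrix' (A : (Fin d → ℝ) →ₗ[ℝ] (Fin d → ℝ))
  let p1 : Polynomial ℝ := Matrix.det ((Polynomial.X : Polynomial ℝ) • MA.map Polynomial.C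
    + (1 : Matrix (Fin d) (Fin d) ℝ).map Polynomial.C)
  let p2 : Polynomial ℝ := 1 - Polynomial.C (1 / m) *
    ∑ i, (Polynomial.C (z i) + Polynomial.X * Polynomial.C (w i)) ^ 2
  refine ⟨p1 * p2 ^ N, ?_, ?_⟩
  · refine Polynomial.natDegree_mul_le.trans (add_le_add ?_ ?_)
    · exact (Polynomial.natDegree_det_X_add_C_le MA 1).trans (by simp)
    · refine Polynomial.natDegree_pow_le.trans ?_
      rw [mul_comm 2 N]
      refine Nat.mul_le_mul_left _ ?_
      refine (Polynomial.natDegree_sub_le _ _).trans ?_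
      simp only [Polynomial.natDegree_one]
      refine max_le (by norm_num) ?_
      refine (Polynomial.natDegree_C_mul_le _ _).trans ?_
      refine Polynomial.natDegree_sum_le_of_forall_le _ _ (fun i _ => ?_)
      compute_degree
  · intro t
    rw [Polynomial.eval_mul, Polynomial.eval_pow]
    congr 1
    · have : (ContinuousLinearMap.id ℝ (Fin d → ℝ) + t • A).det
          = Matrix.det (1 + t • MA) := by
        rw [ContinuousLinearMap.det, ← LinearMap.det_toMatrix']
        congr 1
        simp [MA]
      rw [this]
      simp only [p1]
      rw [← Polynomial.coe_evalRingHom, RingHom.map_det]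
      congr 1
      ext i j
      by_cases hij : i = j
      · subst hij
        simp [add_comm]
        exact mul_comm _ _
      · simp [hij]
        exact mul_comm _ _
    · congr 1
      simp only [p2, sqLen, Polynomial.eval_sub, Polynomial.eval_one, Polynomial.eval_mul,
        Polynomial.eval_C, Polynomial.eval_finsetSum, Polynomial.eval_pow, Polynomial.eval_add,
        Polynomial.eval_X, Pi.add_apply, Pi.smul_apply, smul_eq_mul]
      ring

/-- If `‖A‖ < 1`, then `det (1 + A) > 0`. -/
lemma det_id_add_pos {d : ℕ} (A : (Fin d → ℝ) →L[ℝ] (Fin d → ℝ)) (hA : ‖A‖ < 1) :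
    0 < (ContinuousLinearMap.id ℝ (Fin d → ℝ) + A).det := by
  have hne : ∀ s ∈ Set.Icc (0 : ℝ) 1,
      (ContinuousLinearMap.id ℝ (Fin d → ℝ) + s • A).det ≠ 0 := by
    intro s hs h0
    have h1 : LinearMap.det ((ContinuousLinearMap.id ℝ (Fin d → ℝ) + s • A :
        (Fin d → ℝ) →L[ℝ] (Fin d → ℝ)) : (Fin d → ℝ) →ₗ[ℝ] (Fin d → ℝ)) = 0 := h0
    obtain ⟨v, hv, hv0⟩ := (Submodule.ne_bot_iff _).mp (LinearMap.bot_lt_ker_of_det_eq_zero h1).ne'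
    have hv1 : v + s • A v = 0 := hv
    have hv2 : ‖v‖ = ‖s • A v‖ := by
      rw [eq_neg_of_add_eq_zero_left hv1, norm_neg]
      congr 1
      rw [← eq_neg_of_add_eq_zero_left hv1]
    have hvp : 0 < ‖v‖ := norm_pos_iff.mpr hv0
    have : ‖s • A v‖ ≤ ‖A‖ * ‖v‖ := by
      rw [norm_smul, Real.norm_eq_abs, abs_of_nonneg hs.1]
      calc s * ‖A v‖ ≤ 1 * ‖A v‖ := by gcongr; exact hs.2
        _ ≤ _ := by rw [one_mul]; exact A.le_opNorm v
    nlinarith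
  have hcont : ContinuousOn (fun s : ℝ =>
      (ContinuousLinearMap.id ℝ (Fin d → ℝ) + s • A).det) (Set.Icc 0 1) := by
    apply Continuous.continuousOn
    exact ContinuousLinearMap.continuous_det.comp (by fun_prop)
  by_contra hneg
  have hneg' := le_of_not_gt hneg
  have himg := intermediate_value_Icc' (zero_le_one' ℝ) hcont
  have : (0 : ℝ) ∈ Set.Icc ((ContinuousLinearMap.id ℝ (Fin d → ℝ) + (1 : ℝ) • A).det)
      ((ContinuousLinearMap.id ℝ (Fin d → ℝ) + (0 : ℝ) • A).det) := by
    constructor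
    · simpa using hneg'
    · simp [ContinuousLinearMap.det]
  obtain ⟨s, hs, hs0⟩ := himg this
  exact hne s hs hs0

/-- The change of variables `z ↦ z + t g z` on a ball containing the support of `g`, for `t` so
small that this map is a diffeomorphism. -/
lemma integral_small_t {d : ℕ} {g : (Fin d → ℝ) → (Fin d → ℝ)} (hg : ContDiff ℝ 1 g)
    {R : ℝ} (hR : ∀ z, R ≤ ‖z‖ → g z = 0) {K : NNReal} (hK : LipschitzWith K g)
    {t : ℝ} (ht0 : 0 ≤ t) (ht : t * K < 1) (q : (Fin d → ℝ) → ℝ) :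
    ∫ z in Metric.ball (0 : Fin d → ℝ) R, (ContinuousLinearMap.id ℝ (Fin d → ℝ) + t • fderiv ℝ g z).det *
      q (z + t • g z) = ∫ z in Metric.ball (0 : Fin d → ℝ) R, q z := by
  set G : (Fin d → ℝ) → (Fin d → ℝ) := fun z => z + t • g z with hG
  have hder : ∀ z, HasFDerivAt G (ContinuousLinearMap.id ℝ (Fin d → ℝ) + t • fderiv ℝ g z) z := by
    intro z
    exact (hasFDerivAt_id z).add (((hg.differentiable one_ne_zero) z).hasFDerivAt.const_smul t)
  have hlip : ∀ z w, ‖t • g z - t • g w‖ ≤ (t * K) * ‖z - w‖ := by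
    intro z w
    rw [← smul_sub, norm_smul, Real.norm_eq_abs, abs_of_nonneg ht0, mul_assoc]
    gcongr
    exact hK.norm_sub_le z w
  have hinj : Function.Injective G := by
    intro z w hzw
    have h1 : z - w = t • g w - t • g z := by
      have : z + t • g z = w + t • g w := hzw
      rw [sub_eq_sub_iff_add_eq_add, this, add_comm]
    have h2 := hlip w z
    rw [← h1, norm_sub_rev w z] at h2
    by_contra hne
    have : 0 < ‖z - w‖ := norm_pos_iff.mpr (sub_ne_zero.mpr hne)
    nlinarith
  have hsurj : Function.Surjective G := by
    intro w
    have hc : ContractingWith (Real.toNNReal (t * K)) (fun z => w - t • g z) := by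
      refine ⟨by rw [← NNReal.coe_lt_coe]; simpa [Real.coe_toNNReal _ (by positivity : 0 ≤ t * K)]
        using ht, LipschitzWith.of_dist_le_mul fun a b => ?_⟩
      rw [dist_eq_norm, dist_eq_norm, Real.coe_toNNReal _ (by positivity)]
      have := hlip b a
      rw [norm_sub_rev b a] at this
      have h0 : w - t • g a - (w - t • g b) = t • g b - t • g a := by abel
      rwa [h0]
    refine ⟨hc.fixedPoint, ?_⟩
    have := hc.fixedPoint_isFixedPt
    have h2 : w - t • g hc.fixedPoint = hc.fixedPoint := this
    change hc.fixedPoint + t • g hc.fixedPoint = w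
    rw [eq_comm, ← sub_eq_iff_eq_add]
    exact h2
  have hout : ∀ z, R ≤ ‖z‖ → G z = z := fun z hz => by simp [hG, hR z hz]
  have himage : G '' Metric.ball 0 R = Metric.ball 0 R := by
    ext w
    constructor
    · rintro ⟨z, hz, rfl⟩
      by_contra hcon
      have h1 : R ≤ ‖G z‖ := by simpa using hcon
      have h2 : G z = z := hinj (hout _ h1)
      rw [h2] at h1
      simp at hz
      linarith
    · intro hw
      obtain ⟨z, rfl⟩ := hsurj w
      refine ⟨z, ?_, rfl⟩
      by_contra hcon
      have h1 : R ≤ ‖z‖ := by simpa using hcon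
      rw [hout z h1] at hw
      exact hcon hw
  have hcv := integral_image_eq_integral_abs_det_fderiv_smul (volume : Measure (Fin d → ℝ))
    (measurableSet_ball (x := (0 : Fin d → ℝ)) (ε := R))
    (fun z _ => (hder z).hasFDerivWithinAt) hinj.injOn q
  rw [himage] at hcv
  rw [hcv]
  refine setIntegral_congr_fun measurableSet_ball (fun z _ => ?_)
  have hpos := det_id_add_pos (t • fderiv ℝ g z) (by
    rw [norm_smul, Real.norm_eq_abs, abs_of_nonneg ht0]
    refine lt_of_le_of_lt ?_ ht
    gcongr
    exact norm_fderiv_le_of_lipschitz ℝ hK)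
  simp only [smul_eq_mul]
  rw [abs_of_pos hpos]

/-- The degree identity: since both sides are polynomial in `t`, the change of variables formula
without absolute value persists to `t = 1`, where the map need not be injective. -/
lemma integral_one {d : ℕ} {g : (Fin d → ℝ) → (Fin d → ℝ)} (hg : ContDiff ℝ 1 g)
    {R : ℝ} (hR : ∀ z, R ≤ ‖z‖ → g z = 0) {K : NNReal} (hK : LipschitzWith K g)
    (m : ℝ) (N : ℕ) :
    ∫ z in Metric.ball (0 : Fin d → ℝ) R, (ContinuousLinearMap.id ℝ (Fin d → ℝ) + fderiv ℝ g z).det *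
      (1 - sqLen (z + g z) / m) ^ N = ∫ z in Metric.ball (0 : Fin d → ℝ) R, (1 - sqLen z / m) ^ N := by
  classical
  set I : ℝ → ℝ := fun t => ∫ z in Metric.ball (0 : Fin d → ℝ) R,
    (ContinuousLinearMap.id ℝ (Fin d → ℝ) + t • fderiv ℝ g z).det *
      (1 - sqLen (z + t • g z) / m) ^ N with hI
  have hintg : ∀ t : ℝ, IntegrableOn (fun z =>
      (ContinuousLinearMap.id ℝ (Fin d → ℝ) + t • fderiv ℝ g z).det *
      (1 - sqLen (z + t • g z) / m) ^ N) (Metric.ball 0 R) := by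
    intro t
    have hc : Continuous (fun z => (ContinuousLinearMap.id ℝ (Fin d → ℝ) + t • fderiv ℝ g z).det *
      (1 - sqLen (z + t • g z) / m) ^ N) := by
      have h1 := hg.continuous_fderiv one_ne_zero
      have h2 := hg.continuous
      have h3 := continuous_sqLen (d := d)
      refine Continuous.mul (ContinuousLinearMap.continuous_det.comp (by fun_prop)) ?_
      fun_prop
    exact (hc.continuousOn.integrableOn_compact (isCompact_closedBall 0 R)).mono_set
      Metric.ball_subset_closedBall
  set D : ℕ := d + 2 * N with hD
  set s : Finset ℕ := Finset.range (D + 1) with hs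
  set v : ℕ → ℝ := fun j => (j : ℝ) / ((D + 1) * (K + 1)) with hv
  have hDK : (0 : ℝ) < (D + 1) * (K + 1) := by positivity
  have hvinj : Set.InjOn v s := by
    intro a _ b _ hab
    have : (a : ℝ) = b := by
      simp only [hv] at hab
      field_simp at hab
      exact hab
    exact_mod_cast this
  have hvt : ∀ j ∈ s, 0 ≤ v j ∧ v j * K < 1 := by
    intro j hj
    refine ⟨by simp only [hv]; positivity, ?_⟩
    simp only [hv]
    rw [div_mul_eq_mul_div, div_lt_one hDK]
    have h1 : (j : ℝ) < D + 1 := by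
      have := Finset.mem_range.mp hj
      exact_mod_cast this
    have h2 : (0 : ℝ) ≤ K := K.2
    nlinarith
  choose P hPdeg hPev using fun z => exists_line_poly (fderiv ℝ g z) z (g z) m N
  have hinterp : ∀ z, (P z).eval 1 =
      ∑ j ∈ s, (Lagrange.basis s v j).eval 1 * (P z).eval (v j) := by
    intro z
    have hdeg : (P z).degree < s.card := by
      refine lt_of_le_of_lt Polynomial.degree_le_natDegree ?_
      rw [hs, Finset.card_range]
      exact_mod_cast Nat.lt_succ_of_le (hPdeg z)
    conv_lhs => rw [Lagrange.eq_interpolate hvinj hdeg]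
    simp [Lagrange.interpolate_apply, Polynomial.eval_finsetSum, mul_comm]
  have h1 : I 1 = ∑ j ∈ s, (Lagrange.basis s v j).eval 1 * I (v j) := by
    simp only [hI]
    simp_rw [← integral_const_mul]
    rw [← integral_finsetSum _ (fun j _ => (hintg (v j)).const_mul _)]
    refine integral_congr_ae (Filter.Eventually.of_forall fun z => ?_)
    simp only [← hPev]
    exact hinterp z
  have h2 : ∀ j ∈ s, I (v j) = ∫ z in Metric.ball (0 : Fin d → ℝ) R, (1 - sqLen z / m) ^ N := fun j hj =>
    integral_small_t hg hR hK (hvt j hj).1 (hvt j hj).2 (fun w => (1 - sqLen w / m) ^ N)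
  rw [Finset.sum_congr rfl (fun j hj => by rw [h2 j hj]), ← Finset.sum_mul,
    ← Polynomial.eval_finsetSum, Lagrange.sum_basis hvinj ⟨0, by simp [hs]⟩] at h1
  simpa [hI] using h1

/-- A `C¹` compactly supported perturbation of the identity of `ℝᵈ` has a zero. If it did not, the
degree identity `integral_one` would fail for the weights `(1 - |z|²/m)^N` with `N` large, which
concentrate at the origin. -/
lemma exists_zero_compact {d : ℕ} {g : (Fin d → ℝ) → (Fin d → ℝ)} (hg : ContDiff ℝ 1 g)
    (hc : HasCompactSupport g) : ∃ z, z + g z = 0 := by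
  by_contra! hne
  obtain ⟨K, hK⟩ := hg.lipschitzWith_of_hasCompactSupport hc one_ne_zero
  obtain ⟨R0, hR0⟩ := hc.isCompact.isBounded.subset_ball (0 : Fin d → ℝ)
  set R := max R0 1 with hRdef
  have hRpos : 0 < R := lt_of_lt_of_le one_pos (le_max_right _ _)
  have hR : ∀ z, R ≤ ‖z‖ → g z = 0 := by
    intro z hz
    by_contra h
    have := hR0 (subset_tsupport g h)
    simp at this
    linarith [le_max_left R0 1]
  have hcomp := isCompact_closedBall (0 : Fin d → ℝ) R
  have hcontG : Continuous (fun z => sqLen (z + g z)) :=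
    continuous_sqLen.comp (continuous_id.add hg.continuous)
  have hne0 : (Metric.closedBall (0 : Fin d → ℝ) R).Nonempty := ⟨0, by simp [hRpos.le]⟩
  obtain ⟨z0, hz0, hmin⟩ := hcomp.exists_isMinOn hne0 hcontG.continuousOn
  obtain ⟨z1, hz1, hmax⟩ := hcomp.exists_isMaxOn hne0 hcontG.continuousOn
  obtain ⟨z2, hz2, hmax2⟩ := hcomp.exists_isMaxOn hne0 continuous_sqLen.continuousOn
  set ρ := sqLen (z0 + g z0) with hρ
  have hρpos : 0 < ρ := sqLen_pos (hne z0)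
  set m := sqLen (z1 + g z1) + sqLen z2 with hm
  have hmρ : ρ ≤ m := by
    have : ρ ≤ sqLen (z1 + g z1) := hmin hz1
    have := sqLen_nonneg z2
    linarith
  have hmpos : 0 < m := by linarith
  set α := 1 - ρ / m with hα
  set β := 1 - ρ / 2 / m with hβ
  have hρm : ρ / m ≤ 1 := (div_le_one hmpos).mpr hmρ
  have hρm0 : 0 < ρ / m := by positivity
  have hα0 : 0 ≤ α := by linarith
  have hρ2 : ρ / 2 / m = ρ / m / 2 := by ring
  have hαβ : α < β := by rw [hα, hβ, hρ2]; linarith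
  have hβ0 : 0 < β := by linarith
  set S : Set (Fin d → ℝ) := {z | sqLen z < ρ / 2} ∩ Metric.ball 0 R with hS
  have hSo : IsOpen S := (isOpen_lt continuous_sqLen continuous_const).inter Metric.isOpen_ball
  have hSne : S.Nonempty := ⟨0, by simp [hS, sqLen, hRpos, hρpos]⟩
  have hSvol : 0 < volume.real S := by
    rw [Measure.real, ENNReal.toReal_pos_iff]
    refine ⟨hSo.measure_pos _ hSne, lt_of_le_of_lt (measure_mono Set.inter_subset_right)
      measure_ball_lt_top⟩
  set J : (Fin d → ℝ) → ℝ := fun z => |(ContinuousLinearMap.id ℝ (Fin d → ℝ) + fderiv ℝ g z).det|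
  have hJc : Continuous J := by
    have h1 := hg.continuous_fderiv one_ne_zero
    exact (ContinuousLinearMap.continuous_det.comp (by fun_prop)).abs
  have hio : ∀ {f : (Fin d → ℝ) → ℝ}, Continuous f → IntegrableOn f (Metric.ball 0 R) := fun hf =>
    (hf.continuousOn.integrableOn_compact hcomp).mono_set Metric.ball_subset_closedBall
  set C := ∫ z in Metric.ball (0 : Fin d → ℝ) R, J z
  have hqc : ∀ N : ℕ, Continuous (fun z : Fin d → ℝ => (1 - sqLen z / m) ^ N) := by
    intro N
    have h3 := continuous_sqLen (d := d)
    fun_prop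
  have key : ∀ N : ℕ, β ^ N * volume.real S ≤ α ^ N * C := by
    intro N
    have hid := integral_one hg hR hK m N
    have hlow : β ^ N * volume.real S ≤ ∫ z in Metric.ball (0 : Fin d → ℝ) R, (1 - sqLen z / m) ^ N := by
      have hnn : ∀ z ∈ Metric.ball (0 : Fin d → ℝ) R, 0 ≤ (1 - sqLen z / m) ^ N := by
        intro z hz
        refine pow_nonneg ?_ _
        have h1 : sqLen z ≤ sqLen z2 := hmax2 (Metric.ball_subset_closedBall hz)
        have : sqLen z / m ≤ 1 := by
          rw [div_le_one hmpos]
          linarith [sqLen_nonneg (z1 + g z1)]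
        linarith
      calc β ^ N * volume.real S = ∫ z in S, β ^ N := by simp [mul_comm]
        _ ≤ ∫ z in S, (1 - sqLen z / m) ^ N := by
          refine setIntegral_mono_on (integrableOn_const (lt_of_le_of_lt
            (measure_mono Set.inter_subset_right) measure_ball_lt_top).ne)
            ((hio (hqc N)).mono_set Set.inter_subset_right) hSo.measurableSet (fun z hz => ?_)
          refine pow_le_pow_left₀ hβ0.le ?_ _
          have : sqLen z < ρ / 2 := hz.1
          rw [hβ]
          gcongr
        _ ≤ _ := by
          refine setIntegral_mono_set (hio (hqc N)) ?_ (Set.inter_subset_right.eventuallyLE)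
          exact (ae_restrict_iff' measurableSet_ball).mpr (Filter.Eventually.of_forall hnn)
    refine hlow.trans ?_
    rw [← hid, ← integral_const_mul]
    refine setIntegral_mono_on (hio ?_) ((hio hJc).const_mul _) measurableSet_ball (fun z hz => ?_)
    · have h1 := hg.continuous_fderiv one_ne_zero
      exact (ContinuousLinearMap.continuous_det.comp (by fun_prop)).mul
        ((hqc N).comp (continuous_id.add hg.continuous))
    · have hz' := Metric.ball_subset_closedBall hz
      have h1 : ρ ≤ sqLen (z + g z) := hmin hz'
      have h2 : sqLen (z + g z) ≤ sqLen (z1 + g z1) := hmax hz'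
      have h3 : 0 ≤ 1 - sqLen (z + g z) / m := by
        have : sqLen (z + g z) / m ≤ 1 := by
          rw [div_le_one hmpos]
          linarith [sqLen_nonneg z2]
        linarith
      have h4 : 1 - sqLen (z + g z) / m ≤ α := by rw [hα]; gcongr
      rw [mul_comm (α ^ N)]
      exact mul_le_mul (le_abs_self _) (pow_le_pow_left₀ h3 h4 _) (pow_nonneg h3 _) (abs_nonneg _)
  have hlim : Filter.Tendsto (fun N : ℕ => (α / β) ^ N * C) Filter.atTop (𝓝 (0 * C)) :=
    (tendsto_pow_atTop_nhds_zero_of_lt_one (div_nonneg hα0 hβ0.le)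
      ((div_lt_one hβ0).mpr hαβ)).mul_const C
  rw [zero_mul] at hlim
  have : volume.real S ≤ 0 := by
    refine ge_of_tendsto' hlim (fun N => ?_)
    have := key N
    rw [div_pow, div_mul_eq_mul_div, le_div_iff₀ (pow_pos hβ0 N)]
    linarith
  linarith

/-- Brouwer: a bounded `C¹` perturbation of the identity of a finite-dimensional space has a
zero. -/
theorem exists_zero_bounded {W : Type*} [NormedAddCommGroup W] [NormedSpace ℝ W]
    [FiniteDimensional ℝ W] {g : W → W} (hg : ContDiff ℝ 1 g) {C : ℝ} (hC : ∀ z, ‖g z‖ ≤ C) :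
    ∃ z, z + g z = 0 := by
  have hC0 : 0 ≤ C := (norm_nonneg _).trans (hC 0)
  let e : W ≃L[ℝ] (Fin (Module.finrank ℝ W) → ℝ) :=
    ContinuousLinearEquiv.ofFinrankEq (by simp)
  let b : ContDiffBump (0 : W) := ⟨C + 1, C + 2, by linarith, by linarith⟩
  have hg' : ContDiff ℝ 1 (fun z => b z • g z) := b.contDiff.smul hg
  obtain ⟨z, hz⟩ := exists_zero_compact (d := Module.finrank ℝ W)
    (g := fun w => e ((b (e.symm w)) • g (e.symm w)))
    (e.contDiff.comp (hg'.comp e.symm.contDiff)) (by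
      have h1 : HasCompactSupport (fun z => b z • g z) := b.hasCompactSupport.smul_right
      exact (h1.comp_homeomorph e.symm.toHomeomorph).comp_left (g := e) (by simp))
  have h2 : e.symm z + b (e.symm z) • g (e.symm z) = 0 := by
    apply e.injective
    simpa using hz
  refine ⟨e.symm z, ?_⟩
  have h3 : ‖e.symm z‖ ≤ C := by
    rw [eq_neg_of_add_eq_zero_left h2, norm_neg, norm_smul, Real.norm_eq_abs,
      abs_of_nonneg b.nonneg]
    calc _ ≤ 1 * ‖g (e.symm z)‖ := by gcongr; exact b.le_one
      _ ≤ C := by rw [one_mul]; exact hC _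
  have h4 : b (e.symm z) = 1 := b.one_of_mem_closedBall (by simp [b]; linarith)
  simpa [h4] using h2

end Degree

/-! ### A finite-dimensional linking argument -/

/-- First-order Taylor estimate for a function with Lipschitz derivative. -/
lemma taylor_lipschitz {T F : Type*} [NormedAddCommGroup T] [NormedSpace ℝ T]
    [NormedAddCommGroup F] [NormedSpace ℝ F] {A : T → F}
    (hA : Differentiable ℝ A) {K : NNReal} (hK : LipschitzWith K (fderiv ℝ A)) (z v : T) :
    ‖A (z + v) - A z - fderiv ℝ A z v‖ ≤ K * ‖v‖ ^ 2 := by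
  have h := (convex_segment (𝕜 := ℝ) z (z + v)).norm_image_sub_le_of_norm_fderiv_le' (𝕜 := ℝ)
    (f := A) (φ := fderiv ℝ A z) (C := K * ‖v‖) (x := z) (y := z + v)
    (fun x _ => hA x) (fun x hx => ?_) (left_mem_segment _ _ _) (right_mem_segment _ _ _)
  · simpa [sq, mul_assoc] using h
  · refine (hK.norm_sub_le x z).trans ?_
    gcongr
    obtain ⟨t, ht, rfl⟩ := (segment_eq_image' ℝ z (z + v) ▸ hx : x ∈ _)
    simp only [add_sub_cancel_left]
    rw [norm_smul, Real.norm_eq_abs, abs_of_nonneg ht.1]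
    exact mul_le_of_le_one_left (norm_nonneg _) ht.2

/-- On a finite-dimensional space there is a linear map `♯` from covectors to vectors, such that
`φ (♯ φ)` controls the squares of the norms of `φ` and `♯ φ`. -/
lemma exists_sharp (T : Type*) [NormedAddCommGroup T] [NormedSpace ℝ T] [FiniteDimensional ℝ T] :
    ∃ (S : (T →L[ℝ] ℝ) →L[ℝ] T) (B : ℝ), 0 < B ∧ ∀ φ, ‖φ‖ ^ 2 ≤ B * φ (S φ) ∧
      ‖S φ‖ ^ 2 ≤ B * φ (S φ) := by
  classical
  let b := Module.finBasis ℝ T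
  let ev : (T →L[ℝ] ℝ) →ₗ[ℝ] (Fin (Module.finrank ℝ T) → ℝ) :=
    { toFun := fun φ i => φ (b i)
      map_add' := fun _ _ => rfl
      map_smul' := fun _ _ => rfl }
  have hinj : LinearMap.ker ev = ⊥ := by
    rw [LinearMap.ker_eq_bot]
    intro φ ψ h
    have h2 : (φ : T →ₗ[ℝ] ℝ) = ψ := b.ext fun i => congrFun h i
    exact ContinuousLinearMap.coe_injective h2
  obtain ⟨K, hK0, hK⟩ := LinearMap.exists_antilipschitzWith ev hinj
  let S : (T →L[ℝ] ℝ) →L[ℝ] T :=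
    ∑ i, ((ContinuousLinearMap.apply ℝ ℝ (b i)).smulRight (b i))
  have hS : ∀ φ, S φ = ∑ i, φ (b i) • b i := fun φ => by simp [S]
  have hq : ∀ φ : T →L[ℝ] ℝ, φ (S φ) = ∑ i, φ (b i) ^ 2 := fun φ => by
    rw [hS, map_sum]; simp [sq]
  set β := ∑ i, ‖b i‖ with hβ
  have hβ0 : 0 ≤ β := Finset.sum_nonneg fun _ _ => norm_nonneg _
  have hpos : ∀ φ : T →L[ℝ] ℝ, ‖ev φ‖ ^ 2 ≤ φ (S φ) := by
    intro φ
    rw [hq]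
    have h0 : 0 ≤ ∑ i, φ (b i) ^ 2 := Finset.sum_nonneg fun _ _ => sq_nonneg _
    have : ‖ev φ‖ ≤ Real.sqrt (∑ i, φ (b i) ^ 2) := by
      rw [pi_norm_le_iff_of_nonneg (Real.sqrt_nonneg _)]
      intro i
      refine Real.le_sqrt_of_sq_le ?_
      rw [Real.norm_eq_abs, sq_abs]
      exact Finset.single_le_sum (f := fun i => φ (b i) ^ 2) (fun _ _ => sq_nonneg _)
        (Finset.mem_univ i)
    calc ‖ev φ‖ ^ 2 ≤ Real.sqrt (∑ i, φ (b i) ^ 2) ^ 2 := by gcongr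
      _ = _ := Real.sq_sqrt h0
  refine ⟨S, (K : ℝ) ^ 2 + β ^ 2 + 1, by positivity, fun φ => ?_⟩
  have hp := hpos φ
  have hp0 : 0 ≤ φ (S φ) := (sq_nonneg _).trans hp
  have h1 : ‖φ‖ ≤ K * ‖ev φ‖ := by simpa using hK.le_mul_dist φ 0
  have h2 : ‖S φ‖ ≤ β * ‖ev φ‖ := by
    rw [hS, hβ, Finset.sum_mul]
    refine norm_sum_le_of_le _ fun i _ => ?_
    rw [norm_smul, mul_comm]
    gcongr
    exact norm_le_pi_norm (ev φ) i
  constructor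
  · calc ‖φ‖ ^ 2 ≤ (K * ‖ev φ‖) ^ 2 := by gcongr
      _ = (K : ℝ) ^ 2 * ‖ev φ‖ ^ 2 := by ring
      _ ≤ (K : ℝ) ^ 2 * φ (S φ) := by gcongr
      _ ≤ _ := by
        refine mul_le_mul_of_nonneg_right ?_ hp0
        nlinarith [sq_nonneg β]
  · calc ‖S φ‖ ^ 2 ≤ (β * ‖ev φ‖) ^ 2 := by gcongr
      _ = β ^ 2 * ‖ev φ‖ ^ 2 := by ring
      _ ≤ β ^ 2 * φ (S φ) := by gcongr
      _ ≤ _ := by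
        refine mul_le_mul_of_nonneg_right ?_ hp0
        nlinarith [sq_nonneg (K : ℝ)]

section Linking
variable {T : Type*} [NormedAddCommGroup T] [NormedSpace ℝ T] [FiniteDimensional ℝ T]

/-- A bounded `C¹` vector field `V` with `d(A + s f)(V) = - f`, provided `A + s f` has no (almost)
critical points on the support of `f`. -/
lemma exists_field {A f : T → ℝ} (hA : ContDiff ℝ 2 A) (hf : ContDiff ℝ 2 f) {a : ℝ}
    (hf0 : ∀ z, 0 ≤ f z) (hfa : ∀ z, f z ≤ a) {η : ℝ} (hη : 0 < η) :
    ∃ B : ℝ, 0 ≤ B ∧ ∀ s : ℝ, (∀ z ∈ tsupport f, η ≤ ‖fderiv ℝ (fun w => A w + s * f w) z‖) →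
      ∃ V : T → T, ContDiff ℝ 1 V ∧ (∀ z, ‖V z‖ ≤ B) ∧
        ∀ z, fderiv ℝ (fun w => A w + s * f w) z (V z) = - f z := by
  obtain ⟨S, B, hB, hS⟩ := exists_sharp T
  have ha : 0 ≤ a := (hf0 0).trans (hfa 0)
  refine ⟨a * B / η, by positivity, fun s hs => ?_⟩
  set φ : T → (T →L[ℝ] ℝ) := fderiv ℝ (fun w => A w + s * f w) with hφ
  have hAs : ContDiff ℝ 2 (fun w => A w + s * f w) := hA.add (contDiff_const.mul hf)
  have hφc : ContDiff ℝ 1 φ := hAs.fderiv_right (by norm_num)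
  have hqpos : ∀ z ∈ tsupport f, 0 < φ z (S (φ z)) := by
    intro z hz
    have h1 := (hS (φ z)).1
    have h2 : 0 < ‖φ z‖ := lt_of_lt_of_le hη (hs z hz)
    by_contra h
    have : B * φ z (S (φ z)) ≤ 0 := mul_nonpos_of_nonneg_of_nonpos hB.le (le_of_not_gt h)
    nlinarith
  refine ⟨fun z => -(f z / φ z (S (φ z))) • S (φ z), ?_, ?_, ?_⟩
  · rw [contDiff_iff_contDiffAt]
    intro z
    have hSφ : ContDiffAt ℝ 1 (fun z => S (φ z)) z := (S.contDiff.comp hφc).contDiffAt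
    by_cases hz : z ∈ tsupport f
    · refine ContDiffAt.smul (ContDiffAt.neg (ContDiffAt.div ((hf.of_le one_le_two).contDiffAt) ?_
        (hqpos z hz).ne')) hSφ
      exact hφc.contDiffAt.clm_apply hSφ
    · refine (contDiffAt_const (c := (0 : T))).congr_of_eventuallyEq ?_
      filter_upwards [notMem_tsupport_iff_eventuallyEq.mp hz] with w hw
      simp [hw]
  · intro z
    by_cases hz : z ∈ tsupport f
    · have hq := hqpos z hz
      set q := φ z (S (φ z)) with hqd
      rw [norm_smul, norm_neg, Real.norm_eq_abs, abs_of_nonneg (div_nonneg (hf0 z) hq.le)]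
      have h1 := (hS (φ z)).1
      have h2 := (hS (φ z)).2
      have h3 := hs z hz
      have h4 : η * ‖S (φ z)‖ ≤ B * q := by
        have : (η * ‖S (φ z)‖) ^ 2 ≤ (B * q) ^ 2 := by
          calc (η * ‖S (φ z)‖) ^ 2 = η ^ 2 * ‖S (φ z)‖ ^ 2 := by ring
            _ ≤ ‖φ z‖ ^ 2 * ‖S (φ z)‖ ^ 2 := by gcongr
            _ ≤ (B * q) * (B * q) := by gcongr
            _ = _ := by ring
        exact le_of_sq_le_sq this (by positivity)
      rw [div_mul_eq_mul_div, div_le_div_iff₀ hq hη]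
      calc f z * ‖S (φ z)‖ * η = f z * (η * ‖S (φ z)‖) := by ring
        _ ≤ a * (B * q) := mul_le_mul (hfa z) h4 (by positivity) ha
        _ = _ := by ring
    · have h0 := image_eq_zero_of_notMem_tsupport hz
      simp only [h0, zero_div, neg_zero, zero_smul, norm_zero]
      positivity
  · intro z
    by_cases hz : z ∈ tsupport f
    · have hq := hqpos z hz
      simp only [map_smul, smul_eq_mul]
      field_simp
    · have h0 := image_eq_zero_of_notMem_tsupport hz
      simp [h0]

/-- Linking: if `A ≤ ε` on the subspace `range ι`, and `A + f ≥ c > ε` on the complementary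
subspace `ker π`, then some `A + s f` with `s ∈ [0, 1]` has almost critical points on the support
of `f`. Otherwise the (discretised) flow of the field of `exists_field` would be a bounded
deformation along which `A + s f` does not increase, and by `exists_zero_bounded` it would map a
point of `range ι` into `ker π`. -/
theorem linking {W : Type*} [NormedAddCommGroup W] [NormedSpace ℝ W] [FiniteDimensional ℝ W]
    (π : T →L[ℝ] W) (ι : W →L[ℝ] T) (hπι : ∀ w, π (ι w) = w)
    {A f : T → ℝ} (hA : ContDiff ℝ 2 A) (hf : ContDiff ℝ 2 f) {a : ℝ}
    (hf0 : ∀ z, 0 ≤ f z) (hfa : ∀ z, f z ≤ a) {L K : NNReal} (hfL : LipschitzWith L f)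
    (hK : ∀ s ∈ Set.Icc (0 : ℝ) 1, LipschitzWith K (fderiv ℝ (fun w => A w + s * f w)))
    {ε c : ℝ} (hεc : ε < c) (hAι : ∀ w, A (ι w) ≤ ε) (hAπ : ∀ z, π z = 0 → c ≤ A z + f z)
    {η : ℝ} (hη : 0 < η) :
    ∃ s ∈ Set.Icc (0 : ℝ) 1, ∃ z ∈ tsupport f, ‖fderiv ℝ (fun w => A w + s * f w) z‖ < η := by
  by_contra! hno
  obtain ⟨B, hB0, hB⟩ := exists_field hA hf hf0 hfa hη
  set C : ℝ := K * B ^ 2 + L * B with hC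
  have hC0 : 0 ≤ C := by positivity
  obtain ⟨P, hP⟩ := exists_nat_gt (C / (c - ε))
  have hcε : 0 < c - ε := by linarith
  have hPpos : (0 : ℝ) < P := lt_of_le_of_lt (by positivity) hP
  set h : ℝ := 1 / P with hh
  have hhpos : 0 < h := by positivity
  have step : ∀ j : ℕ, j ≤ P → ∃ Θ : T → T, ContDiff ℝ 1 Θ ∧ (∀ z, ‖Θ z - z‖ ≤ j * (h * B)) ∧
      ∀ z, A (Θ z) + (j * h) * f (Θ z) ≤ A z + j * (C * h ^ 2) := by
    intro j
    induction j with
    | zero => exact fun _ => ⟨id, contDiff_id, by simp, by simp⟩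
    | succ j ih =>
      intro hj
      obtain ⟨Θ, hΘ, hΘd, hΘA⟩ := ih (by omega)
      have hs : (j : ℝ) * h ∈ Set.Icc (0 : ℝ) 1 := by
        refine ⟨by positivity, ?_⟩
        rw [hh, mul_one_div, div_le_one hPpos]
        exact_mod_cast (by omega : j ≤ P)
      obtain ⟨V, hV, hVB, hVd⟩ := hB (j * h) (hno _ hs)
      refine ⟨fun z => Θ z + h • V (Θ z), hΘ.add (contDiff_const.smul (hV.comp hΘ)), ?_, ?_⟩
      · intro z
        have e1 : Θ z + h • V (Θ z) - z = (Θ z - z) + h • V (Θ z) := by abel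
        rw [e1]
        refine (norm_add_le _ _).trans ?_
        have : ‖h • V (Θ z)‖ ≤ h * B := by
          rw [norm_smul, Real.norm_eq_abs, abs_of_pos hhpos]
          gcongr
          exact hVB _
        push_cast
        linarith [hΘd z]
      · intro z
        set u := Θ z with hu
        set v := h • V u with hv
        have hvn : ‖v‖ ≤ h * B := by
          rw [hv, norm_smul, Real.norm_eq_abs, abs_of_pos hhpos]
          gcongr
          exact hVB _
        have hAs : ContDiff ℝ 2 (fun w => A w + (j * h) * f w) := hA.add (contDiff_const.mul hf)
        have h1 := taylor_lipschitz (hAs.differentiable two_ne_zero) (hK _ hs) u v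
        have h2 : fderiv ℝ (fun w => A w + (j * h) * f w) u v = - h * f u := by
          rw [hv, map_smul, hVd, smul_eq_mul]; ring
        rw [h2] at h1
        have h3 := (le_abs_self _).trans h1
        have h4 : f (u + v) - f u ≤ L * (h * B) := by
          have := hfL.norm_sub_le (u + v) u
          rw [add_sub_cancel_left] at this
          refine (le_abs_self _).trans (this.trans ?_)
          gcongr
        have h5 : (K : ℝ) * ‖v‖ ^ 2 ≤ K * (h * B) ^ 2 := by gcongr
        have h6 : h * (f (u + v) - f u) ≤ h * (L * (h * B)) := by gcongr
        have h7 := hΘA z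
        push_cast
        simp only [hC] at h7 ⊢
        nlinarith
  obtain ⟨Θ, hΘ, hΘd, hΘA⟩ := step P le_rfl
  obtain ⟨w, hw⟩ := exists_zero_bounded (g := fun w => π (Θ (ι w) - ι w)) (C := ‖π‖ * (P * (h * B)))
    (π.contDiff.comp ((hΘ.comp ι.contDiff).sub ι.contDiff))
    (fun w => (π.le_opNorm _).trans (by gcongr; exact hΘd _))
  have hz : π (Θ (ι w)) = 0 := by
    rw [map_sub, hπι] at hw
    simpa using hw
  have h1 := hAπ _ hz
  have h2 := hΘA (ι w)
  have h3 := hAι w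
  have hPh : (P : ℝ) * h = 1 := by rw [hh]; field_simp
  have h4 : (P : ℝ) * (C * h ^ 2) = C * h := by
    calc _ = (P * h) * (C * h) := by ring
      _ = _ := by rw [hPh, one_mul]
  rw [h4, hPh] at h2
  have h5 : C * h < c - ε := by
    rw [hh, mul_one_div, div_lt_iff₀ hPpos]
    rwa [div_lt_iff₀ hcε, mul_comm] at hP
  linarith
end Linking

/-! ### Critical points of a discretised action functional -/

/-- The Hamiltonian vector field `X_K = (∂_y K, -∂_x K)` of an autonomous Hamiltonian. -/
def ham {n : ℕ} (K : E n → ℝ) (z : E n) : E n :=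
  (fun i => fderiv ℝ K z (0, Pi.single i 1), fun i => -fderiv ℝ K z (Pi.single i 1, 0))

/-- The configuration space of discrete paths `z₀, …, z_M` with `z_i = (x_i, y_i)` and `y₀ = 0`: the
triple `(x, u, y)` has `x = x_M`, `u i = x_{i+1} - x_i` and `y i = y_{i+1}`. -/
abbrev PathSpace (n M : ℕ) := (Fin n → ℝ) × ((Fin M → Fin n → ℝ) × (Fin M → Fin n → ℝ))

section Action
variable {n M : ℕ}

/-- The coordinate `u i k` on the path space. -/
def cU (i : Fin M) (k : Fin n) : PathSpace n M →L[ℝ] ℝ :=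
  (ContinuousLinearMap.proj (R := ℝ) (φ := fun _ : Fin n => ℝ) k).comp ((ContinuousLinearMap.proj i).comp
    ((ContinuousLinearMap.fst ℝ _ _).comp (ContinuousLinearMap.snd ℝ _ _)))

/-- The coordinate `y i k` on the path space. -/
def cY (i : Fin M) (k : Fin n) : PathSpace n M →L[ℝ] ℝ :=
  (ContinuousLinearMap.proj (R := ℝ) (φ := fun _ : Fin n => ℝ) k).comp ((ContinuousLinearMap.proj i).comp
    ((ContinuousLinearMap.snd ℝ _ _).comp (ContinuousLinearMap.snd ℝ _ _)))

/-- The point `x_i = x - ∑_{j ≥ i} u_j`. -/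
def cX (i : Fin M) : PathSpace n M →L[ℝ] (Fin n → ℝ) :=
  ContinuousLinearMap.fst ℝ _ _ - ∑ j, if i ≤ j then (ContinuousLinearMap.proj j).comp
    ((ContinuousLinearMap.fst ℝ _ _).comp (ContinuousLinearMap.snd ℝ _ _)) else 0

/-- The point `(x_i, y_{i+1})` at which the Hamiltonian is evaluated in the `i`-th step. -/
def cL (i : Fin M) : PathSpace n M →L[ℝ] E n :=
  (cX i).prod ((ContinuousLinearMap.proj i).comp
    ((ContinuousLinearMap.snd ℝ _ _).comp (ContinuousLinearMap.snd ℝ _ _)))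

@[simp] lemma cU_apply (i : Fin M) (k : Fin n) (z : PathSpace n M) : cU i k z = z.2.1 i k := rfl
@[simp] lemma cY_apply (i : Fin M) (k : Fin n) (z : PathSpace n M) : cY i k z = z.2.2 i k := rfl
lemma cX_apply (i : Fin M) (z : PathSpace n M) :
    cX i z = z.1 - ∑ j, if i ≤ j then z.2.1 j else 0 := by
  simp only [cX, sub_apply, ContinuousLinearMap.coe_fst', sum_apply]
  congr 1
  refine Finset.sum_congr rfl fun j _ => ?_
  split_ifs <;> rfl
lemma cL_apply (i : Fin M) (z : PathSpace n M) : cL i z = (cX i z, z.2.2 i) := rfl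

/-- The bilinear form `∑ ⟨y_i, u_i⟩`. -/
def bil (n M : ℕ) : PathSpace n M →L[ℝ] PathSpace n M →L[ℝ] ℝ :=
  ∑ i : Fin M, ∑ k : Fin n, (cY i k).smulRight (cU i k)

lemma bil_apply (z w : PathSpace n M) : bil n M z w = ∑ i, ∑ k, z.2.2 i k * w.2.1 i k := by
  simp [bil]

/-- The discrete action `∑ ⟨y_{i+1}, x_{i+1} - x_i⟩ - h ∑ K(x_i, y_{i+1})`. -/
def act (K : E n → ℝ) (h : ℝ) (z : PathSpace n M) : ℝ :=
  bil n M z z - h * ∑ i : Fin M, K (cL i z)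

lemma act_contDiff {K : E n → ℝ} (hK : ContDiff ℝ 2 K) (h : ℝ) :
    ContDiff ℝ 2 (act (M := M) K h) := by
  unfold act
  refine ((bil n M).contDiff.clm_apply contDiff_id).sub (contDiff_const.mul ?_)
  exact ContDiff.sum fun i _ => hK.comp (cL i).contDiff

lemma act_fderiv {K : E n → ℝ} (hK : ContDiff ℝ 2 K) (h : ℝ) (z : PathSpace n M) :
    fderiv ℝ (act K h) z = bil n M z + (bil n M).flip z
      - h • ∑ i : Fin M, (fderiv ℝ K (cL i z)).comp (cL i) := by
  apply HasFDerivAt.fderiv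
  have h1 : HasFDerivAt (fun z => bil n M z z) (bil n M z + (bil n M).flip z) z := by
    have := (bil n M).hasFDerivAt (x := z) |>.clm_apply (hasFDerivAt_id z)
    exact this
  refine h1.sub (HasFDerivAt.const_mul ?_ h)
  refine HasFDerivAt.fun_sum fun i _ => ?_
  exact ((hK.differentiable two_ne_zero) (cL i z)).hasFDerivAt.comp z (cL i).hasFDerivAt

lemma act_fderiv_apply {K : E n → ℝ} (hK : ContDiff ℝ 2 K) (h : ℝ) (z v : PathSpace n M) :
    fderiv ℝ (act K h) z v = (∑ i, ∑ k, z.2.2 i k * v.2.1 i k) + (∑ i, ∑ k, v.2.2 i k * z.2.1 i k)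
      - h * ∑ i : Fin M, fderiv ℝ K (cL i z) (cL i v) := by
  rw [act_fderiv hK]
  simp [bil_apply]

lemma act_lipschitz {K : E n → ℝ} (hK : ContDiff ℝ 2 K) (hc : HasCompactSupport K) (h : ℝ) :
    ∃ C, LipschitzWith C (fderiv ℝ (act (M := M) K h)) := by
  have hK1 : ContDiff ℝ 1 (fderiv ℝ K) := hK.fderiv_right (by norm_num)
  obtain ⟨C, hC⟩ := hK1.lipschitzWith_of_hasCompactSupport (hc.fderiv ℝ) one_ne_zero
  have h2 : ∀ i : Fin M, ∃ C', LipschitzWith C' (fun z => (fderiv ℝ K (cL i z)).comp (cL i)) := by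
    intro i
    exact ⟨_, ((ContinuousLinearMap.compL ℝ _ _ ℝ).flip (cL i)).lipschitz.comp
      (hC.comp (cL i).lipschitz)⟩
  choose C' hC' using h2
  have h3 : ∃ C3, LipschitzWith C3
      (fun z => ∑ i : Fin M, (fderiv ℝ K (cL i z)).comp (cL i)) := by
    classical
    have : ∀ s : Finset (Fin M), ∃ C3, LipschitzWith C3
        (fun z => ∑ i ∈ s, (fderiv ℝ K (cL i z)).comp (cL i)) := by
      intro s
      induction s using Finset.induction_on with
      | empty => exact ⟨0, by simp⟩
      | insert a s ha ih =>
        obtain ⟨C4, h4⟩ := ih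
        exact ⟨C' a + C4, by simpa [Finset.sum_insert ha] using (hC' a).add h4⟩
    exact this Finset.univ
  obtain ⟨C3, h3⟩ := h3
  have h5 := ((bil n M).lipschitz.add ((bil n M).flip).lipschitz).sub
    ((lipschitzWith_smul (α := ℝ) (β := PathSpace n M →L[ℝ] ℝ) h).comp h3)
  refine ⟨‖bil n M‖₊ + ‖(bil n M).flip‖₊ + ‖h‖₊ * C3, fun z w => ?_⟩
  rw [act_fderiv hK, act_fderiv hK]
  exact h5 z w

lemma cL_single_u (i j : Fin M) (w : Fin n → ℝ) :
    cL i ((0, (Pi.single j w, 0)) : PathSpace n M) = (if i ≤ j then -w else 0, 0) := by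
  rw [cL_apply, cX_apply]
  ext k
  · simp only [zero_sub, Pi.neg_apply]
    rw [Finset.sum_eq_single j]
    · split_ifs <;> simp
    · intro b _ hb
      simp [hb]
    · simp
  · simp

lemma cL_single_y (i j : Fin M) (w : Fin n → ℝ) :
    cL i ((0, (0, Pi.single j w)) : PathSpace n M) = (0, if i = j then w else 0) := by
  rw [cL_apply, cX_apply]
  simp [Pi.single_apply]

lemma cL_x (i : Fin M) (w : Fin n → ℝ) :
    cL i ((w, (0, 0)) : PathSpace n M) = (w, 0) := by
  rw [cL_apply, cX_apply]
  simp

/-- Derivative of the action in the direction of `u_j`. -/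
lemma act_du {K : E n → ℝ} (hK : ContDiff ℝ 2 K) (h : ℝ) (z : PathSpace n M) (j : Fin M)
    (k : Fin n) : fderiv ℝ (act K h) z (0, (Pi.single j (Pi.single k 1), 0)) =
      z.2.2 j k + h * ∑ i : Fin M, if i ≤ j then fderiv ℝ K (cL i z) (Pi.single k 1, 0) else 0 := by
  rw [act_fderiv_apply hK]
  simp only [cL_single_u]
  have h1 : (∑ i, ∑ k', z.2.2 i k' * (Pi.single j (Pi.single k 1) : Fin M → Fin n → ℝ) i k')
      = z.2.2 j k := by
    rw [Finset.sum_eq_single j]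
    · simp [Pi.single_apply]
    · intro b _ hb
      simp [hb]
    · simp
  have h2 : ∀ i : Fin M, fderiv ℝ K (cL i z) (if i ≤ j then -(Pi.single k 1) else 0, 0) =
      -(if i ≤ j then fderiv ℝ K (cL i z) (Pi.single k 1, 0) else 0) := by
    intro i
    split_ifs
    · rw [← map_neg]; simp
    · rw [neg_zero]; exact map_zero _
  rw [h1, Finset.sum_congr rfl (fun i _ => h2 i)]
  simp

/-- Derivative of the action in the direction of `y_{j+1}`. -/
lemma act_dy {K : E n → ℝ} (hK : ContDiff ℝ 2 K) (h : ℝ) (z : PathSpace n M) (j : Fin M)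
    (k : Fin n) : fderiv ℝ (act K h) z (0, (0, Pi.single j (Pi.single k 1))) =
      z.2.1 j k - h * fderiv ℝ K (cL j z) (0, Pi.single k 1) := by
  rw [act_fderiv_apply hK]
  simp only [cL_single_y]
  have h1 : (∑ i, ∑ k', (Pi.single j (Pi.single k 1) : Fin M → Fin n → ℝ) i k' * z.2.1 i k')
      = z.2.1 j k := by
    rw [Finset.sum_eq_single j]
    · simp [Pi.single_apply]
    · intro b _ hb
      simp [hb]
    · simp
  have h2 : (∑ i, fderiv ℝ K (cL i z) (0, if i = j then Pi.single k 1 else 0)) =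
      fderiv ℝ K (cL j z) (0, Pi.single k 1) := by
    rw [Finset.sum_eq_single j]
    · simp
    · intro b _ hb
      rw [if_neg hb]; exact map_zero _
    · simp
  rw [h1, h2]
  simp

lemma act_dx {K : E n → ℝ} (hK : ContDiff ℝ 2 K) (h : ℝ) (z : PathSpace n M)
    (k : Fin n) : fderiv ℝ (act K h) z (Pi.single k 1, (0, 0)) =
      - (h * ∑ i : Fin M, fderiv ℝ K (cL i z) (Pi.single k 1, 0)) := by
  rw [act_fderiv_apply hK]
  simp only [cL_x]
  simp

/-- Total derivative of the action with the boundary term `s f (x_M)` added. -/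
def dAct (K : E n → ℝ) (h : ℝ) (f : (Fin n → ℝ) → ℝ) (s : ℝ) (z : PathSpace n M) :
    PathSpace n M →L[ℝ] ℝ :=
  fderiv ℝ (act K h) z + s • (fderiv ℝ f z.1).comp (ContinuousLinearMap.fst ℝ _ _)

lemma dAct_eq {K : E n → ℝ} (hK : ContDiff ℝ 2 K) (h : ℝ) {f : (Fin n → ℝ) → ℝ}
    (hf : ContDiff ℝ 2 f) (s : ℝ) (z : PathSpace n M) :
    fderiv ℝ (fun w : PathSpace n M => act K h w + s * f w.1) z = dAct K h f s z := by
  apply HasFDerivAt.fderiv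
  refine (((act_contDiff hK h).differentiable two_ne_zero) z).hasFDerivAt.add
    (HasFDerivAt.const_mul ?_ s)
  exact ((hf.differentiable two_ne_zero) z.1).hasFDerivAt.comp z hasFDerivAt_fst

/-- The action with boundary term `s f`, for some `s ∈ [0, 1]`, has a critical point with `x_M` in
the support of `f`, as soon as `f 0` is large compared to `sup |K|`. -/
lemma exists_crit (hM : 0 < M) {K : E n → ℝ} (hK : ContDiff ℝ 2 K) (hKc : HasCompactSupport K)
    {f : (Fin n → ℝ) → ℝ} (hf : ContDiff ℝ 2 f) (hfc : HasCompactSupport f) (hf0 : ∀ x, 0 ≤ f x)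
    {ε : ℝ} (hε : ∀ z, |K z| ≤ ε) (hfε : 2 * ε < f 0) :
    ∃ s ∈ Set.Icc (0 : ℝ) 1, ∃ z : PathSpace n M, z.1 ∈ tsupport f ∧
      dAct K (1 / M) f s z = 0 := by
  have hMpos : (0 : ℝ) < M := by exact_mod_cast hM
  set h : ℝ := 1 / M with hh
  have hhpos : 0 < h := by positivity
  have hMh : (M : ℝ) * h = 1 := by rw [hh]; field_simp
  have hsumK : ∀ z : PathSpace n M, |h * ∑ i : Fin M, K (cL i z)| ≤ ε := by
    intro z
    rw [abs_mul, abs_of_pos hhpos]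
    have : |∑ i : Fin M, K (cL i z)| ≤ M * ε := by
      refine (Finset.abs_sum_le_sum_abs _ _).trans ?_
      refine (Finset.sum_le_sum fun i _ => hε (cL i z)).trans ?_
      simp
    calc h * |∑ i : Fin M, K (cL i z)| ≤ h * (M * ε) := by gcongr
      _ = (M * h) * ε := by ring
      _ = ε := by rw [hMh, one_mul]
  obtain ⟨C1, hC1⟩ := act_lipschitz (M := M) hK hKc h
  have hf1 : ContDiff ℝ 1 (fderiv ℝ f) := hf.fderiv_right (by norm_num)
  obtain ⟨C2, hC2⟩ := hf1.lipschitzWith_of_hasCompactSupport (hfc.fderiv ℝ) one_ne_zero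
  obtain ⟨C3, hC3⟩ := hf.lipschitzWith_of_hasCompactSupport hfc two_ne_zero
  obtain ⟨a, ha⟩ := hf.continuous.bounded_above_of_compact_support hfc
  obtain ⟨κ, hκ⟩ := (hK.continuous_fderiv two_ne_zero).bounded_above_of_compact_support
    (hKc.fderiv ℝ)
  have hκ0 : 0 ≤ κ := (norm_nonneg _).trans (hκ 0)
  let fstL : PathSpace n M →L[ℝ] (Fin n → ℝ) := ContinuousLinearMap.fst ℝ _ _
  have hLip : ∃ C, ∀ s ∈ Set.Icc (0 : ℝ) 1, LipschitzWith C
      (fderiv ℝ (fun w : PathSpace n M => act K h w + s * f w.1)) := by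
    have h4 := ((ContinuousLinearMap.compL ℝ _ _ ℝ).flip fstL).lipschitz.comp
      (hC2.comp fstL.lipschitz)
    refine ⟨C1 + 1 * (‖(ContinuousLinearMap.compL ℝ _ _ ℝ).flip fstL‖₊ * (C2 * ‖fstL‖₊)),
      fun s hs => ?_⟩
    have h5 : LipschitzWith 1 (fun φ : PathSpace n M →L[ℝ] ℝ => s • φ) :=
      (lipschitzWith_smul (α := ℝ) (β := PathSpace n M →L[ℝ] ℝ) s).weaken (by
        rw [← NNReal.coe_le_coe]
        simpa [abs_of_nonneg hs.1] using hs.2)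
    have h6 := hC1.add (h5.comp h4)
    intro z w
    rw [dAct_eq hK h hf, dAct_eq hK h hf]
    exact h6 z w
  obtain ⟨C, hC⟩ := hLip
  have hsupp : ∀ z : PathSpace n M, z ∈ tsupport (fun w : PathSpace n M => f w.1) →
      z.1 ∈ tsupport f := by
    intro z hz
    exact tsupport_comp_subset_preimage f continuous_fst hz
  let W := (Fin n → ℝ) × (Fin M → Fin n → ℝ)
  let sndU : PathSpace n M →L[ℝ] (Fin M → Fin n → ℝ) :=
    (ContinuousLinearMap.fst ℝ _ _).comp (ContinuousLinearMap.snd ℝ _ _)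
  let sndY : PathSpace n M →L[ℝ] (Fin M → Fin n → ℝ) :=
    (ContinuousLinearMap.snd ℝ _ _).comp (ContinuousLinearMap.snd ℝ _ _)
  let π : PathSpace n M →L[ℝ] W := fstL.prod ((1 / 2 : ℝ) • (sndU - sndY))
  let ι : W →L[ℝ] PathSpace n M := (ContinuousLinearMap.fst ℝ _ _).prod
    ((ContinuousLinearMap.snd ℝ _ _).prod (-ContinuousLinearMap.snd ℝ _ _))
  have hπ : ∀ z, π z = (z.1, (1 / 2 : ℝ) • (z.2.1 - z.2.2)) := fun z => rfl
  have hι : ∀ w, ι w = (w.1, (w.2, -w.2)) := fun z => rfl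
  have hlink : ∀ η : ℝ, 0 < η → ∃ s ∈ Set.Icc (0 : ℝ) 1, ∃ z : PathSpace n M,
      z.1 ∈ tsupport f ∧ ‖dAct K h f s z‖ < η := by
    intro η hη
    obtain ⟨s, hs, z, hz, hz2⟩ := linking (T := PathSpace n M) π ι (fun w => by
        rw [hι, hπ]
        ext k
        · rfl
        · simp; ring)
      (act_contDiff hK h) (hf.comp contDiff_fst) (a := a) (fun z => hf0 z.1)
      (fun z => (le_abs_self _).trans (ha z.1)) (hC3.comp LipschitzWith.prod_fst) hC
      (ε := ε) (c := f 0 - ε) (by linarith)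
      (fun w => by
        have h1 := neg_le_of_abs_le (hsumK (ι w))
        have h2 : bil n M (ι w) (ι w) ≤ 0 := by
          rw [bil_apply, hι]
          refine Finset.sum_nonpos fun i _ => Finset.sum_nonpos fun k _ => ?_
          simp only [Pi.neg_apply]
          nlinarith [sq_nonneg (w.2 i k)]
        unfold act
        linarith)
      (fun z hz => by
        rw [hπ] at hz
        have hz1 : z.1 = 0 := congrArg Prod.fst hz
        have hz2 : z.2.1 - z.2.2 = 0 := by
          have : (1 / 2 : ℝ) • (z.2.1 - z.2.2) = 0 := congrArg Prod.snd hz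
          simpa using this
        have h1 := le_of_abs_le (hsumK z)
        have h2 : 0 ≤ bil n M z z := by
          rw [bil_apply, sub_eq_zero.mp hz2]
          exact Finset.sum_nonneg fun i _ => Finset.sum_nonneg fun k _ => mul_self_nonneg _
        change f 0 - ε ≤ act K h z + f z.1
        rw [hz1]
        unfold act
        linarith) hη
    exact ⟨s, hs, z, hsupp z hz, by rwa [← dAct_eq hK h hf]⟩
  obtain ⟨R1, hR1⟩ := hfc.isCompact.isBounded.exists_norm_le
  set R : ℝ := max R1 (1 + κ) with hR
  have hbound : ∀ s : ℝ, ∀ z : PathSpace n M, z.1 ∈ tsupport f → ‖dAct K h f s z‖ ≤ 1 →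
      ‖z‖ ≤ R := by
    intro s z hz hz1
    have hR0 : 0 ≤ R := by rw [hR]; exact le_max_of_le_right (by linarith)
    have hsing : ∀ k : Fin n, ‖(Pi.single k 1 : Fin n → ℝ)‖ = 1 := fun k => by
      rw [Pi.norm_single]; simp
    have hsing2 : ∀ (j : Fin M) (k : Fin n),
        ‖(Pi.single j (Pi.single k 1) : Fin M → Fin n → ℝ)‖ = 1 := fun j k => by
      rw [Pi.norm_single, hsing]
    have hKd : ∀ p v, ‖v‖ ≤ 1 → |fderiv ℝ K p v| ≤ κ := fun p v hv =>
      ((fderiv ℝ K p).le_opNorm v).trans (by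
        calc ‖fderiv ℝ K p‖ * ‖v‖ ≤ κ * 1 := by gcongr; exact hκ p
          _ = κ := mul_one _)
    rw [Prod.norm_def, Prod.norm_def]
    refine max_le ((hR1 _ hz).trans (le_max_left _ _)) (max_le ?_ ?_)
    · rw [pi_norm_le_iff_of_nonneg hR0]
      intro j
      rw [pi_norm_le_iff_of_nonneg hR0]
      intro k
      have h1 := ((dAct K h f s z).le_opNorm (0, (0, Pi.single j (Pi.single k 1))))
      have h2 : dAct K h f s z (0, (0, Pi.single j (Pi.single k 1))) =
          z.2.1 j k - h * fderiv ℝ K (cL j z) (0, Pi.single k 1) := by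
        rw [← act_dy hK]
        simp [dAct]
      have h3 : ‖((0, (0, Pi.single j (Pi.single k 1))) : PathSpace n M)‖ ≤ 1 := by
        rw [Prod.norm_def, Prod.norm_def]; simp [hsing2]
      have h4 := hKd (cL j z) (0, Pi.single k 1) (by rw [Prod.norm_def]; simp [hsing])
      have h5 : ‖dAct K h f s z‖ * ‖((0, (0, Pi.single j (Pi.single k 1))) : PathSpace n M)‖ ≤ 1 :=
        mul_le_one₀ hz1 (norm_nonneg _) h3
      rw [h2] at h1
      have h6 : h ≤ 1 := by
        rw [hh, div_le_one hMpos]; exact_mod_cast hM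
      have h7 : |h * fderiv ℝ K (cL j z) (0, Pi.single k 1)| ≤ κ := by
        rw [abs_mul, abs_of_pos hhpos]
        exact (mul_le_of_le_one_left (abs_nonneg _) h6).trans h4
      refine le_trans ?_ (le_max_right _ _)
      rw [Real.norm_eq_abs] at h1 ⊢
      have h8 := abs_sub_abs_le_abs_sub (z.2.1 j k) (h * fderiv ℝ K (cL j z) (0, Pi.single k 1))
      linarith
    · rw [pi_norm_le_iff_of_nonneg hR0]
      intro j
      rw [pi_norm_le_iff_of_nonneg hR0]
      intro k
      have h1 := ((dAct K h f s z).le_opNorm (0, (Pi.single j (Pi.single k 1), 0)))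
      set q := h * ∑ i : Fin M, if i ≤ j then fderiv ℝ K (cL i z) (Pi.single k 1, 0) else 0 with hq
      have h2 : dAct K h f s z (0, (Pi.single j (Pi.single k 1), 0)) = z.2.2 j k + q := by
        rw [hq, ← act_du hK]
        simp [dAct]
      have h3 : ‖((0, (Pi.single j (Pi.single k 1), 0)) : PathSpace n M)‖ ≤ 1 := by
        rw [Prod.norm_def, Prod.norm_def]; simp [hsing2]
      have h5 : ‖dAct K h f s z‖ * ‖((0, (Pi.single j (Pi.single k 1), 0)) : PathSpace n M)‖ ≤ 1 :=
        mul_le_one₀ hz1 (norm_nonneg _) h3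
      rw [h2] at h1
      have h7 : |q| ≤ κ := by
        rw [hq, abs_mul, abs_of_pos hhpos]
        calc _ ≤ h * (M * κ) := by
              gcongr
              refine (Finset.abs_sum_le_sum_abs _ _).trans ?_
              refine (Finset.sum_le_sum (g := fun _ => κ) fun i _ => ?_).trans (by simp)
              split_ifs
              · exact hKd _ _ (by rw [Prod.norm_def]; simp [hsing])
              · simpa using hκ0
          _ = (M * h) * κ := by ring
          _ = κ := by rw [hMh, one_mul]
      refine le_trans ?_ (le_max_right _ _)
      rw [Real.norm_eq_abs] at h1 ⊢
      have h8 := abs_sub_abs_le_abs_sub (z.2.2 j k) (-q)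
      rw [abs_neg, sub_neg_eq_add] at h8
      linarith
  let S : Set (ℝ × PathSpace n M) :=
    Set.Icc 0 1 ×ˢ (Metric.closedBall 0 R ∩ {z | z.1 ∈ tsupport f})
  have hS : IsCompact S := isCompact_Icc.prod ((isCompact_closedBall _ _).inter_right
    ((isClosed_tsupport f).preimage continuous_fst))
  have hcont : Continuous (fun p : ℝ × PathSpace n M => ‖dAct K h f p.1 p.2‖) := by
    have e1 := (act_contDiff (M := M) hK h).continuous_fderiv two_ne_zero
    have e2 := hf.continuous_fderiv two_ne_zero
    unfold dAct
    refine Continuous.norm ((e1.comp continuous_snd).add (continuous_fst.smul ?_))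
    exact (e2.comp (continuous_fst.comp continuous_snd)).clm_comp continuous_const
  have hmem : ∀ η ≤ (1 : ℝ), 0 < η → ∃ p ∈ S, ‖dAct K h f p.1 p.2‖ < η := by
    intro η hη1 hη
    obtain ⟨s, hs, z, hz, hz2⟩ := hlink η hη
    exact ⟨(s, z), ⟨hs, by simpa using hbound s z hz (by linarith), hz⟩, hz2⟩
  obtain ⟨p1, hp1, -⟩ := hmem 1 le_rfl one_pos
  obtain ⟨p0, hp0, hmin⟩ := hS.exists_isMinOn ⟨p1, hp1⟩ hcont.continuousOn
  refine ⟨p0.1, hp0.1, p0.2, hp0.2.2, ?_⟩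
  by_contra hne
  have hpos : 0 < ‖dAct K h f p0.1 p0.2‖ := norm_pos_iff.mpr hne
  obtain ⟨p, hp, hpl⟩ := hmem (min 1 ‖dAct K h f p0.1 p0.2‖) (min_le_left _ _)
    (lt_min one_pos hpos)
  have h1 : ‖dAct K h f p0.1 p0.2‖ ≤ ‖dAct K h f p.1 p.2‖ := hmin hp
  linarith [min_le_right 1 ‖dAct K h f p0.1 p0.2‖]

/-- Discrete Hamiltonian chords from the zero section to the graph of `-s df`: if `sup |K|` is small
compared to `f 0`, then for every number of steps `M` there is a solution of the symplectic Euler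
scheme of `K` which starts on `y = 0` and ends over the support of `f`, at a point of the graph of
`-s df` for some `s ∈ [0, 1]`. -/
theorem discrete_chord (hM : 0 < M) {K : E n → ℝ} (hK : ContDiff ℝ 2 K) (hKc : HasCompactSupport K)
    {f : (Fin n → ℝ) → ℝ} (hf : ContDiff ℝ 2 f) (hfc : HasCompactSupport f) (hf0 : ∀ x, 0 ≤ f x)
    {ε : ℝ} (hε : ∀ z, |K z| ≤ ε) (hfε : 2 * ε < f 0) :
    ∃ s ∈ Set.Icc (0 : ℝ) 1, ∃ z : ℕ → E n, (z 0).2 = 0 ∧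
      (∀ i < M, z (i + 1) = z i + (1 / M : ℝ) • ham K ((z i).1, (z (i + 1)).2)) ∧
      (z M).1 ∈ tsupport f ∧ ∀ k, (z M).2 k = - (s * fderiv ℝ f (z M).1 (Pi.single k 1)) := by
  obtain ⟨s, hs, ζ, hζ, hcrit⟩ := exists_crit hM hK hKc hf hfc hf0 hε hfε
  set h : ℝ := 1 / M with hh
  let u : ℕ → Fin n → ℝ := fun j => if hj : j < M then ζ.2.1 ⟨j, hj⟩ else 0
  let xs : ℕ → Fin n → ℝ := fun i => ζ.1 - ∑ j ∈ Finset.range M, if i ≤ j then u j else 0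
  -- `p j` is the point at which the Hamiltonian is evaluated in the `j`-th step
  let p : ℕ → E n := fun j => if hj : j < M then cL ⟨j, hj⟩ ζ else 0
  let g : ℕ → Fin n → ℝ := fun j k => fderiv ℝ K (p j) (Pi.single k 1, 0)
  let ys : ℕ → Fin n → ℝ := fun i => - (h • ∑ j ∈ Finset.range i, g j)
  have hu : ∀ j : Fin M, ζ.2.1 j = u j := fun j => by simp [u]
  have hp : ∀ j : Fin M, p j = cL j ζ := fun j => by simp [p]
  have hxs : ∀ i : Fin M, cX i ζ = xs i := by
    intro i
    rw [cX_apply]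
    simp only [xs]
    rw [Finset.sum_range]
    simp [hu]
  have hys : ∀ i : Fin M, ζ.2.2 i = ys (i + 1) := by
    intro i
    ext k
    have h1 : dAct K h f s ζ (0, (Pi.single i (Pi.single k 1), 0)) = 0 := by rw [hcrit]; rfl
    have h2 := act_du hK h ζ i k
    have h3 : dAct K h f s ζ (0, (Pi.single i (Pi.single k 1), 0)) =
        fderiv ℝ (act K h) ζ (0, (Pi.single i (Pi.single k 1), 0)) := by simp [dAct]
    rw [h3, h2] at h1
    have h4 : (∑ i_1 : Fin M, if i_1 ≤ i then fderiv ℝ K (cL i_1 ζ) (Pi.single k 1, 0) else 0)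
        = ∑ j ∈ Finset.range (i + 1), g j k := by
      have h5 : ∀ j : Fin M, (if j ≤ i then fderiv ℝ K (cL j ζ) (Pi.single k 1, 0) else 0)
          = (fun j : ℕ => if j ≤ i then g j k else 0) j := by
        intro j
        simp only [g, hp]
        rfl
      rw [Finset.sum_congr rfl (fun j _ => h5 j), 
        ← Finset.sum_range (fun j : ℕ => if j ≤ i then g j k else 0), ← Finset.sum_filter]
      refine Finset.sum_congr ?_ fun _ _ => rfl
      ext j
      simp only [Finset.mem_filter, Finset.mem_range]
      have := i.2
      omega
    rw [h4] at h1
    simp only [ys, Pi.neg_apply, Pi.smul_apply, Finset.sum_apply, smul_eq_mul]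
    linarith
  have hpz : ∀ i : Fin M, p i = (xs i, ys (i + 1)) := fun i => by
    rw [hp, cL_apply, hxs, hys]
  have hxM : xs M = ζ.1 := by
    simp only [xs]
    rw [Finset.sum_eq_zero, sub_zero]
    intro j hj
    rw [if_neg (by simpa using hj)]
  refine ⟨s, hs, fun i => (xs i, ys i), by simp [ys], ?_, by simpa [hxM] using hζ, ?_⟩
  · intro i hi
    have hpi := hpz ⟨i, hi⟩
    simp only at hpi ⊢
    rw [← hpi]
    ext k
    · have h1 : dAct K h f s ζ (0, (0, Pi.single ⟨i, hi⟩ (Pi.single k 1))) = 0 := by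
        rw [hcrit]; rfl
      have h2 := act_dy hK h ζ ⟨i, hi⟩ k
      have h3 : dAct K h f s ζ (0, (0, Pi.single ⟨i, hi⟩ (Pi.single k 1))) =
          fderiv ℝ (act K h) ζ (0, (0, Pi.single ⟨i, hi⟩ (Pi.single k 1))) := by simp [dAct]
      rw [h3, h2, ← hp, hu] at h1
      have h4 : xs (i + 1) = xs i + u i := by
        simp only [xs]
        have : ∀ j ∈ Finset.range M, (if i ≤ j then u j else 0)
            = (if i + 1 ≤ j then u j else 0) + if j = i then u i else 0 := by
          intro j _
          rcases lt_trichotomy i j with hij | rfl | hij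
          · simp [hij.le, Nat.succ_le_of_lt hij, hij.ne']
          · simp
          · simp [not_le.mpr hij, hij.ne, show ¬ i + 1 ≤ j by omega]
        rw [Finset.sum_congr rfl this, Finset.sum_add_distrib, Finset.sum_ite_eq']
        simp only [Finset.mem_range, hi, if_true]
        abel
      rw [h4]
      simp only [ham, Prod.fst_add, Prod.smul_fst, Pi.add_apply, Pi.smul_apply, smul_eq_mul]
      simp only at h1
      linarith
    · simp only [ham, ys, Finset.sum_range_succ, Prod.snd_add, Prod.smul_snd, Pi.add_apply,
        Pi.smul_apply, smul_eq_mul, Pi.neg_apply, g]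
      ring
  · intro k
    have h1 : dAct K h f s ζ (Pi.single k 1, (0, 0)) = 0 := by rw [hcrit]; rfl
    have h2 := act_dx hK h ζ k
    have h3 : dAct K h f s ζ (Pi.single k 1, (0, 0)) =
        fderiv ℝ (act K h) ζ (Pi.single k 1, (0, 0)) + s * fderiv ℝ f ζ.1 (Pi.single k 1) := by
      simp [dAct]
    rw [h3, h2] at h1
    have h4 : ∑ i : Fin M, fderiv ℝ K (cL i ζ) (Pi.single k 1, 0) =
        ∑ j ∈ Finset.range M, g j k := by
      rw [Finset.sum_range]
      simp only [g, hp]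
    rw [h4] at h1
    simp only [hxM]
    simp only [ys, Pi.neg_apply, Pi.smul_apply, Finset.sum_apply, smul_eq_mul]
    linarith

end Action

open scoped ContDiff

/-! ### Hamiltonian vector fields -/

section Ham
variable {n : ℕ}

lemma omega0_ham (K : E n → ℝ) (z u : E n) : omega0 n (ham K z) u = fderiv ℝ K z u := by
  have hu : u = ∑ i, (u.1 i • ((Pi.single i 1, 0) : E n) + u.2 i • ((0, Pi.single i 1) : E n)) := by
    ext k
    · simp [Prod.fst_sum, Finset.sum_apply, Pi.single_apply]
    · simp [Prod.snd_sum, Finset.sum_apply, Pi.single_apply]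
  conv_rhs => rw [hu]
  simp only [map_sum, map_add, map_smul, smul_eq_mul, omega0, ham]
  rw [← Finset.sum_sub_distrib]
  exact Finset.sum_congr rfl fun i _ => by ring

lemma omega0_add_left (u v w : E n) : omega0 n (u + v) w = omega0 n u w + omega0 n v w := by
  simp only [omega0, Prod.fst_add, Prod.snd_add, Pi.add_apply, add_mul, Finset.sum_add_distrib]
  ring

lemma omega0_smul_left (c : ℝ) (u w : E n) : omega0 n (c • u) w = c * omega0 n u w := by
  simp only [omega0, Prod.smul_fst, Prod.smul_snd, Pi.smul_apply, smul_eq_mul, mul_assoc,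
    ← Finset.mul_sum]
  ring

lemma omega0_antisymm (u w : E n) : omega0 n u w = - omega0 n w u := by
  simp only [omega0, neg_sub]
  congr 1 <;> exact Finset.sum_congr rfl fun i _ => mul_comm _ _

lemma omega0_add_right (u v w : E n) : omega0 n w (u + v) = omega0 n w u + omega0 n w v := by
  rw [omega0_antisymm, omega0_add_left, omega0_antisymm u, omega0_antisymm v]; ring

lemma omega0_smul_right (c : ℝ) (u w : E n) : omega0 n w (c • u) = c * omega0 n w u := by
  rw [omega0_antisymm, omega0_smul_left, omega0_antisymm u]; ring

lemma omega0_self (u : E n) : omega0 n u u = 0 := by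
  linarith [omega0_antisymm u u]

lemma omega0_sub_left (u v w : E n) : omega0 n (u - v) w = omega0 n u w - omega0 n v w := by
  rw [sub_eq_add_neg, omega0_add_left, ← neg_one_smul ℝ v, omega0_smul_left]; ring

/-- The symplectic form is nondegenerate. -/
lemma omega0_nondeg {u : E n} (h : ∀ w, omega0 n u w = 0) : u = 0 := by
  ext k
  · simpa [omega0, Pi.single_apply] using h (0, Pi.single k 1)
  · simpa [omega0, Pi.single_apply] using h (Pi.single k 1, 0)

lemma ham_eq_of_omega0 {K : E n → ℝ} {z v : E n} (h : ∀ u, omega0 n v u = fderiv ℝ K z u) :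
    v = ham K z := by
  rw [← sub_eq_zero]
  refine omega0_nondeg fun w => ?_
  rw [omega0_sub_left, h, omega0_ham, sub_self]

lemma norm_ham_le (K : E n → ℝ) (z : E n) : ‖ham K z‖ ≤ ‖fderiv ℝ K z‖ := by
  have h1 : ∀ v : E n, ‖v‖ ≤ 1 → |fderiv ℝ K z v| ≤ ‖fderiv ℝ K z‖ := fun v hv =>
    ((fderiv ℝ K z).le_opNorm v).trans (mul_le_of_le_one_right (norm_nonneg _) hv)
  have hs : ∀ k : Fin n, ‖(Pi.single k 1 : Fin n → ℝ)‖ = 1 := fun k => by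
    rw [Pi.norm_single]; simp
  rw [ham, Prod.norm_def]
  refine max_le ?_ ?_
  · rw [pi_norm_le_iff_of_nonneg (norm_nonneg _)]
    exact fun i => h1 _ (by rw [Prod.norm_def]; simp [hs])
  · rw [pi_norm_le_iff_of_nonneg (norm_nonneg _)]
    intro i
    rw [norm_neg]
    exact h1 _ (by rw [Prod.norm_def]; simp [hs])

/-- The Hamiltonian vector field depends linearly and boundedly on the differential. -/
lemma norm_ham_sub_le (K : E n → ℝ) (z w : E n) :
    ‖ham K z - ham K w‖ ≤ ‖fderiv ℝ K z - fderiv ℝ K w‖ := by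
  have h1 : ∀ v : E n, ‖v‖ ≤ 1 →
      |fderiv ℝ K z v - fderiv ℝ K w v| ≤ ‖fderiv ℝ K z - fderiv ℝ K w‖ := fun v hv =>
    ((fderiv ℝ K z - fderiv ℝ K w).le_opNorm v).trans
      (mul_le_of_le_one_right (norm_nonneg _) hv)
  have hs : ∀ k : Fin n, ‖(Pi.single k 1 : Fin n → ℝ)‖ = 1 := fun k => by
    rw [Pi.norm_single]; simp
  rw [ham, ham, Prod.norm_def]
  refine max_le ?_ ?_
  · rw [pi_norm_le_iff_of_nonneg (norm_nonneg _)]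
    exact fun i => h1 _ (by rw [Prod.norm_def]; simp [hs])
  · rw [pi_norm_le_iff_of_nonneg (norm_nonneg _)]
    intro i
    have := h1 (Pi.single i 1, 0) (by rw [Prod.norm_def]; simp [hs])
    simp only [Prod.snd_sub, Pi.sub_apply]
    rw [neg_sub_neg, Real.norm_eq_abs, abs_sub_comm]
    exact this

/-- Symplectic maps conjugate Hamiltonian vector fields. -/
lemma fderiv_ham_comp {G : E n → E n} {K : E n → ℝ} {z : E n} (hG : DifferentiableAt ℝ G z)
    (hK : DifferentiableAt ℝ K (G z))
    (hs : ∀ u v, omega0 n (fderiv ℝ G z u) (fderiv ℝ G z v) = omega0 n u v) :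
    fderiv ℝ G z (ham (fun w => K (G w)) z) = ham K (G z) := by
  have hinj : Function.Injective (fderiv ℝ G z) := by
    refine (injective_iff_map_eq_zero _).mpr fun u hu => omega0_nondeg fun w => ?_
    rw [← hs, hu]
    simp [omega0]
  have hsurj : Function.Surjective (fderiv ℝ G z) :=
    LinearMap.surjective_of_injective (f := (fderiv ℝ G z : E n →ₗ[ℝ] E n)) hinj
  refine ham_eq_of_omega0 fun u => ?_
  obtain ⟨v, rfl⟩ := hsurj u
  rw [hs, omega0_ham]
  have h1 : HasFDerivAt (fun w => K (G w)) ((fderiv ℝ K (G z)).comp (fderiv ℝ G z)) z :=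
    hK.hasFDerivAt.comp z hG.hasFDerivAt
  rw [h1.fderiv]
  rfl

/-! ### The symplectic Euler scheme and symplectic changes of coordinates -/

/-- A symplectomorphism `G` maps solutions of the symplectic Euler scheme of `K ∘ G` to approximate
solutions of the Euler scheme of `K`, with an error of second order in the step size. -/
lemma euler_push (G : E n ≃ₜ E n) (hG : ContDiff ℝ ∞ G)
    (hs : ∀ z u v, omega0 n (fderiv ℝ G z u) (fderiv ℝ G z v) = omega0 n u v)
    {K : E n → ℝ} (hK : ContDiff ℝ ∞ K) (hKc : HasCompactSupport K) :
    ∃ C : ℝ, 0 ≤ C ∧ ∀ h : ℝ, 0 < h → h ≤ 1 → ∀ z z' : E n,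
      z' = z + h • ham (fun w => K (G w)) (z.1, z'.2) →
      ‖G z' - G z - h • ham K (G z)‖ ≤ C * h ^ 2 := by
  set k : E n → ℝ := fun w => K (G w) with hk
  have hkd : ContDiff ℝ ∞ k := hK.comp hG
  have hkc : HasCompactSupport k := hKc.comp_homeomorph G
  have hk1 : ContDiff ℝ ∞ (fderiv ℝ k) := hkd.fderiv_right (by simp)
  obtain ⟨L, hL⟩ := hk1.lipschitzWith_of_hasCompactSupport (hkc.fderiv ℝ) (by simp)
  obtain ⟨κ, hκ⟩ := (hkd.continuous_fderiv (by simp)).bounded_above_of_compact_support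
    (hkc.fderiv ℝ)
  have hκ0 : 0 ≤ κ := (norm_nonneg _).trans (hκ 0)
  obtain ⟨ρ0, hρ0⟩ := hkc.isCompact.isBounded.exists_norm_le
  set ρ := max ρ0 0 + κ + 1 with hρ
  have hρpos : 0 < ρ := by have := le_max_right ρ0 0; positivity
  let b : ContDiffBump (0 : E n) := ⟨ρ, ρ + 1, hρpos, by linarith⟩
  set F : E n → E n := fun z => b z • G z with hF
  have hFd : ContDiff ℝ ∞ F := b.contDiff.smul hG
  have hFc : HasCompactSupport F := b.hasCompactSupport.smul_right
  have hF1 : ContDiff ℝ ∞ (fderiv ℝ F) := hFd.fderiv_right (by simp)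
  obtain ⟨L', hL'⟩ := hF1.lipschitzWith_of_hasCompactSupport (hFc.fderiv ℝ) (by simp)
  obtain ⟨κ', hκ'⟩ := (hFd.continuous_fderiv (by simp)).bounded_above_of_compact_support
    (hFc.fderiv ℝ)
  have hκ'0 : 0 ≤ κ' := (norm_nonneg _).trans (hκ' 0)
  have hFG : ∀ z, ‖z‖ < ρ → F =ᶠ[𝓝 z] G := by
    intro z hz
    filter_upwards [Metric.isOpen_ball.mem_nhds (show z ∈ Metric.ball 0 ρ by simpa using hz)]
      with w hw
    simp [hF, b.one_of_mem_closedBall (Metric.ball_subset_closedBall hw)]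
  have hDG : ∀ z, fderiv ℝ G z (ham k z) = ham K (G z) := fun z =>
    fderiv_ham_comp (hG.differentiable (by simp) z) (hK.differentiable (by simp) _) (hs z)
  refine ⟨L' * κ ^ 2 + κ' * (L * κ), by positivity, fun h hh0 hh1 z z' hz => ?_⟩
  set c : E n := (z.1, z'.2) with hc
  have hXn : ∀ w, ‖ham k w‖ ≤ κ := fun w => (norm_ham_le k w).trans (hκ w)
  have hv : ‖z' - z‖ ≤ h * κ := by
    rw [hz, add_sub_cancel_left, norm_smul, Real.norm_eq_abs, abs_of_pos hh0]
    gcongr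
    exact hXn c
  have hcz : ‖c - z‖ ≤ ‖z' - z‖ := by
    rw [Prod.norm_def, Prod.norm_def]
    simp [hc]
  have hcz' : ‖c - z'‖ ≤ ‖z' - z‖ := by
    rw [Prod.norm_def, Prod.norm_def]
    simp [hc, norm_sub_rev]
  by_cases hcs : c ∈ tsupport k
  · have h1 : ‖c‖ ≤ max ρ0 0 := (hρ0 c hcs).trans (le_max_left _ _)
    have hhκ : h * κ ≤ κ := mul_le_of_le_one_left hκ0 hh1
    have h2 : ‖z‖ < ρ := by
      have := norm_sub_norm_le z c
      rw [norm_sub_rev] at this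
      linarith
    have h3 : ‖z'‖ < ρ := by
      have := norm_sub_norm_le z' c
      rw [norm_sub_rev] at this
      linarith
    have h4 := taylor_lipschitz (hFd.differentiable (by simp)) hL' z (z' - z)
    rw [add_sub_cancel, (hFG z' h3).eq_of_nhds, (hFG z h2).eq_of_nhds] at h4
    have h5 : fderiv ℝ F z (z' - z) = h • fderiv ℝ F z (ham k c) := by
      rw [← map_smul]
      congr 1
      rw [sub_eq_iff_eq_add, add_comm]
      exact hz
    have h6 : ham K (G z) = fderiv ℝ F z (ham k z) := by
      rw [(hFG z h2).fderiv_eq, hDG]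
    have h7 : ‖ham k c - ham k z‖ ≤ L * (h * κ) :=
      (norm_ham_sub_le k c z).trans ((hL.norm_sub_le c z).trans (by
        gcongr; exact hcz.trans hv))
    have h8 : G z' - G z - h • ham K (G z) = (G z' - G z - fderiv ℝ F z (z' - z))
        + h • fderiv ℝ F z (ham k c - ham k z) := by
      rw [h5, h6, map_sub, smul_sub]; abel
    rw [h8]
    refine (norm_add_le _ _).trans ?_
    have h9 : ‖h • fderiv ℝ F z (ham k c - ham k z)‖ ≤ h * (κ' * (L * (h * κ))) := by
      rw [norm_smul, Real.norm_eq_abs, abs_of_pos hh0]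
      gcongr
      refine ((fderiv ℝ F z).le_opNorm _).trans ?_
      gcongr
      exact hκ' z
    have h10 : L' * ‖z' - z‖ ^ 2 ≤ L' * (h * κ) ^ 2 := by gcongr
    calc _ ≤ L' * (h * κ) ^ 2 + h * (κ' * (L * (h * κ))) := by linarith
      _ = _ := by ring
  · have h0 : ham k c = 0 := by
      have h1 : fderiv ℝ k c = 0 := by
        by_contra hne
        exact hcs (tsupport_fderiv_subset ℝ (subset_tsupport _ hne))
      have := norm_ham_le k c
      rw [h1, norm_zero] at this
      exact norm_le_zero_iff.mp this
    rw [h0, smul_zero, add_zero] at hz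
    have h1 : c = z := by rw [hc, hz]
    rw [← hDG, ← h1, h0, hz, h1]
    simp
    positivity
end Ham

/-! ### Hamiltonian chords do not escape: the core of the rigidity argument -/

section Core
variable {n : ℕ}

/-- Increment of a function along one approximate Euler step. -/
lemma step_estimate {F : E n → ℝ} (hF : ContDiff ℝ ∞ F) (hFc : HasCompactSupport F)
    (X : E n → E n) {B C : ℝ} (hC0 : 0 ≤ C) (hX : ∀ w, ‖X w‖ ≤ B) :
    ∃ C' : ℝ, 0 ≤ C' ∧ ∀ h : ℝ, 0 < h → h ≤ 1 → ∀ w w' : E n, ‖w' - w - h • X w‖ ≤ C * h ^ 2 →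
      |F w' - F w - h * fderiv ℝ F w (X w)| ≤ C' * h ^ 2 := by
  have hF1 : ContDiff ℝ ∞ (fderiv ℝ F) := hF.fderiv_right (by simp)
  obtain ⟨L, hL⟩ := hF1.lipschitzWith_of_hasCompactSupport (hFc.fderiv ℝ) (by simp)
  obtain ⟨κ, hκ⟩ := (hF.continuous_fderiv (by simp)).bounded_above_of_compact_support
    (hFc.fderiv ℝ)
  have hκ0 : 0 ≤ κ := (norm_nonneg _).trans (hκ 0)
  refine ⟨L * (B + C) ^ 2 + κ * C, by positivity, fun h hh0 hh1 w w' hw => ?_⟩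
  set e := w' - w - h • X w with he
  have hv : ‖w' - w‖ ≤ h * (B + C) := by
    have h1 : w' - w = h • X w + e := by rw [he]; abel
    rw [h1]
    refine (norm_add_le _ _).trans ?_
    have h2 : ‖h • X w‖ ≤ h * B := by
      rw [norm_smul, Real.norm_eq_abs, abs_of_pos hh0]
      gcongr
      exact hX w
    have h3 : C * h ^ 2 ≤ h * C := by nlinarith [mul_nonneg hC0 hh0.le]
    linarith
  have h1 := taylor_lipschitz (hF.differentiable (by simp)) hL w (w' - w)
  rw [add_sub_cancel] at h1
  have h2 : fderiv ℝ F w (w' - w) = h * fderiv ℝ F w (X w) + fderiv ℝ F w e := by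
    rw [he, map_sub (fderiv ℝ F w) (w' - w), map_smul, smul_eq_mul]; ring
  have h3 : |fderiv ℝ F w e| ≤ κ * (C * h ^ 2) := by
    refine ((fderiv ℝ F w).le_opNorm e).trans ?_
    gcongr
    exact hκ w
  have h4 : (L : ℝ) * ‖w' - w‖ ^ 2 ≤ L * (h * (B + C)) ^ 2 := by gcongr
  rw [Real.norm_eq_abs, h2] at h1
  have h5 : F w' - F w - h * fderiv ℝ F w (X w) =
      (F w' - F w - (h * fderiv ℝ F w (X w) + fderiv ℝ F w e)) + fderiv ℝ F w e := by ring
  rw [h5]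
  refine (abs_add_le _ _).trans ?_
  calc _ ≤ L * (h * (B + C)) ^ 2 + κ * (C * h ^ 2) := by linarith
    _ = _ := by ring

/-- Along approximate Euler solutions of a field which near `p` equals `τ cos (H / δ) X_H` and is
too short to leave `B(p, 2R)`, the function `D` grows by a definite amount. Hence such a solution
cannot end at a point of `B(p, R)` where `D` is small. -/
lemma no_escape {H D : E n → ℝ} (hH : ContDiff ℝ ∞ H) (hHc : HasCompactSupport H)
    (hD : ContDiff ℝ ∞ D) (hDc : HasCompactSupport D) {p : E n} {R τ δ C : ℝ} (hR : 0 < R)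
    (hτ : 0 < τ) (hδ : 0 < δ) (hC : 0 ≤ C) (X : E n → E n) (hXR : ∀ w, ‖X w‖ ≤ R / 2)
    (hX : ∀ w ∈ Metric.ball p (2 * R), X w = (τ * Real.cos (H w / δ)) • ham H w)
    (hbr : ∀ w ∈ Metric.ball p (2 * R), 1 / 2 ≤ fderiv ℝ D w (ham H w)) :
    ∃ M0 : ℕ, ∀ M : ℕ, M0 ≤ M → 0 < M → ∀ w : ℕ → E n,
      (∀ i < M, ‖w (i + 1) - w i - (1 / M : ℝ) • X (w i)‖ ≤ C * (1 / M : ℝ) ^ 2) →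
      (w 0 ∈ Metric.ball p (2 * R) → |H (w 0)| ≤ δ / 2 ∧ - (τ / 16) ≤ D (w 0)) →
      w M ∈ Metric.ball p R → τ / 16 ≤ D (w M) := by
  obtain ⟨C1, hC10, hC1⟩ := step_estimate hH hHc X hC hXR
  obtain ⟨C2, hC20, hC2⟩ := step_estimate hD hDc X hC hXR
  obtain ⟨M0, hM0⟩ := exists_nat_gt (2 * C / R + 2 * C1 / δ + 8 * C2 / τ)
  refine ⟨M0, fun M hM hMpos w hw hw0 hwM => ?_⟩
  have hMp : (0 : ℝ) < M := by exact_mod_cast hMpos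
  set h : ℝ := 1 / M with hh
  have hh0 : 0 < h := by positivity
  have hh1 : h ≤ 1 := by rw [hh, div_le_one hMp]; exact_mod_cast hMpos
  have hMh : (M : ℝ) * h = 1 := by rw [hh]; field_simp
  have hbig : 2 * C / R + 2 * C1 / δ + 8 * C2 / τ ≤ M := hM0.le.trans (by exact_mod_cast hM)
  have hCR : C * h ≤ R / 2 := by
    have : 2 * C / R ≤ M := by
      have : 0 ≤ 2 * C1 / δ := by positivity
      have : 0 ≤ 8 * C2 / τ := by positivity
      linarith
    rw [div_le_iff₀ hR] at this
    rw [hh, mul_one_div, div_le_iff₀ hMp]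
    linarith
  have hC1δ : C1 * h ≤ δ / 2 := by
    have : 2 * C1 / δ ≤ M := by
      have : 0 ≤ 2 * C / R := by positivity
      have : 0 ≤ 8 * C2 / τ := by positivity
      linarith
    rw [div_le_iff₀ hδ] at this
    rw [hh, mul_one_div, div_le_iff₀ hMp]
    linarith
  have hC2τ : C2 * h ≤ τ / 8 := by
    have : 8 * C2 / τ ≤ M := by
      have : 0 ≤ 2 * C1 / δ := by positivity
      have : 0 ≤ 2 * C / R := by positivity
      linarith
    rw [div_le_iff₀ hτ] at this
    rw [hh, mul_one_div, div_le_iff₀ hMp]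
    linarith
  -- the step length bounds the distance to the endpoint
  have hstep : ∀ i < M, ‖w (i + 1) - w i‖ ≤ h * R := by
    intro i hi
    have h1 : w (i + 1) - w i = h • X (w i) + (w (i + 1) - w i - h • X (w i)) := by abel
    rw [h1]
    refine (norm_add_le _ _).trans ?_
    have h2 : ‖h • X (w i)‖ ≤ h * (R / 2) := by
      rw [norm_smul, Real.norm_eq_abs, abs_of_pos hh0]
      gcongr
      exact hXR _
    have h3 := hw i hi
    have h4 : C * h ^ 2 ≤ h * (R / 2) := by
      calc C * h ^ 2 = h * (C * h) := by ring
        _ ≤ _ := by gcongr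
    linarith
  have hdist : ∀ j ≤ M, ‖w M - w (M - j)‖ ≤ j * (h * R) := by
    intro j
    induction j with
    | zero => simp
    | succ j ih =>
      intro hj
      have h1 := ih (by omega)
      have h2 := hstep (M - (j + 1)) (by omega)
      rw [show M - (j + 1) + 1 = M - j by omega] at h2
      have h3 : w M - w (M - (j + 1)) = (w M - w (M - j)) + (w (M - j) - w (M - (j + 1))) := by abel
      rw [h3]
      refine (norm_add_le _ _).trans ?_
      push_cast
      linarith
  have hball : ∀ i ≤ M, w i ∈ Metric.ball p (2 * R) := by
    intro i hi
    have h1 := hdist (M - i) (by omega)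
    rw [show M - (M - i) = i by omega] at h1
    have h2 : ((M - i : ℕ) : ℝ) * (h * R) ≤ R := by
      calc ((M - i : ℕ) : ℝ) * (h * R) ≤ M * (h * R) := by
            gcongr
            exact Nat.sub_le _ _
        _ = (M * h) * R := by ring
        _ = R := by rw [hMh, one_mul]
    rw [Metric.mem_ball, dist_eq_norm] at hwM ⊢
    have h3 : w i - p = (w M - p) - (w M - w i) := by abel
    rw [h3]
    refine lt_of_le_of_lt (norm_sub_le _ _) ?_
    linarith
  obtain ⟨hH0, hD0⟩ := hw0 (hball 0 (Nat.zero_le _))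
  have hHi : ∀ i ≤ M, |H (w i)| ≤ δ / 2 + i * (C1 * h ^ 2) := by
    intro i
    induction i with
    | zero => intro _; simpa using hH0
    | succ i ih =>
      intro hi
      have h1 := ih (by omega)
      have h2 := hC1 h hh0 hh1 _ _ (hw i (by omega))
      rw [hX _ (hball i (by omega)), map_smul, ← omega0_ham, omega0_self, smul_zero, mul_zero,
        sub_zero] at h2
      have h3 := abs_add_le (H (w i)) (H (w (i + 1)) - H (w i))
      rw [add_sub_cancel] at h3
      push_cast
      linarith
  have hcos : ∀ i ≤ M, 1 / 2 ≤ Real.cos (H (w i) / δ) := by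
    intro i hi
    have h1 : |H (w i)| ≤ δ := by
      have h2 := hHi i hi
      have h3 : (i : ℝ) * (C1 * h ^ 2) ≤ M * (C1 * h ^ 2) := by gcongr
      have h4 : (M : ℝ) * (C1 * h ^ 2) = (M * h) * (C1 * h) := by ring
      rw [hMh, one_mul] at h4
      linarith
    have h2 : |H (w i) / δ| ≤ 1 := by
      rw [abs_div, abs_of_pos hδ, div_le_one hδ]; exact h1
    have h3 := Real.one_sub_sq_div_two_le_cos (x := H (w i) / δ)
    have h4 : (H (w i) / δ) ^ 2 ≤ 1 := (sq_le_one_iff_abs_le_one _).mpr h2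
    linarith
  have hDi : ∀ i ≤ M, - (τ / 16) + i * (h * (τ / 4) - C2 * h ^ 2) ≤ D (w i) := by
    intro i
    induction i with
    | zero => intro _; simpa using hD0
    | succ i ih =>
      intro hi
      have h1 := ih (by omega)
      have h2 := hC2 h hh0 hh1 _ _ (hw i (by omega))
      rw [hX _ (hball i (by omega)), map_smul, smul_eq_mul] at h2
      have h3 := hcos i (by omega)
      have h4 := hbr _ (hball i (by omega))
      have h5 : τ / 4 ≤ τ * Real.cos (H (w i) / δ) * fderiv ℝ D (w i) (ham H (w i)) := by
        have h6 : 1 / 2 * (1 / 2) ≤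
          Real.cos (H (w i) / δ) * fderiv ℝ D (w i) (ham H (w i)) := by gcongr
        rw [mul_assoc]
        nlinarith
      have h6 : h * (τ / 4) ≤ h * (τ * Real.cos (H (w i) / δ) * fderiv ℝ D (w i) (ham H (w i))) := by
        gcongr
      have h7 := (abs_le.mp h2).1
      push_cast
      linarith
  have h1 := hDi M le_rfl
  have h2 : (M : ℝ) * (h * (τ / 4) - C2 * h ^ 2) = (M * h) * (τ / 4 - C2 * h) := by ring
  rw [h2, hMh, one_mul] at h1
  linarith

/-- `C⁰`-convergence, uniformly on compact sets. -/
def CConv (Ψ : ℕ → E n → E n) (ψ : E n → E n) : Prop :=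
  ∀ S : Set (E n), IsCompact S → ∀ ε : ℝ, 0 < ε →
    ∀ᶠ m in Filter.atTop, ∀ z ∈ S, dist (Ψ m z) (ψ z) < ε

/-- Let `ψ` be a `C⁰`-limit of symplectomorphisms, and let `H`, `D` vanish on the image under `ψ` of
a neighbourhood of `0` in the Lagrangian plane `y = 0`. Then the Poisson bracket of `H` and `D`
cannot equal `1` at `ψ 0`.

Otherwise the flow of a `C⁰`-small function of `H` with derivative of order one would move points
transversally to `D = 0`, while by `discrete_chord` every small Hamiltonian admits chords from the
plane `y = 0` back to points close to the origin. -/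
theorem core (ψ : E n ≃ₜ E n) (Ψ : ℕ → E n ≃ₜ E n) (hΨ : ∀ m, ContDiff ℝ ∞ (Ψ m))
    (hs : ∀ m z u v, omega0 n (fderiv ℝ (Ψ m) z u) (fderiv ℝ (Ψ m) z v) = omega0 n u v)
    (hc : CConv (fun m => Ψ m) ψ) (hc' : CConv (fun m => (Ψ m).symm) ψ.symm)
    {H D : E n → ℝ} (hH : ContDiff ℝ ∞ H) (hHc : HasCompactSupport H)
    (hD : ContDiff ℝ ∞ D) (hDc : HasCompactSupport D) {r : ℝ} (hr : 0 < r)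
    (hH0 : ∀ x : Fin n → ℝ, ‖x‖ < r → H (ψ (x, 0)) = 0)
    (hD0 : ∀ x : Fin n → ℝ, ‖x‖ < r → D (ψ (x, 0)) = 0)
    (hbr : fderiv ℝ D (ψ 0) (ham H (ψ 0)) = 1) : False := by
  set p := ψ 0 with hp
  have hp0 : ψ.symm p = 0 := by simp [hp]
  have hHd := hH.continuous_fderiv (by simp)
  have hDd := hD.continuous_fderiv (by simp)
  have hhamc : Continuous (ham H) := by
    unfold ham
    refine Continuous.prodMk (continuous_pi fun i => ?_) (continuous_pi fun i => ?_)
    · exact hHd.clm_apply continuous_const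
    · exact (hHd.clm_apply continuous_const).neg
  have hbrc : Continuous (fun w => fderiv ℝ D w (ham H w)) := hDd.clm_apply hhamc
  -- the radius `R`
  obtain ⟨R, hR, hRbr, hRψ⟩ : ∃ R > 0, (∀ w ∈ Metric.closedBall p (2 * R),
      1 / 2 ≤ fderiv ℝ D w (ham H w)) ∧
      ∀ w ∈ Metric.closedBall p (2 * R), ‖ψ.symm w‖ < r / 2 := by
    have e1 : ∀ᶠ w in 𝓝 p, 1 / 2 < fderiv ℝ D w (ham H w) :=
      hbrc.continuousAt.eventually (lt_mem_nhds (by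
        change 1 / 2 < fderiv ℝ D p (ham H p); rw [hbr]; norm_num))
    have e2 : ∀ᶠ w in 𝓝 p, ‖ψ.symm w‖ < r / 2 := by
      refine (ψ.symm.continuous.norm).continuousAt.eventually (gt_mem_nhds ?_)
      change ‖ψ.symm p‖ < r / 2
      rw [hp0, norm_zero]; linarith
    obtain ⟨ε, hε, hball⟩ := Metric.eventually_nhds_iff_ball.mp (e1.and e2)
    refine ⟨ε / 4, by positivity, fun w hw => (hball w ?_).1.le, fun w hw => (hball w ?_).2⟩
    all_goals
      rw [Metric.mem_closedBall] at hw
      rw [Metric.mem_ball]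
      linarith
  let ρ : ContDiffBump p := ⟨3 * R, 4 * R, by linarith, by linarith⟩
  have hρs : ContDiff ℝ ∞ ρ := ρ.contDiff
  have hρc : HasCompactSupport ρ := ρ.hasCompactSupport
  obtain ⟨κH, hκH⟩ := hHd.bounded_above_of_compact_support (hHc.fderiv ℝ)
  obtain ⟨κρ, hκρ⟩ := (hρs.continuous_fderiv (by simp)).bounded_above_of_compact_support
    (hρc.fderiv ℝ)
  have hκH0 : 0 ≤ κH := (norm_nonneg _).trans (hκH 0)
  have hκρ0 : 0 ≤ κρ := (norm_nonneg _).trans (hκρ 0)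
  set τ := R / (2 * (κH + κρ + 1)) with hτ
  have hτpos : 0 < τ := by positivity
  have hτR : τ * (κH + κρ) ≤ R / 2 := by
    rw [hτ, div_mul_eq_mul_div, div_le_div_iff₀ (by positivity) (by norm_num)]
    nlinarith
  set U : Set (E n) := Metric.ball p R ∩ {w | D w < τ / 16} with hU
  have hUo : IsOpen U := Metric.isOpen_ball.inter (isOpen_lt hD.continuous continuous_const)
  have hpU : p ∈ U := by
    refine ⟨Metric.mem_ball_self hR, ?_⟩
    have := hD0 0 (by simpa using hr)
    have h0 : ((0 : Fin n → ℝ), (0 : Fin n → ℝ)) = (0 : E n) := rfl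
    rw [h0, ← hp] at this
    simp only [Set.mem_ofPred_eq, this]
    positivity
  obtain ⟨r0, hr0, hr0U⟩ : ∃ r0 > 0, ∀ z ∈ Metric.closedBall (0 : E n) r0, ψ z ∈ U := by
    obtain ⟨ε, hε, hball⟩ := Metric.eventually_nhds_iff_ball.mp
      (ψ.continuous.continuousAt.eventually (hUo.mem_nhds hpU) : ∀ᶠ z in 𝓝 (0 : E n), ψ z ∈ U)
    exact ⟨ε / 2, by positivity, fun z hz => hball z
      (Metric.closedBall_subset_ball (by linarith) hz)⟩
  -- the bump function `f` on the configuration space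
  let b : ContDiffBump (0 : Fin n → ℝ) := ⟨r0 / 2, r0, by linarith, by linarith⟩
  have hbs : ContDiff ℝ ∞ b := b.contDiff
  obtain ⟨β, hβ⟩ := (hbs.continuous_fderiv (by simp)).bounded_above_of_compact_support
    (b.hasCompactSupport.fderiv ℝ)
  have hβ0 : 0 ≤ β := (norm_nonneg _).trans (hβ 0)
  set c := r0 / (β + 1) with hcdef
  have hcpos : 0 < c := by positivity
  have hcβ : c * β ≤ r0 := by
    rw [hcdef, div_mul_eq_mul_div, div_le_iff₀ (by positivity)]
    nlinarith
  set f : (Fin n → ℝ) → ℝ := fun x => c * b x with hf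
  have hfs : ContDiff ℝ ∞ f := contDiff_const.mul hbs
  have hfsup : tsupport f ⊆ Metric.closedBall 0 r0 := by
    refine (tsupport_mul_subset_right (f := fun _ => c) (g := b)).trans ?_
    rw [b.tsupport_eq]
  have hfc : HasCompactSupport f := b.hasCompactSupport.mul_left
  have hff : ∀ x v, fderiv ℝ f x v = c * fderiv ℝ b x v := by
    intro x v
    have : fderiv ℝ f x = c • fderiv ℝ b x := fderiv_const_mul (hbs.differentiable (by simp) x) c
    rw [this]; rfl
  have hf0c : f 0 = c := by
    have : b 0 = 1 := b.one_of_mem_closedBall (by simp [b]; linarith)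
    simp [hf, this]
  -- the small Hamiltonian
  set δ := min 1 (c / (4 * τ)) with hδ
  have hδpos : 0 < δ := lt_min one_pos (by positivity)
  have hδ1 : δ ≤ 1 := min_le_left _ _
  have hδc : 2 * (τ * δ) < c := by
    have : δ ≤ c / (4 * τ) := min_le_right _ _
    rw [le_div_iff₀ (by positivity)] at this
    linarith
  set K' : E n → ℝ := fun w => ρ w * (τ * δ * Real.sin (H w / δ)) with hK'
  have hgs : ContDiff ℝ ∞ (fun w => τ * δ * Real.sin (H w / δ)) :=
    contDiff_const.mul (Real.contDiff_sin.comp (hH.div_const δ))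
  have hgd : ∀ w, HasFDerivAt (fun w => τ * δ * Real.sin (H w / δ))
      ((τ * Real.cos (H w / δ)) • fderiv ℝ H w) w := by
    intro w
    have h1 : HasFDerivAt (fun w => H w / δ) (δ⁻¹ • fderiv ℝ H w) w := by
      simpa [div_eq_mul_inv] using (hH.differentiable (by simp) w).hasFDerivAt.mul_const δ⁻¹
    have h2 := (h1.sin).const_mul (τ * δ)
    refine h2.congr_fderiv ?_
    rw [smul_smul, smul_smul]
    congr 1
    field_simp
  have hK's : ContDiff ℝ ∞ K' := hρs.mul hgs
  have hK'c : HasCompactSupport K' := hρc.mul_right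
  have hK'b : ∀ w, |K' w| ≤ τ * δ := by
    intro w
    simp only [hK']
    rw [abs_mul, abs_mul, abs_of_nonneg ρ.nonneg, abs_of_pos (mul_pos hτpos hδpos)]
    have h1 := Real.abs_sin_le_one (H w / δ)
    have h2 : ρ w ≤ 1 := ρ.le_one
    have h3 : τ * δ * |Real.sin (H w / δ)| ≤ τ * δ :=
      mul_le_of_le_one_right (by positivity) h1
    exact (mul_le_of_le_one_left (by positivity) h2).trans h3
  have hK'X : ∀ w, ‖ham K' w‖ ≤ R / 2 := by
    intro w
    refine (norm_ham_le _ _).trans (le_trans ?_ hτR)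
    have h1 := ((hρs.differentiable (by simp) w).hasFDerivAt.mul (hgd w)).fderiv
    change ‖fderiv ℝ (fun w => ρ w * (τ * δ * Real.sin (H w / δ))) w‖ ≤ _
    have h1' : fderiv ℝ (fun w => ρ w * (τ * δ * Real.sin (H w / δ))) w = _ := h1
    rw [h1']
    refine (norm_add_le _ _).trans ?_
    rw [norm_smul, norm_smul, norm_smul, Real.norm_eq_abs, Real.norm_eq_abs, Real.norm_eq_abs,
      abs_of_nonneg ρ.nonneg, abs_mul, abs_mul, abs_mul, abs_of_pos hτpos, abs_of_pos hδpos]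
    have g1 := Real.abs_cos_le_one (H w / δ)
    have g2 := Real.abs_sin_le_one (H w / δ)
    have g3 : ρ w ≤ 1 := ρ.le_one
    have g4 := hκH w
    have g5 := hκρ w
    have a1 : ρ w * (τ * |Real.cos (H w / δ)| * ‖fderiv ℝ H w‖) ≤ 1 * (τ * 1 * κH) := by
      gcongr
    have a2 : τ * δ * |Real.sin (H w / δ)| * ‖fderiv ℝ ρ w‖ ≤ τ * 1 * 1 * κρ := by
      gcongr
    linarith
  have hK'H : ∀ w ∈ Metric.ball p (2 * R),
      ham K' w = (τ * Real.cos (H w / δ)) • ham H w := by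
    intro w hw
    symm
    refine ham_eq_of_omega0 fun u => ?_
    have e1 : K' =ᶠ[𝓝 w] fun w => τ * δ * Real.sin (H w / δ) := by
      filter_upwards [Metric.isOpen_ball.mem_nhds hw] with v hv
      have : ρ v = 1 := ρ.one_of_mem_closedBall (by
        rw [Metric.mem_ball] at hv
        rw [Metric.mem_closedBall]
        change dist v p ≤ 3 * R
        linarith)
      simp [hK', this]
    rw [e1.fderiv_eq, (hgd w).fderiv, omega0_smul_left, omega0_ham]
    rfl
  -- choose the approximating symplectomorphism
  obtain ⟨LH, hLH⟩ := hH.lipschitzWith_of_hasCompactSupport hHc (by simp)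
  obtain ⟨LD, hLD⟩ := hD.lipschitzWith_of_hasCompactSupport hDc (by simp)
  have ev1 : ∀ᶠ m in Filter.atTop, ∀ z ∈ Metric.closedBall (0 : E n) r0, Ψ m z ∈ U := by
    have hcomp : IsCompact (ψ '' Metric.closedBall (0 : E n) r0) :=
      (isCompact_closedBall _ _).image ψ.continuous
    obtain ⟨ε, hε, hεU⟩ := hcomp.exists_thickening_subset_open hUo (by
      rintro _ ⟨z, hz, rfl⟩; exact hr0U z hz)
    filter_upwards [hc _ (isCompact_closedBall (0 : E n) r0) ε hε] with m hm z hz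
    exact hεU (Metric.mem_thickening_iff.mpr ⟨ψ z, ⟨z, hz, rfl⟩, hm z hz⟩)
  have ev2 := hc' _ (isCompact_closedBall p (2 * R)) (r / 2) (by linarith)
  set ε3 := min (δ / 2 / (LH + 1)) (τ / 16 / (LD + 1)) with hε3
  have hε3pos : 0 < ε3 := lt_min (by positivity) (by positivity)
  have ev3 := hc _ (isCompact_closedBall (0 : E n) r) ε3 hε3pos
  obtain ⟨m, hm1, hm2, hm3⟩ := (ev1.and (ev2.and ev3)).exists
  have hstart : ∀ z : E n, z.2 = 0 → Ψ m z ∈ Metric.ball p (2 * R) →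
      |H (Ψ m z)| ≤ δ / 2 ∧ - (τ / 16) ≤ D (Ψ m z) := by
    intro z hz hzb
    have h1 := hm2 _ (Metric.ball_subset_closedBall hzb)
    have h2 := hRψ _ (Metric.ball_subset_closedBall hzb)
    simp only [Homeomorph.symm_apply_apply] at h1
    have h3 : ‖z‖ < r := by
      have := norm_sub_norm_le z (ψ.symm (Ψ m z))
      rw [dist_eq_norm] at h1
      linarith
    have h4 : z = (z.1, 0) := by ext <;> simp [hz]
    have h5 : ‖z.1‖ < r := lt_of_le_of_lt (norm_fst_le z) h3
    have h6 := hm3 z (by simpa using h3.le)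
    have h7 := hLH.dist_le_mul (Ψ m z) (ψ z)
    have h8 := hLD.dist_le_mul (Ψ m z) (ψ z)
    have hHz : H (ψ z) = 0 := by rw [h4]; exact hH0 _ h5
    have hDz : D (ψ z) = 0 := by rw [h4]; exact hD0 _ h5
    rw [Real.dist_eq, hHz, sub_zero] at h7
    rw [Real.dist_eq, hDz, sub_zero] at h8
    have h9 : dist (Ψ m z) (ψ z) ≤ δ / 2 / (LH + 1) := h6.le.trans (min_le_left _ _)
    have h10 : dist (Ψ m z) (ψ z) ≤ τ / 16 / (LD + 1) := h6.le.trans (min_le_right _ _)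
    rw [le_div_iff₀ (by positivity)] at h9 h10
    have h11 := dist_nonneg (x := Ψ m z) (y := ψ z)
    refine ⟨by nlinarith, ?_⟩
    have h12 := (abs_le.mp h8).1
    nlinarith
  obtain ⟨C, hC0, hC⟩ := euler_push (Ψ m) (hΨ m) (hs m) hK's hK'c
  obtain ⟨M0, hM0⟩ := no_escape hH hHc hD hDc hR hτpos hδpos hC0 (ham K') hK'X hK'H
    (fun w hw => hRbr w (Metric.ball_subset_closedBall hw))
  set M := M0 + 1 with hM
  have hMp : (0 : ℝ) < M := by positivity
  obtain ⟨s, hs01, z, hz0, hzs, hzM, hzM2⟩ := discrete_chord (M := M) (Nat.succ_pos _)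
    (K := fun w => K' (Ψ m w)) ((hK's.comp (hΨ m)).of_le ENat.LEInfty.out)
    (hK'c.comp_homeomorph (Ψ m)) (hfs.of_le ENat.LEInfty.out) hfc
    (fun x => mul_nonneg hcpos.le b.nonneg) (ε := τ * δ) (fun w => hK'b _) (by rw [hf0c]; exact hδc)
  have hzMball : z M ∈ Metric.closedBall (0 : E n) r0 := by
    rw [mem_closedBall_zero_iff, Prod.norm_def]
    refine max_le (by simpa using hfsup hzM) ?_
    rw [pi_norm_le_iff_of_nonneg hr0.le]
    intro k
    rw [hzM2 k, hff, norm_neg, Real.norm_eq_abs, abs_mul, abs_mul, abs_of_nonneg hs01.1,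
      abs_of_pos hcpos]
    have h1 : |fderiv ℝ b (z M).1 (Pi.single k 1)| ≤ β := by
      refine ((fderiv ℝ b (z M).1).le_opNorm _).trans ?_
      rw [Pi.norm_single]
      simpa using hβ _
    calc s * (c * |fderiv ℝ b (z M).1 (Pi.single k 1)|) ≤ 1 * (c * β) := by
          gcongr
          exact hs01.2
      _ ≤ r0 := by rw [one_mul]; exact hcβ
  have hend := hm1 _ hzMball
  have hfin := hM0 M (Nat.le_succ _) (Nat.succ_pos _) (fun i => Ψ m (z i)) (fun i hi => by
    refine hC (1 / M) (by positivity) ?_ _ _ (hzs i hi)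
    rw [div_le_one hMp]
    exact_mod_cast Nat.succ_pos _) (hstart (z 0) hz0) hend.1
  have := hend.2
  simp only [Set.mem_ofPred_eq] at this
  linarith
end Core

/-! ### Charts, tangent spaces and defining functions -/

section Charts
variable {n : ℕ}

/-- The coordinates of `E n`: `Sum.inl i` stands for `x_i` and `Sum.inr i` for `y_i`. -/
def coordL : Fin n ⊕ Fin n → (E n →L[ℝ] ℝ)
  | Sum.inl i => (ContinuousLinearMap.proj i).comp (ContinuousLinearMap.fst ℝ _ _)
  | Sum.inr i => (ContinuousLinearMap.proj i).comp (ContinuousLinearMap.snd ℝ _ _)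

/-- The position of a coordinate in the list `x_0, …, x_{n-1}, y_0, …, y_{n-1}`. -/
def idx : Fin n ⊕ Fin n → ℕ
  | Sum.inl i => i
  | Sum.inr i => n + i

lemma mem_coordSubspace {k : ℕ} {z : E n} :
    z ∈ coordSubspace n k ↔ ∀ c : Fin n ⊕ Fin n, k ≤ idx c → coordL c z = 0 := by
  rw [Sum.forall]
  rfl

lemma ext_coordL {z w : E n} (h : ∀ c, coordL c z = coordL c w) : z = w :=
  Prod.ext (funext fun i => h (Sum.inl i)) (funext fun i => h (Sum.inr i))

/-- A chart of a submanifold, with the description of the submanifold and of its tangent spaces by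
the vanishing of the last coordinates. -/
lemma exists_chart {k : ℕ} {N : Set (E n)} (hN : IsSubmanifold n k N) {p : E n} (hp : p ∈ N) :
    ∃ (V : Set (E n)) (Φ : E n → E n), IsOpen V ∧ p ∈ V ∧ ContDiffOn ℝ ∞ Φ V ∧
      (∀ z ∈ V, (z ∈ N ↔ ∀ c, k ≤ idx c → coordL c (Φ z) = 0)) ∧
      ∀ q ∈ V, q ∈ N → ∃ e : E n ≃L[ℝ] E n, HasFDerivAt Φ (e : E n →L[ℝ] E n) q ∧
        ∀ u, u ∈ TangentSet n N q ↔ ∀ c, k ≤ idx c → coordL c (e u) = 0 := by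
  obtain ⟨V, Φ, hVo, hpV, hΦV, hinj, hΦ, ⟨g, hg, hgΦ⟩, himg⟩ := hN p hp
  have hiff : ∀ z ∈ V, (z ∈ N ↔ ∀ c, k ≤ idx c → coordL c (Φ z) = 0) := by
    intro z hz
    rw [← mem_coordSubspace]
    constructor
    · intro hzN
      have : Φ z ∈ Φ '' (N ∩ V) := ⟨z, ⟨hzN, hz⟩, rfl⟩
      rw [himg] at this
      exact this.1
    · intro h
      have : Φ z ∈ Φ '' (N ∩ V) := by rw [himg]; exact ⟨h, z, hz, rfl⟩
      obtain ⟨w, hw, hwz⟩ := this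
      rw [← hinj hw.2 hz hwz]
      exact hw.1
  refine ⟨V, Φ, hVo, hpV, hΦ, hiff, fun q hq hqN => ?_⟩
  have hd : HasFDerivAt Φ (fderiv ℝ Φ q) q :=
    ((hΦ.contDiffAt (hVo.mem_nhds hq)).differentiableAt (by simp)).hasFDerivAt
  have hgd : HasFDerivAt g (fderiv ℝ g (Φ q)) (Φ q) :=
    ((hg.contDiffAt (hΦV.mem_nhds ⟨q, hq, rfl⟩)).differentiableAt (by simp)).hasFDerivAt
  have hcomp : ∀ u, fderiv ℝ g (Φ q) (fderiv ℝ Φ q u) = u := by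
    have h1 : HasFDerivAt (g ∘ Φ) _ q := hgd.comp q hd
    have h2 : HasFDerivAt (g ∘ Φ) (ContinuousLinearMap.id ℝ (E n)) q := by
      refine (hasFDerivAt_id q).congr_of_eventuallyEq ?_
      filter_upwards [hVo.mem_nhds hq] with z hz
      exact hgΦ z hz
    intro u
    have := congrArg (fun L => L u) (h1.unique h2)
    exact this
  have hinjd : Function.Injective (fderiv ℝ Φ q).toLinearMap :=
    Function.LeftInverse.injective (g := fderiv ℝ g (Φ q)) hcomp
  let e : E n ≃L[ℝ] E n :=
    (LinearEquiv.ofInjectiveEndo (fderiv ℝ Φ q).toLinearMap hinjd).toContinuousLinearEquiv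
  have he : (e : E n →L[ℝ] E n) = fderiv ℝ Φ q := by ext u <;> rfl
  refine ⟨e, he ▸ hd, fun u => ⟨?_, fun h => ?_⟩⟩
  · rintro ⟨γ, hγ0, hγN, hγd⟩ c hc
    have h1 : HasDerivAt (fun t => coordL c (Φ (γ t))) (coordL c (fderiv ℝ Φ q u)) 0 := by
      have h2 : HasDerivAt (Φ ∘ γ) (fderiv ℝ Φ q u) 0 := by
        refine HasFDerivAt.comp_hasDerivAt 0 ?_ hγd
        rw [hγ0]; exact hd
      exact (coordL c).hasFDerivAt.comp_hasDerivAt 0 h2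
    have h3 : HasDerivAt (fun t => coordL c (Φ (γ t))) 0 0 := by
      refine (hasDerivAt_const (0 : ℝ) (0 : ℝ)).congr_of_eventuallyEq ?_
      have h4 : ∀ᶠ t in 𝓝 (0 : ℝ), γ t ∈ V :=
        hγd.continuousAt.eventually (hVo.mem_nhds (by rw [hγ0]; exact hq))
      filter_upwards [hγN, h4] with t ht htV
      exact (hiff _ htV).1 ht c hc
    exact h1.unique h3
  · refine ⟨fun t => g (Φ q + t • fderiv ℝ Φ q u), by simpa using hgΦ q hq, ?_, ?_⟩
    · have hcont : Continuous fun t : ℝ => Φ q + t • fderiv ℝ Φ q u := by fun_prop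
      have h4 : ∀ᶠ t in 𝓝 (0 : ℝ), Φ q + t • fderiv ℝ Φ q u ∈ Φ '' V :=
        hcont.continuousAt.eventually (hΦV.mem_nhds (by beta_reduce; rw [zero_smul, add_zero]; exact ⟨q, hq, rfl⟩))
      filter_upwards [h4] with t ht
      have h5 : Φ q + t • fderiv ℝ Φ q u ∈ Φ '' (N ∩ V) := by
        rw [himg]
        refine ⟨mem_coordSubspace.2 fun c hc => ?_, ht⟩
        have h6 : coordL c (fderiv ℝ Φ q u) = 0 := h c hc
        rw [map_add, map_smul, h6, (hiff q hq).1 hqN c hc]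
        simp
      obtain ⟨w, hw, hwz⟩ := h5
      rw [← hwz, hgΦ w hw.2]
      exact hw.1
    · have h1 : HasDerivAt (fun t : ℝ => Φ q + t • fderiv ℝ Φ q u) (fderiv ℝ Φ q u) 0 := by
        simpa using ((hasDerivAt_id (0 : ℝ)).smul_const (fderiv ℝ Φ q u)).const_add (Φ q)
      have h2 : HasFDerivAt g (fderiv ℝ g (Φ q)) (Φ q + (0 : ℝ) • fderiv ℝ Φ q u) := by
        simpa using hgd
      have h3 := h2.comp_hasDerivAt (0 : ℝ) h1
      rw [hcomp] at h3
      exact h3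

/-- A function smooth near `p` has the germ at `p` of a smooth compactly supported one. -/
lemma exists_cutoff {F G : Type*} [NormedAddCommGroup F] [NormedSpace ℝ F] [FiniteDimensional ℝ F]
    [NormedAddCommGroup G] [NormedSpace ℝ G]
    {V : Set F} (hV : IsOpen V) {p : F} (hp : p ∈ V) {f : F → G} {m : ℕ∞}
    (hf : ContDiffOn ℝ m f V) :
    ∃ g : F → G, ContDiff ℝ m g ∧ HasCompactSupport g ∧ g =ᶠ[𝓝 p] f := by
  obtain ⟨ε, hε, hball⟩ := Metric.isOpen_iff.1 hV p hp
  let ρ : ContDiffBump p := ⟨ε / 4, ε / 2, by linarith, by linarith⟩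
  have hρs : ContDiff ℝ m ρ := ρ.contDiff
  refine ⟨fun z => ρ z • f z, ?_, ρ.hasCompactSupport.smul_right, ?_⟩
  · rw [contDiff_iff_contDiffAt]
    intro z
    by_cases hz : z ∈ V
    · exact hρs.contDiffAt.smul (hf.contDiffAt (hV.mem_nhds hz))
    · have hz2 : z ∈ (Metric.closedBall p (ε / 2))ᶜ := fun h =>
        hz (hball (Metric.closedBall_subset_ball (by linarith) h))
      refine (contDiffAt_const (c := (0 : G))).congr_of_eventuallyEq ?_
      filter_upwards [Metric.isClosed_closedBall.isOpen_compl.mem_nhds hz2] with w hw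
      have : ρ w = 0 := ρ.zero_of_le_dist (by
        have : ¬ dist w p ≤ ε / 2 := hw
        exact (not_le.1 this).le)
      simp [this]
  · filter_upwards [ρ.eventuallyEq_one] with z hz
    simp [show ρ z = 1 from hz]

/-- At a point where a submanifold fails to be coisotropic there are two functions vanishing on it
with nonzero Poisson bracket. -/
lemma exists_bracket {k : ℕ} {N : Set (E n)} (hN : IsSubmanifold n k N) {p : E n} (hp : p ∈ N)
    {v : E n} (hv : v ∈ symplOrth n (TangentSet n N p)) (hv' : v ∉ TangentSet n N p) :
    ∃ H D : E n → ℝ, ContDiff ℝ ∞ H ∧ HasCompactSupport H ∧ ContDiff ℝ ∞ D ∧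
      HasCompactSupport D ∧ (∀ᶠ z in 𝓝 p, z ∈ N → H z = 0 ∧ D z = 0) ∧
      fderiv ℝ D p (ham H p) = 1 := by
  obtain ⟨V, Φ, hVo, hpV, hΦ, hiff, hT⟩ := exists_chart hN hp
  obtain ⟨e, hed, heT⟩ := hT p hpV hp
  obtain ⟨c, hc, hcv⟩ : ∃ c, k ≤ idx c ∧ coordL c (e v) ≠ 0 := by
    by_contra! h
    exact hv' ((heT v).2 h)
  let ωv : E n →L[ℝ] ℝ := LinearMap.toContinuousLinearMap
    { toFun := fun u => omega0 n v u
      map_add' := fun a b => omega0_add_right a b v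
      map_smul' := fun t a => by simp [omega0_smul_right] }
  have hωv : ∀ u, ωv u = omega0 n v u := fun u => rfl
  let LH : E n →L[ℝ] ℝ := ωv.comp (e.symm : E n →L[ℝ] E n)
  let LD : E n →L[ℝ] ℝ := (coordL c (e v))⁻¹ • coordL c
  obtain ⟨H, hHs, hHc, hHe⟩ := exists_cutoff hVo hpV (LH.contDiff.comp_contDiffOn hΦ)
  obtain ⟨D, hDs, hDc, hDe⟩ := exists_cutoff hVo hpV (LD.contDiff.comp_contDiffOn hΦ)
  refine ⟨H, D, hHs, hHc, hDs, hDc, ?_, ?_⟩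
  · filter_upwards [hHe, hDe, hVo.mem_nhds hpV] with z hzH hzD hzV hzN
    have h1 := (hiff z hzV).1 hzN
    rw [hzH, hzD]
    constructor
    · change omega0 n v (e.symm (Φ z)) = 0
      exact hv _ ((heT _).2 (by simpa using h1))
    · change (coordL c (e v))⁻¹ * coordL c (Φ z) = 0
      rw [h1 c hc, mul_zero]
  · have h1 : fderiv ℝ D p = LD.comp (e : E n →L[ℝ] E n) := by
      rw [hDe.fderiv_eq]
      exact (LD.hasFDerivAt.comp p hed).fderiv
    have h2 : fderiv ℝ H p = LH.comp (e : E n →L[ℝ] E n) := by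
      rw [hHe.fderiv_eq]
      exact (LH.hasFDerivAt.comp p hed).fderiv
    have h3 : v = ham H p := ham_eq_of_omega0 fun u => by
      rw [h2]
      change _ = omega0 n v (e.symm (e u))
      simp
    rw [← h3, h1]
    change (coordL c (e v))⁻¹ * coordL c (e v) = 1
    exact inv_mul_cancel₀ hcv

end Charts

/-! ### A boundary value problem -/

section BVP
variable {n : ℕ}

/-- The field `∑ X_j B_j` evaluated along a continuous curve, extended to the real line. -/
def bvpField (B : Fin n → E n → E n) (X : Fin n → ℝ) (c : C(Set.Icc (0 : ℝ) 1, E n)) (t : ℝ) : E n :=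
  ∑ j, X j • B j (c (Set.projIcc 0 1 zero_le_one t))

/-- The curve with velocity `bvpField B X c` which has `x = X` at time `1` and `y = 0` at time `0`. -/
def bvpCurve (B : Fin n → E n → E n) (X : Fin n → ℝ) (c : C(Set.Icc (0 : ℝ) 1, E n)) (s : ℝ) : E n :=
  (X - (∫ t in (0 : ℝ)..1, bvpField B X c t).1, 0) + ∫ t in (0 : ℝ)..s, bvpField B X c t

variable {B : Fin n → E n → E n} {M L : ℝ}

lemma continuous_bvpField (hB : ∀ j, Continuous (B j)) (X : Fin n → ℝ)
    (c : C(Set.Icc (0 : ℝ) 1, E n)) : Continuous (bvpField B X c) := by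
  unfold bvpField
  have h1 : ∀ j, Continuous fun t => B j (c (Set.projIcc 0 1 zero_le_one t)) := fun j =>
    (hB j).comp (c.continuous.comp continuous_projIcc)
  fun_prop

lemma hasDerivAt_bvpCurve (hB : ∀ j, Continuous (B j)) (X : Fin n → ℝ)
    (c : C(Set.Icc (0 : ℝ) 1, E n)) (s : ℝ) :
    HasDerivAt (bvpCurve B X c) (bvpField B X c s) s := by
  unfold bvpCurve
  exact ((continuous_bvpField hB X c).integral_hasStrictDerivAt 0 s).hasDerivAt.const_add _

lemma bvpCurve_dist (hB : ∀ j, Continuous (B j)) (hM : ∀ j z, ‖B j z‖ ≤ M)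
    (hL : ∀ j z w, ‖B j z - B j w‖ ≤ L * ‖z - w‖) (hL0 : 0 ≤ L)
    (X X' : Fin n → ℝ) (c c' : C(Set.Icc (0 : ℝ) 1, E n)) {s : ℝ} (hs : s ∈ Set.Icc (0 : ℝ) 1) :
    ‖bvpCurve B X c s - bvpCurve B X' c' s‖ ≤
      (1 + 2 * (n * M)) * ‖X - X'‖ + 2 * (n * L * ‖X‖) * dist c c' := by
  set κ := n * M * ‖X - X'‖ + n * L * ‖X‖ * dist c c' with hκ
  have hF : ∀ t, ‖bvpField B X c t - bvpField B X' c' t‖ ≤ κ := by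
    intro t
    unfold bvpField
    rw [← Finset.sum_sub_distrib]
    refine (norm_sum_le _ _).trans ?_
    have h1 : ∀ j ∈ (Finset.univ : Finset (Fin n)),
        ‖X j • B j (c (Set.projIcc 0 1 zero_le_one t)) -
          X' j • B j (c' (Set.projIcc 0 1 zero_le_one t))‖ ≤
          M * ‖X - X'‖ + L * ‖X‖ * dist c c' := by
      intro j _
      set z := c (Set.projIcc 0 1 zero_le_one t)
      set w := c' (Set.projIcc 0 1 zero_le_one t)
      have e : X j • B j z - X' j • B j w = (X - X') j • B j w + X j • (B j z - B j w) := by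
        rw [Pi.sub_apply, sub_smul, smul_sub]; abel
      rw [e]
      refine (norm_add_le _ _).trans ?_
      rw [norm_smul, norm_smul]
      have h2 : ‖z - w‖ ≤ dist c c' := by
        rw [← dist_eq_norm]; exact ContinuousMap.dist_apply_le_dist _
      have h3 : ‖(X - X') j‖ ≤ ‖X - X'‖ := norm_le_pi_norm _ _
      have h4 : ‖X j‖ ≤ ‖X‖ := norm_le_pi_norm _ _
      have h5 := hM j w
      have h6 : ‖B j z - B j w‖ ≤ L * dist c c' := (hL j z w).trans (by gcongr)
      calc _ ≤ ‖X - X'‖ * M + ‖X‖ * (L * dist c c') := by gcongr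
        _ = _ := by ring
    refine (Finset.sum_le_sum h1).trans (le_of_eq ?_)
    rw [Finset.sum_const, Finset.card_univ, Fintype.card_fin, nsmul_eq_mul, hκ]
    ring
  have hκ0 : 0 ≤ κ := (norm_nonneg _).trans (hF 0)
  have hG : ∀ s ∈ Set.Icc (0 : ℝ) 1, ‖(∫ t in (0 : ℝ)..s, bvpField B X c t) -
      ∫ t in (0 : ℝ)..s, bvpField B X' c' t‖ ≤ κ := by
    intro s hs
    rw [← intervalIntegral.integral_sub
      ((continuous_bvpField hB X c).intervalIntegrable _ _)
      ((continuous_bvpField hB X' c').intervalIntegrable _ _)]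
    refine (intervalIntegral.norm_integral_le_of_norm_le_const fun t _ => hF t).trans ?_
    rw [sub_zero, abs_of_nonneg hs.1]
    exact mul_le_of_le_one_right hκ0 hs.2
  unfold bvpCurve
  rw [add_sub_add_comm]
  refine (norm_add_le _ _).trans ?_
  have h1 : ‖(X - (∫ t in (0 : ℝ)..1, bvpField B X c t).1, (0 : Fin n → ℝ)) -
      (X' - (∫ t in (0 : ℝ)..1, bvpField B X' c' t).1, 0)‖ ≤ ‖X - X'‖ + κ := by
    rw [Prod.mk_sub_mk, sub_zero, Prod.norm_mk, norm_zero, max_eq_left (norm_nonneg _),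
      sub_sub_sub_comm, ← Prod.fst_sub]
    refine (norm_sub_le _ _).trans ?_
    gcongr
    exact (norm_fst_le _).trans (hG 1 (by simp))
  have h2 := hG s hs
  calc _ ≤ ‖X - X'‖ + κ + κ := by gcongr
    _ = _ := by rw [hκ]; ring

/-- For small `X` there is a curve with velocity `∑ X_j B_j`, `x = X` at time `1` and `y = 0` at
time `0`; it depends on `X` in a Lipschitz way. -/
lemma exists_bvp (hM : ∀ j z, ‖B j z‖ ≤ M) (hM0 : 0 ≤ M)
    (hL : ∀ j z w, ‖B j z - B j w‖ ≤ L * ‖z - w‖) (hL0 : 0 ≤ L) :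
    ∃ r > 0, ∃ C : ℝ, 0 ≤ C ∧ ∃ c : (Fin n → ℝ) → ℝ → E n,
      (∀ X, Continuous (c X)) ∧ (∀ s, c 0 s = 0) ∧
      ∀ X, ‖X‖ ≤ r →
        (∀ s ∈ Set.Icc (0 : ℝ) 1, HasDerivAt (c X) (∑ j, X j • B j (c X s)) s) ∧
        (c X 1).1 = X ∧ (c X 0).2 = 0 ∧
        ∀ X', ‖X'‖ ≤ r → ∀ s ∈ Set.Icc (0 : ℝ) 1, ‖c X s - c X' s‖ ≤ C * ‖X - X'‖ := by
  have hB : ∀ j, Continuous (B j) := fun j =>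
    (LipschitzWith.of_dist_le_mul (K := ⟨L, hL0⟩) fun z w => by
      rw [dist_eq_norm, dist_eq_norm]; exact hL j z w).continuous
  let T : (Fin n → ℝ) → C(Set.Icc (0 : ℝ) 1, E n) → C(Set.Icc (0 : ℝ) 1, E n) := fun X c =>
    ⟨fun s => bvpCurve B X c s,
      (continuous_iff_continuousAt.2 fun s => (hasDerivAt_bvpCurve hB X c s).continuousAt).comp
        continuous_subtype_val⟩
  set r : ℝ := 1 / (4 * (n * L + 1)) with hr
  have hnL : (0 : ℝ) ≤ n * L := by positivity
  have hr0 : 0 < r := by positivity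
  have hrL : n * L * r ≤ 1 / 4 := by
    rw [hr, mul_one_div, div_le_div_iff₀ (by positivity) (by norm_num)]
    linarith
  have hT : ∀ X X', ‖X‖ ≤ r → ∀ c c', dist (T X c) (T X' c') ≤
      (1 + 2 * (n * M)) * ‖X - X'‖ + 1 / 2 * dist c c' := by
    intro X X' hX c c'
    rw [ContinuousMap.dist_le (by positivity)]
    intro s
    rw [dist_eq_norm]
    refine (bvpCurve_dist hB hM hL hL0 X X' c c' s.2).trans ?_
    have h1 : n * L * ‖X‖ ≤ 1 / 4 := (mul_le_mul_of_nonneg_left hX hnL).trans hrL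
    have h2 : 2 * (n * L * ‖X‖) ≤ 1 / 2 := by linarith
    gcongr
  have hfix : ∀ X, ∃ c, ‖X‖ ≤ r → T X c = c := by
    intro X
    by_cases hX : ‖X‖ ≤ r
    · have : ContractingWith (1 / 2 : NNReal) (T X) := by
        refine ⟨by rw [← NNReal.coe_lt_coe]; norm_num, LipschitzWith.of_dist_le_mul fun c c' => ?_⟩
        have := hT X X hX c c'
        rw [sub_self, norm_zero, mul_zero, zero_add] at this
        simpa using this
      exact ⟨this.fixedPoint, fun _ => this.fixedPoint_isFixedPt⟩
    · exact ⟨0, fun h => absurd h hX⟩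
  choose c hc using hfix
  have hproj : ∀ X, ‖X‖ ≤ r → ∀ s (hs : s ∈ Set.Icc (0 : ℝ) 1),
      bvpCurve B X (c X) s = c X ⟨s, hs⟩ := by
    intro X hX s hs
    conv_rhs => rw [← hc X hX]
    rfl
  refine ⟨r, hr0, 2 * (1 + 2 * (n * M)), by positivity, fun X => bvpCurve B X (c X), fun X => ?_,
    fun s => ?_, fun X hX => ⟨fun s hs => ?_, ?_, ?_, fun X' hX' s hs => ?_⟩⟩
  · exact continuous_iff_continuousAt.2 fun s => (hasDerivAt_bvpCurve hB X _ s).continuousAt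
  · simp [bvpCurve, bvpField]
  · have h1 := hasDerivAt_bvpCurve hB X (c X) s
    beta_reduce
    rw [hproj X hX s hs]
    have h2 : bvpField B X (c X) s = ∑ j, X j • B j (c X ⟨s, hs⟩) := by
      unfold bvpField
      rw [Set.projIcc_of_mem zero_le_one hs]
    rwa [h2] at h1
  · simp [bvpCurve]
  · simp [bvpCurve]
  · have h1 := hT X X' hX (c X) (c X')
    rw [hc X hX, hc X' hX'] at h1
    beta_reduce
    rw [hproj X hX s hs, hproj X' hX' s hs, ← dist_eq_norm]
    refine (ContinuousMap.dist_apply_le_dist _).trans ?_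
    linarith

end BVP

/-! ### A Lagrangian graph inside a coisotropic graph -/

section Generating
variable {n : ℕ}

lemma HasDerivAt.fst_apply {γ : ℝ → E n} {v : E n} {s : ℝ} (h : HasDerivAt γ v s) (i : Fin n) :
    HasDerivAt (fun s => (γ s).1 i) (v.1 i) s :=
  (coordL (Sum.inl i)).hasFDerivAt.comp_hasDerivAt s h

lemma HasDerivAt.snd_apply {γ : ℝ → E n} {v : E n} {s : ℝ} (h : HasDerivAt γ v s) (i : Fin n) :
    HasDerivAt (fun s => (γ s).2 i) (v.2 i) s :=
  (coordL (Sum.inr i)).hasFDerivAt.comp_hasDerivAt s h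

lemma abs_fst_le (z : E n) (i : Fin n) : |z.1 i| ≤ ‖z‖ :=
  (norm_le_pi_norm z.1 i).trans (norm_fst_le z)

lemma abs_snd_le (z : E n) (i : Fin n) : |z.2 i| ≤ ‖z‖ :=
  (norm_le_pi_norm z.2 i).trans (norm_snd_le z)

/-- First variation of the action `∫ ⟨y, dx⟩`. -/
lemma first_variation {γ γ' ξ ξ' : ℝ → E n} (hγ : Continuous γ) (hγ' : Continuous γ')
    (hξ : Continuous ξ) (hξ' : Continuous ξ')
    (hd : ∀ s ∈ Set.Icc (0 : ℝ) 1, HasDerivAt γ (ξ s) s)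
    (hd' : ∀ s ∈ Set.Icc (0 : ℝ) 1, HasDerivAt γ' (ξ' s) s)
    {δ C₁ C₂ C₃ : ℝ} 
    (h1 : ∀ s ∈ Set.Icc (0 : ℝ) 1, ‖γ' s - γ s‖ ≤ C₁ * δ)
    (h2 : ∀ s ∈ Set.Icc (0 : ℝ) 1, ‖ξ' s - ξ s‖ ≤ C₂ * δ)
    (h3 : ∀ s ∈ Set.Icc (0 : ℝ) 1, |omega0 n (ξ s) (γ' s - γ s)| ≤ C₃ * δ ^ 2)
    (h0 : ∑ i, (γ 0).2 i * (γ' 0 - γ 0).1 i = 0) :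
    |(∫ s in (0 : ℝ)..1, ∑ i, (γ' s).2 i * (ξ' s).1 i) - (∫ s in (0 : ℝ)..1, ∑ i, (γ s).2 i * (ξ s).1 i)
      - ∑ i, (γ 1).2 i * (γ' 1 - γ 1).1 i| ≤ (n * (C₁ * C₂) + C₃) * δ ^ 2 := by
  have ha : Continuous fun s => ∑ i, (γ s).2 i * (ξ s).1 i := by fun_prop
  have ha' : Continuous fun s => ∑ i, (γ' s).2 i * (ξ' s).1 i := by fun_prop
  set f : ℝ → ℝ := fun t => (∫ s in (0 : ℝ)..t, ∑ i, (γ' s).2 i * (ξ' s).1 i) -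
    (∫ s in (0 : ℝ)..t, ∑ i, (γ s).2 i * (ξ s).1 i) - ∑ i, (γ t).2 i * (γ' t - γ t).1 i with hf
  have hfd : ∀ s ∈ Set.Icc (0 : ℝ) 1, HasDerivAt f (omega0 n (ξ s) (γ' s - γ s) +
      ∑ i, (γ' s - γ s).2 i * (ξ' s - ξ s).1 i) s := by
    intro s hs
    have e1 := (ha'.integral_hasStrictDerivAt 0 s).hasDerivAt
    have e2 := (ha.integral_hasStrictDerivAt 0 s).hasDerivAt
    have e3 : HasDerivAt (fun t => ∑ i, (γ t).2 i * (γ' t - γ t).1 i)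
        (∑ i, ((ξ s).2 i * (γ' s - γ s).1 i + (γ s).2 i * (ξ' s - ξ s).1 i)) s := by
      refine HasDerivAt.fun_sum fun i _ => ?_
      exact (HasDerivAt.snd_apply (hd s hs) i).mul
        (HasDerivAt.fst_apply ((hd' s hs).sub (hd s hs)) i)
    refine ((e1.sub e2).sub e3).congr_deriv ?_
    simp only [omega0, ← Finset.sum_sub_distrib, ← Finset.sum_add_distrib]
    refine Finset.sum_congr rfl fun i _ => ?_
    simp only [Prod.fst_sub, Prod.snd_sub, Pi.sub_apply]
    ring
  have hb : ∀ s ∈ Set.Ico (0 : ℝ) 1, ‖omega0 n (ξ s) (γ' s - γ s) +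
      ∑ i, (γ' s - γ s).2 i * (ξ' s - ξ s).1 i‖ ≤ (n * (C₁ * C₂) + C₃) * δ ^ 2 := by
    intro s hs
    have hs' := Set.Ico_subset_Icc_self hs
    refine (norm_add_le _ _).trans ?_
    have g1 : ‖∑ i, (γ' s - γ s).2 i * (ξ' s - ξ s).1 i‖ ≤ n * ((C₁ * δ) * (C₂ * δ)) := by
      refine (norm_sum_le _ _).trans ?_
      have g2 : ∀ i ∈ (Finset.univ : Finset (Fin n)),
          ‖(γ' s - γ s).2 i * (ξ' s - ξ s).1 i‖ ≤ (C₁ * δ) * (C₂ * δ) := by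
        intro i _
        rw [norm_mul]
        have k1 := (abs_snd_le (γ' s - γ s) i).trans (h1 s hs')
        have k2 := (abs_fst_le (ξ' s - ξ s) i).trans (h2 s hs')
        exact mul_le_mul k1 k2 (norm_nonneg _) ((abs_nonneg _).trans k1)
      refine (Finset.sum_le_sum g2).trans (le_of_eq ?_)
      simp
    have g3 := h3 s hs'
    rw [← Real.norm_eq_abs] at g3
    calc _ ≤ C₃ * δ ^ 2 + n * ((C₁ * δ) * (C₂ * δ)) := add_le_add g3 g1
      _ = _ := by ring
  have := norm_image_sub_le_of_norm_deriv_le_segment_01'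
    (fun s hs => (hfd s hs).hasDerivWithinAt) hb
  have hf0 : f 0 = 0 := by
    simp only [hf, intervalIntegral.integral_same, h0, sub_zero]
  rw [hf0, sub_zero] at this
  exact this

/-- The projection setting the coordinates `y_j`, `j ∈ J`, to zero. -/
def zeroJ (J : Finset (Fin n)) : E n →L[ℝ] E n := LinearMap.toContinuousLinearMap
  { toFun := fun z => (z.1, fun i => if i ∈ J then 0 else z.2 i)
    map_add' := fun z w => by
      ext i
      · rfl
      · by_cases h : i ∈ J <;> simp [h]
    map_smul' := fun t z => by
      ext i
      · rfl
      · by_cases h : i ∈ J <;> simp [h] }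

@[simp] lemma zeroJ_fst (J : Finset (Fin n)) (z : E n) : (zeroJ J z).1 = z.1 := rfl

lemma zeroJ_snd (J : Finset (Fin n)) (z : E n) (i : Fin n) :
    (zeroJ J z).2 i = if i ∈ J then 0 else z.2 i := rfl

@[simp] lemma zeroJ_zeroJ (J : Finset (Fin n)) (z : E n) : zeroJ J (zeroJ J z) = zeroJ J z := by
  ext i
  · rfl
  · simp only [zeroJ_snd]
    split_ifs <;> rfl

lemma norm_zeroJ_le (J : Finset (Fin n)) (z : E n) : ‖zeroJ J z‖ ≤ ‖z‖ := by
  rw [Prod.norm_def]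
  refine max_le (norm_fst_le z) ?_
  rw [pi_norm_le_iff_of_nonneg (norm_nonneg _)]
  intro i
  rw [zeroJ_snd]
  split_ifs
  · simp
  · exact abs_snd_le z i

/-- The defining functions `y_j - g_j` of a graph. -/
def hfun (g : Fin n → E n → ℝ) (j : Fin n) (z : E n) : ℝ := z.2 j - g j z

variable {J : Finset (Fin n)} {g : Fin n → E n → ℝ}

lemma hasFDerivAt_hfun (hg : ∀ j, Differentiable ℝ (g j)) (j : Fin n) (z : E n) :
    HasFDerivAt (hfun g j) (coordL (Sum.inr j) - fderiv ℝ (g j) z) z :=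
  (coordL (Sum.inr j)).hasFDerivAt.sub (hg j z).hasFDerivAt

lemma fderiv_hfun (hg : ∀ j, Differentiable ℝ (g j)) (j : Fin n) (z u : E n) :
    fderiv ℝ (hfun g j) z u = u.2 j - fderiv ℝ (g j) z u := by
  rw [(hasFDerivAt_hfun hg j z).fderiv]; rfl

lemma fderiv_zeroJ (hg : ∀ j, Differentiable ℝ (g j)) (hgP : ∀ j z, g j (zeroJ J z) = g j z)
    (j : Fin n) (z u : E n) : fderiv ℝ (g j) z u = fderiv ℝ (g j) (zeroJ J z) (zeroJ J u) := by
  have h1 : HasFDerivAt (g j ∘ zeroJ J) ((fderiv ℝ (g j) (zeroJ J z)).comp (zeroJ J)) z :=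
    (hg j _).hasFDerivAt.comp z (zeroJ J).hasFDerivAt
  have h2 : g j ∘ zeroJ J = g j := funext (hgP j)
  rw [h2] at h1
  rw [h1.fderiv]; rfl

lemma ham_hfun_zeroJ (hg : ∀ j, Differentiable ℝ (g j)) (hgP : ∀ j z, g j (zeroJ J z) = g j z)
    (j : Fin n) (z : E n) : ham (hfun g j) (zeroJ J z) = ham (hfun g j) z := by
  refine (ham_eq_of_omega0 fun u => ?_)
  rw [omega0_ham, fderiv_hfun hg, fderiv_hfun hg, fderiv_zeroJ hg hgP, fderiv_zeroJ hg hgP _ z,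
    zeroJ_zeroJ]

/-- The functions `y_j - g_j` generate fields with constant components in the directions `x_i`,
`i ∈ J`. -/
lemma ham_hfun_fst (hg : ∀ j, Differentiable ℝ (g j)) (hgP : ∀ j z, g j (zeroJ J z) = g j z)
    (j : Fin n) (z : E n) {i : Fin n} (hi : i ∈ J) :
    (ham (hfun g j) z).1 i = if i = j then 1 else 0 := by
  change fderiv ℝ (hfun g j) z (0, Pi.single i 1) = _
  rw [fderiv_hfun hg, fderiv_zeroJ hg hgP]
  have : zeroJ J ((0 : Fin n → ℝ), (Pi.single i 1 : Fin n → ℝ)) = 0 := by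
    ext k
    · rfl
    · rw [zeroJ_snd]
      split_ifs with h
      · rfl
      · have : k ≠ i := fun e => h (e ▸ hi)
        simp [this]
  rw [this, map_zero, sub_zero]
  simp [Pi.single_apply, eq_comm]

end Generating

section Generating
variable {n : ℕ} {J : Finset (Fin n)} {g : Fin n → E n → ℝ}

/-- The point of the graph `y_j = g_j`, `j ∈ J`, over a given point. -/
def graphLift (J : Finset (Fin n)) (g : Fin n → E n → ℝ) (z : E n) : E n :=
  (z.1, fun i => if i ∈ J then g i z else z.2 i)

lemma zeroJ_graphLift (z : E n) : zeroJ J (graphLift J g z) = zeroJ J z := by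
  ext i
  · rfl
  · simp only [zeroJ_snd, graphLift]
    split_ifs <;> rfl

lemma norm_coordL_le (c : Fin n ⊕ Fin n) : ‖(coordL c : E n →L[ℝ] ℝ)‖ ≤ 1 := by
  refine ContinuousLinearMap.opNorm_le_bound _ zero_le_one fun z => ?_
  rw [one_mul]
  rcases c with i | i
  · exact abs_fst_le z i
  · exact abs_snd_le z i

lemma norm_fderiv_hfun_le (hg : ∀ j, Differentiable ℝ (g j)) {κ : ℝ}
    (hκ : ∀ j z, ‖fderiv ℝ (g j) z‖ ≤ κ) (j : Fin n) (z : E n) :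
    ‖fderiv ℝ (hfun g j) z‖ ≤ 1 + κ := by
  rw [(hasFDerivAt_hfun hg j z).fderiv]
  exact (norm_sub_le _ _).trans (add_le_add (norm_coordL_le _) (hκ j z))

lemma lipschitz_fderiv_hfun (hg : ∀ j, Differentiable ℝ (g j)) {L : NNReal}
    (hL : ∀ j, LipschitzWith L (fderiv ℝ (g j))) (j : Fin n) :
    LipschitzWith L (fderiv ℝ (hfun g j)) := by
  refine LipschitzWith.of_dist_le_mul fun z w => ?_
  rw [(hasFDerivAt_hfun hg j z).fderiv, (hasFDerivAt_hfun hg j w).fderiv, dist_sub_left]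
  exact (hL j).dist_le_mul z w

lemma norm_graphLift_sub_le (hg : ∀ j, Differentiable ℝ (g j)) {κ : ℝ} (hκ0 : 0 ≤ κ)
    (hκ : ∀ j z, ‖fderiv ℝ (g j) z‖ ≤ κ) (z w : E n) :
    ‖graphLift J g z - graphLift J g w‖ ≤ (1 + κ) * ‖z - w‖ := by
  have h1 : ‖z - w‖ ≤ (1 + κ) * ‖z - w‖ := by nlinarith [norm_nonneg (z - w)]
  rw [Prod.norm_def]
  refine max_le ((norm_fst_le (z - w)).trans h1) ?_
  rw [pi_norm_le_iff_of_nonneg (by positivity)]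
  intro i
  change ‖(if i ∈ J then g i z else z.2 i) - (if i ∈ J then g i w else w.2 i)‖ ≤ _
  split_ifs
  · refine (convex_univ.norm_image_sub_le_of_norm_fderiv_le (f := g i) (𝕜 := ℝ)
      (fun x _ => hg i x) (fun x _ => hκ i x) (Set.mem_univ w) (Set.mem_univ z)).trans ?_
    nlinarith [norm_nonneg (z - w)]
  · exact (abs_snd_le (z - w) i).trans h1

/-- A lift to the graph of a curve moving along the projected characteristic field is a
characteristic curve of the graph. -/
lemma hasDerivAt_graphLift (hg : ∀ j, Differentiable ℝ (g j))
    (hgP : ∀ j z, g j (zeroJ J z) = g j z) {c : ℝ → E n} {s : ℝ} {X : Fin n → ℝ}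
    (hc : HasDerivAt c (zeroJ J (∑ j ∈ J, X j • ham (hfun g j) (graphLift J g (c s)))) s)
    (hbr : ∀ i ∈ J, ∀ j ∈ J, fderiv ℝ (hfun g i) (graphLift J g (c s))
      (ham (hfun g j) (graphLift J g (c s))) = 0) :
    HasDerivAt (fun s => graphLift J g (c s))
      (∑ j ∈ J, X j • ham (hfun g j) (graphLift J g (c s))) s := by
  set ξ := ∑ j ∈ J, X j • ham (hfun g j) (graphLift J g (c s)) with hξ
  refine HasDerivAt.prodMk (f₁ := fun s => (c s).1) (f₁' := ξ.1) (f₂' := ξ.2)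
    (f₂ := fun s i => if i ∈ J then g i (c s) else (c s).2 i) ?_ ?_
  · exact hasDerivAt_pi.2 fun i => HasDerivAt.fst_apply hc i
  · refine hasDerivAt_pi.2 fun i => ?_
    by_cases hi : i ∈ J
    · simp only [hi, if_true]
      have h1 : HasDerivAt (fun s => g i (c s)) (fderiv ℝ (g i) (c s) (zeroJ J ξ)) s :=
        (hg i _).hasFDerivAt.comp_hasDerivAt s hc
      refine h1.congr_deriv ?_
      have h2 : fderiv ℝ (hfun g i) (graphLift J g (c s)) ξ = 0 := by
        rw [hξ, map_sum]
        refine Finset.sum_eq_zero fun j hj => ?_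
        rw [map_smul, hbr i hi j hj, smul_zero]
      rw [fderiv_hfun hg, fderiv_zeroJ hg hgP, zeroJ_graphLift, sub_eq_zero] at h2
      rw [fderiv_zeroJ hg hgP, zeroJ_zeroJ, ← h2]
    · simp only [hi, if_false]
      refine (HasDerivAt.snd_apply hc i).congr_deriv ?_
      rw [zeroJ_snd, if_neg hi]

/-- A graph `y_j = g_j`, `j ∈ J`, whose defining functions Poisson commute along it contains the
graph of the differential of a `C¹` function. It is swept out by the characteristic curves issuing
from the points with `x_j = 0` (`j ∈ J`) and `y_i = 0` (`i ∉ J`), and the function is the action of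
these curves. -/
theorem exists_generating (hg : ∀ j, Differentiable ℝ (g j)) (hgP : ∀ j z, g j (zeroJ J z) = g j z)
    {κ : ℝ} (hκ0 : 0 ≤ κ) (hκ : ∀ j z, ‖fderiv ℝ (g j) z‖ ≤ κ) {L : NNReal}
    (hL : ∀ j, LipschitzWith L (fderiv ℝ (g j))) {N U : Set (E n)} (hU : U ∈ 𝓝 0)
    (hN : ∀ z ∈ U, (z ∈ N ↔ ∀ j ∈ J, z.2 j = g j z)) (h0 : 0 ∈ N)
    (hbr : ∀ z ∈ U, z ∈ N → ∀ i ∈ J, ∀ j ∈ J, fderiv ℝ (hfun g i) z (ham (hfun g j) z) = 0) :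
    ∃ r > 0, ∃ (S : (Fin n → ℝ) → ℝ) (Y : (Fin n → ℝ) → (Fin n → ℝ)),
      (∀ X, ‖X‖ < r → HasFDerivAt S
        (∑ i, Y X i • (ContinuousLinearMap.proj i : (Fin n → ℝ) →L[ℝ] ℝ)) X) ∧
      ContinuousOn Y (Metric.ball 0 r) ∧ Y 0 = 0 ∧ ∀ X, ‖X‖ < r → (X, Y X) ∈ N := by
  have hham : ∀ j z w, ‖ham (hfun g j) z - ham (hfun g j) w‖ ≤ L * ‖z - w‖ := by
    intro j z w
    refine (norm_ham_sub_le _ _ _).trans ?_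
    rw [← dist_eq_norm, ← dist_eq_norm]
    exact (lipschitz_fderiv_hfun hg hL j).dist_le_mul z w
  have hhamb : ∀ j z, ‖ham (hfun g j) z‖ ≤ 1 + κ := fun j z =>
    (norm_ham_le _ _).trans (norm_fderiv_hfun_le hg hκ j z)
  have hhamc : ∀ j, Continuous (ham (hfun g j)) := fun j =>
    (LipschitzWith.of_dist_le_mul (K := L) fun z w => by
      rw [dist_eq_norm, dist_eq_norm]; exact hham j z w).continuous
  set B : Fin n → E n → E n := fun j z => if j ∈ J then zeroJ J (ham (hfun g j) z) else 0 with hB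
  obtain ⟨r₀, hr₀, C, hC0, c, hcc, hc0, hc⟩ := exists_bvp (B := B) (M := 1 + κ) (L := L)
    (fun j z => by
      simp only [hB]
      split_ifs
      · exact (norm_zeroJ_le _ _).trans (hhamb j z)
      · rw [norm_zero]; linarith) (by linarith)
    (fun j z w => by
      simp only [hB]
      split_ifs
      · rw [← map_sub]
        exact (norm_zeroJ_le _ _).trans (hham j z w)
      · rw [sub_zero, norm_zero]; positivity) L.2
  set γ : (Fin n → ℝ) → ℝ → E n := fun X s => graphLift J g (c X s) with hγ
  set ξ : (Fin n → ℝ) → ℝ → E n := fun X s => ∑ j ∈ J, X j • ham (hfun g j) (γ X s) with hξ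
  have hγc : ∀ X, Continuous (γ X) := fun X => by
    have : Continuous (graphLift J g) :=
      (LipschitzWith.of_dist_le_mul (K := ⟨1 + κ, by linarith⟩) fun z w => by
        rw [dist_eq_norm, dist_eq_norm]; exact norm_graphLift_sub_le hg hκ0 hκ z w).continuous
    exact this.comp (hcc X)
  have hξc : ∀ X, Continuous (ξ X) := fun X =>
    continuous_finsetSum _ fun j _ => ((hhamc j).comp (hγc X)).const_smul (X j)
  set C₁ := (1 + κ) * C with hC₁
  have hC₁0 : 0 ≤ C₁ := by positivity
  have hγL : ∀ X, ‖X‖ ≤ r₀ → ∀ X', ‖X'‖ ≤ r₀ → ∀ s ∈ Set.Icc (0 : ℝ) 1,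
      ‖γ X s - γ X' s‖ ≤ C₁ * ‖X - X'‖ := by
    intro X hX X' hX' s hs
    refine (norm_graphLift_sub_le hg hκ0 hκ _ _).trans ?_
    rw [hC₁, mul_assoc]
    gcongr
    exact (hc X hX).2.2.2 X' hX' s hs
  have hg0 : graphLift J g 0 = 0 := by
    have := (hN 0 (mem_of_mem_nhds hU)).1 h0
    ext i
    · rfl
    · simp only [graphLift]
      split_ifs with hi
      · exact (this i hi).symm
      · rfl
  have hγ0 : ∀ s, γ 0 s = 0 := fun s => by simp only [hγ, hc0, hg0]
  -- the curves stay in the good neighbourhood for small `X`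
  obtain ⟨ε, hε, hεU⟩ := Metric.mem_nhds_iff.1 hU
  set r := min r₀ (ε / (C₁ + 1)) with hr
  have hr0 : 0 < r := lt_min hr₀ (by positivity)
  have hγU : ∀ X, ‖X‖ < r → ∀ s ∈ Set.Icc (0 : ℝ) 1, γ X s ∈ U := by
    intro X hX s hs
    refine hεU ?_
    have h1 := hγL X (hX.le.trans (min_le_left _ _)) 0 (by rw [norm_zero]; exact hr₀.le) s hs
    rw [hγ0, sub_zero, sub_zero] at h1
    rw [mem_ball_zero_iff]
    have h2 : ‖X‖ < ε / (C₁ + 1) := hX.trans_le (min_le_right _ _)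
    rw [lt_div_iff₀ (by positivity)] at h2
    nlinarith [norm_nonneg X]
  have hγg : ∀ X s, ∀ j ∈ J, (γ X s).2 j = g j (γ X s) := by
    intro X s j hj
    rw [← hgP j (γ X s), hγ]
    simp only [zeroJ_graphLift, hgP]
    simp [graphLift, hj]
  have hγN : ∀ X, ‖X‖ < r → ∀ s ∈ Set.Icc (0 : ℝ) 1, γ X s ∈ N := fun X hX s hs =>
    (hN _ (hγU X hX s hs)).2 (hγg X s)
  have hsum : ∀ X s, ∑ j, X j • B j (c X s) = zeroJ J (ξ X s) := by
    intro X s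
    simp only [hξ, map_sum, map_smul, hB]
    have : ∀ j, X j • (if j ∈ J then zeroJ J (ham (hfun g j) (c X s)) else 0) =
        if j ∈ J then X j • zeroJ J (ham (hfun g j) (γ X s)) else 0 := by
      intro j
      split_ifs
      · rw [← ham_hfun_zeroJ hg hgP j (γ X s), hγ]
        simp only [zeroJ_graphLift, ham_hfun_zeroJ hg hgP]
      · rw [smul_zero]
    rw [Finset.sum_congr rfl fun j _ => this j, Finset.sum_ite_mem, Finset.univ_inter]
  have hγd : ∀ X, ‖X‖ < r → ∀ s ∈ Set.Icc (0 : ℝ) 1, HasDerivAt (γ X) (ξ X s) s := by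
    intro X hX s hs
    have h1 := (hc X (hX.le.trans (min_le_left _ _))).1 s hs
    rw [hsum] at h1
    exact hasDerivAt_graphLift hg hgP h1 (hbr _ (hγU X hX s hs) (hγN X hX s hs))
  have hx0 : ∀ X, ‖X‖ < r → ∀ j ∈ J, (γ X 0).1 j = 0 := by
    intro X hX j hj
    have hX' := hX.le.trans (min_le_left _ _)
    have h1 : ∀ s ∈ Set.Icc (0 : ℝ) 1, HasDerivWithinAt (fun s => (γ X s).1 j - s * X j) 0
        (Set.Icc 0 1) s := by
      intro s hs
      have h2 := (HasDerivAt.fst_apply (hγd X hX s hs) j).sub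
        ((hasDerivAt_id s).mul_const (X j))
      refine (h2.congr_deriv ?_).hasDerivWithinAt
      have h3 : (ξ X s).1 j = X j := by
        simp only [hξ, Prod.fst_sum, Finset.sum_apply, Prod.smul_fst, Pi.smul_apply, smul_eq_mul,
          ham_hfun_fst hg hgP _ _ hj]
        simp [hj]
      rw [h3]; ring
    have h4 := norm_image_sub_le_of_norm_deriv_le_segment_01' (C := 0) h1 (by simp)
    have h5 : (γ X 1).1 = X := (hc X hX').2.1
    rw [h5] at h4
    simpa using h4
  set C₂ := n * ((1 + κ) + r₀ * (L * C₁)) with hC₂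
  set C₃ := n * (r₀ * (L * C₁ ^ 2)) with hC₃
  have hcard : (J.card : ℝ) ≤ n := by
    have := J.card_le_univ
    rw [Fintype.card_fin] at this
    exact_mod_cast this
  have hξL : ∀ X, ‖X‖ ≤ r₀ → ∀ X', ‖X'‖ ≤ r₀ → ∀ s ∈ Set.Icc (0 : ℝ) 1,
      ‖ξ X' s - ξ X s‖ ≤ C₂ * ‖X' - X‖ := by
    intro X hX X' hX' s hs
    simp only [hξ]
    rw [← Finset.sum_sub_distrib]
    refine (norm_sum_le _ _).trans ?_
    have h1 : ∀ j ∈ J, ‖X' j • ham (hfun g j) (γ X' s) - X j • ham (hfun g j) (γ X s)‖ ≤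
        ((1 + κ) + r₀ * (L * C₁)) * ‖X' - X‖ := by
      intro j _
      have e : X' j • ham (hfun g j) (γ X' s) - X j • ham (hfun g j) (γ X s) =
          (X' - X) j • ham (hfun g j) (γ X' s) +
            X j • (ham (hfun g j) (γ X' s) - ham (hfun g j) (γ X s)) := by
        rw [Pi.sub_apply, sub_smul, smul_sub]; abel
      rw [e]
      refine (norm_add_le _ _).trans ?_
      rw [norm_smul, norm_smul]
      have k1 : ‖(X' - X) j‖ ≤ ‖X' - X‖ := norm_le_pi_norm _ _
      have k2 : ‖X j‖ ≤ r₀ := (norm_le_pi_norm _ _).trans hX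
      have k3 := hhamb j (γ X' s)
      have k4 : ‖ham (hfun g j) (γ X' s) - ham (hfun g j) (γ X s)‖ ≤ L * (C₁ * ‖X' - X‖) :=
        (hham j _ _).trans (by gcongr; exact hγL X' hX' X hX s hs)
      calc _ ≤ ‖X' - X‖ * (1 + κ) + r₀ * (L * (C₁ * ‖X' - X‖)) := by gcongr
        _ = _ := by ring
    refine (Finset.sum_le_sum h1).trans ?_
    rw [Finset.sum_const, nsmul_eq_mul, hC₂, mul_assoc]
    gcongr
  have hωL : ∀ X, ‖X‖ < r → ∀ X', ‖X'‖ < r → ∀ s ∈ Set.Icc (0 : ℝ) 1,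
      |omega0 n (ξ X s) (γ X' s - γ X s)| ≤ C₃ * ‖X' - X‖ ^ 2 := by
    intro X hX X' hX' s hs
    have e : omega0 n (ξ X s) (γ X' s - γ X s) =
        ∑ j ∈ J, X j * fderiv ℝ (hfun g j) (γ X s) (γ X' s - γ X s) := by
      let ωζ : E n →+ ℝ := AddMonoidHom.mk' (fun u => omega0 n u (γ X' s - γ X s))
        (fun u v => omega0_add_left _ _ _)
      change ωζ (ξ X s) = _
      simp only [hξ]
      rw [map_sum]
      refine Finset.sum_congr rfl fun j _ => ?_
      change omega0 n _ _ = _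
      rw [omega0_smul_left, omega0_ham]
    rw [e]
    refine (Finset.abs_sum_le_sum_abs _ _).trans ?_
    have h1 : ∀ j ∈ J, |X j * fderiv ℝ (hfun g j) (γ X s) (γ X' s - γ X s)| ≤
        (r₀ * (L * C₁ ^ 2)) * ‖X' - X‖ ^ 2 := by
      intro j hj
      rw [abs_mul]
      have k2 : |X j| ≤ r₀ := (norm_le_pi_norm X j).trans (hX.le.trans (min_le_left _ _))
      have k3 := taylor_lipschitz (fun z => (hasFDerivAt_hfun hg j z).differentiableAt)
        (lipschitz_fderiv_hfun hg hL j) (γ X s) (γ X' s - γ X s)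
      rw [add_sub_cancel] at k3
      have k4 : ∀ X, hfun g j (γ X s) = 0 := fun X => by
        rw [hfun, hγg X s j hj, sub_self]
      rw [k4, k4, sub_zero, zero_sub, norm_neg, Real.norm_eq_abs] at k3
      have k5 := hγL X' (hX'.le.trans (min_le_left _ _)) X (hX.le.trans (min_le_left _ _)) s hs
      calc _ ≤ r₀ * (L * (C₁ * ‖X' - X‖) ^ 2) := by
            gcongr
            exact k3.trans (by gcongr)
        _ = _ := by ring
    refine (Finset.sum_le_sum h1).trans ?_
    rw [Finset.sum_const, nsmul_eq_mul, hC₃]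
    calc _ ≤ (n : ℝ) * ((r₀ * (L * C₁ ^ 2)) * ‖X' - X‖ ^ 2) := by gcongr
      _ = _ := by ring
  refine ⟨r, hr0, fun X => ∫ s in (0 : ℝ)..1, ∑ i, (γ X s).2 i * (ξ X s).1 i,
    fun X => (γ X 1).2, fun X hX => ?_, ?_, ?_, fun X hX => ?_⟩
  · set S : (Fin n → ℝ) → ℝ := fun X => ∫ s in (0 : ℝ)..1, ∑ i, (γ X s).2 i * (ξ X s).1 i with hS
    set A : (Fin n → ℝ) →L[ℝ] ℝ :=
      ∑ i, (γ X 1).2 i • (ContinuousLinearMap.proj i : (Fin n → ℝ) →L[ℝ] ℝ) with hA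
    have hAa : ∀ u, A u = ∑ i, (γ X 1).2 i * u i := by
      intro u
      simp [hA]
    have hest : ∀ X', ‖X'‖ < r → |S X' - S X - A (X' - X)| ≤
        (n * (C₁ * C₂) + C₃) * ‖X' - X‖ ^ 2 := by
      intro X' hX'
      have hXr := hX.le.trans (min_le_left r₀ _)
      have hXr' := hX'.le.trans (min_le_left r₀ _)
      have h1 := first_variation (hγc X) (hγc X') (hξc X) (hξc X') (hγd X hX) (hγd X' hX')
        (hγL X' hXr' X hXr) (hξL X hXr X' hXr') (hωL X hX X' hX') (by
          refine Finset.sum_eq_zero fun i _ => ?_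
          by_cases hi : i ∈ J
          · rw [Prod.fst_sub, Pi.sub_apply, hx0 X hX i hi, hx0 X' hX' i hi, sub_zero, mul_zero]
          · have h2 : (γ X 0).2 i = 0 := by
              simp only [hγ, graphLift, hi, if_false]
              rw [(hc X hXr).2.2.1]; rfl
            rw [h2, zero_mul])
      rw [hAa]
      have h2 : (γ X' 1 - γ X 1).1 = X' - X := by
        rw [Prod.fst_sub]
        exact congrArg₂ _ (hc X' hXr').2.1 (hc X hXr).2.1
      rw [h2] at h1
      exact h1
    have hO : (fun X' => S X' - S X - A (X' - X)) =O[𝓝 X] fun X' => ‖X' - X‖ ^ 2 := by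
      refine Asymptotics.IsBigO.of_bound (n * (C₁ * C₂) + C₃) ?_
      have : ∀ᶠ X' in 𝓝 X, ‖X'‖ < r := continuous_norm.continuousAt.eventually (gt_mem_nhds hX)
      filter_upwards [this] with X' hX'
      rw [norm_pow, norm_norm]
      exact hest X' hX'
    have h1 := (hO.hasFDerivAt (𝕜 := ℝ) one_lt_two).add ((A.hasFDerivAt (x := X)).add_const (S X - A X))
    rw [zero_add] at h1
    refine h1.congr_of_eventuallyEq (Filter.Eventually.of_forall fun X' => ?_)
    simp only [Pi.add_apply, map_sub]
    ring
  · have : LipschitzOnWith ⟨C₁, hC₁0⟩ (fun X => (γ X 1).2) (Metric.ball 0 r) := by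
      refine LipschitzOnWith.of_dist_le_mul fun X hX X' hX' => ?_
      rw [mem_ball_zero_iff] at hX hX'
      rw [dist_eq_norm, dist_eq_norm]
      exact (norm_snd_le (γ X 1 - γ X' 1)).trans (hγL X (hX.le.trans (min_le_left _ _)) X'
        (hX'.le.trans (min_le_left _ _)) 1 (by simp))
    exact this.continuousOn
  · simp only [hγ0]; rfl
  · have h1 : (X, (γ X 1).2) = γ X 1 :=
      Prod.ext (hc X (hX.le.trans (min_le_left _ _))).2.1.symm rfl
    rw [h1]
    exact hγN X hX 1 (by simp)

end Generating

/-! ### Linear normal form of isotropic subspaces -/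

section Linear
variable {n : ℕ}

/-- The identification `(x, y) ↦ x + iy` of `E n` with the Hermitian space `ℂⁿ`. -/
def toC : E n ≃ₗ[ℝ] EuclideanSpace ℂ (Fin n) where
  toFun z := WithLp.toLp 2 fun i => (⟨z.1 i, z.2 i⟩ : ℂ)
  invFun w := (fun i => (w i).re, fun i => (w i).im)
  map_add' z w := by
    ext i
    apply Complex.ext <;> simp
  map_smul' c z := by
    ext i
    apply Complex.ext <;> simp
  left_inv z := rfl
  right_inv w := rfl

lemma im_inner_toC (z w : E n) : (inner ℂ (toC z) (toC w)).im = omega0 n z w := by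
  rw [PiLp.inner_apply, Complex.im_sum, omega0, ← Finset.sum_sub_distrib]
  refine Finset.sum_congr rfl fun i _ => ?_
  simp [toC, RCLike.inner_apply]
  ring

lemma re_inner_toC (z w : EuclideanSpace ℂ (Fin n)) : (inner ℂ z w).re = inner ℝ z w := by
  rw [PiLp.inner_apply, PiLp.inner_apply, Complex.re_sum]
  rfl

/-- An isotropic subspace is carried by a linear symplectomorphism to a coordinate subspace of
`ℝⁿ × 0`: a real orthonormal basis of an isotropic subspace of `ℂⁿ` is unitary, and so
extends to a unitary basis. -/
theorem exists_linear (K : Submodule ℝ (E n)) (hK : ∀ u ∈ K, ∀ v ∈ K, omega0 n u v = 0) :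
    ∃ (Λ : E n ≃L[ℝ] E n) (J : Finset (Fin n)),
      (∀ z w, omega0 n (Λ z) (Λ w) = omega0 n z w) ∧
      (∀ j ∈ J, Λ (Pi.single j 1, 0) ∈ K) ∧
      K ≤ Submodule.span ℝ {u | ∃ j ∈ J, u = Λ (Pi.single j 1, 0)} := by
  classical
  set K' : Submodule ℝ (EuclideanSpace ℂ (Fin n)) := K.map toC.toLinearMap with hK'
  obtain ⟨d, b⟩ : Σ d, OrthonormalBasis (Fin d) ℝ K' := ⟨_, stdOrthonormalBasis ℝ K'⟩
  have hm : ∀ i, toC.symm (b i : EuclideanSpace ℂ (Fin n)) ∈ K := by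
    intro i
    obtain ⟨u, hu, hu'⟩ := (b i).2
    rw [← hu']
    simpa using hu
  have hon : Orthonormal ℂ (fun i => (b i : EuclideanSpace ℂ (Fin n))) := by
    rw [orthonormal_iff_ite]
    intro i j
    have h1 := orthonormal_iff_ite.1 b.orthonormal i j
    rw [Submodule.coe_inner, ← re_inner_toC] at h1
    have h2 := hK _ (hm i) _ (hm j)
    rw [← im_inner_toC] at h2
    simp only [LinearEquiv.apply_symm_apply] at h2
    apply Complex.ext
    · rw [h1]; split_ifs <;> simp
    · rw [h2]; split_ifs <;> simp
  have hd : d ≤ n := by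
    have := hon.linearIndependent.fintype_card_le_finrank
    simpa using this
  let v : Fin n → EuclideanSpace ℂ (Fin n) := fun i =>
    if h : (i : ℕ) < d then b ⟨i, h⟩ else 0
  have hv : Orthonormal ℂ (Set.domRestrict {i : Fin n | (i : ℕ) < d} v) := by
    have := hon.comp (fun i : {i : Fin n | (i : ℕ) < d} => (⟨i, i.2⟩ : Fin d))
      (fun i j hij => by ext; simpa using hij)
    convert this using 1
    ext1 i
    have : (i : ℕ) < d := i.2
    simp [v, this]
  obtain ⟨B, hB⟩ := hv.exists_orthonormalBasis_extension_of_card_eq (by simp)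
  let Λ₀ : E n ≃ₗ[ℝ] E n :=
    (toC.trans (B.repr.symm.toLinearEquiv.restrictScalars ℝ)).trans toC.symm
  have hΛ₀ : ∀ z, toC (Λ₀ z) = B.repr.symm (toC z) := fun z => by
    simp [Λ₀]
  have hs : ∀ j : Fin n, toC ((Pi.single j 1, 0) : E n) = EuclideanSpace.single j (1 : ℂ) := by
    intro j
    ext i
    apply Complex.ext
    · by_cases h : i = j
      · subst h; simp [toC]
      · simp [toC, h]
    · by_cases h : i = j
      · subst h; simp [toC]
      · simp [toC, h]
  have hb : ∀ (j : Fin n) (h : (j : ℕ) < d),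
      Λ₀ (Pi.single j 1, 0) = toC.symm (b ⟨j, h⟩ : EuclideanSpace ℂ (Fin n)) := by
    intro j h
    rw [LinearEquiv.eq_symm_apply, hΛ₀, hs, B.repr_symm_single, hB j h]
    simp [v, h]
  refine ⟨Λ₀.toContinuousLinearEquiv, Finset.univ.filter fun i => (i : ℕ) < d, ?_, ?_, ?_⟩
  · intro z w
    rw [← im_inner_toC, ← im_inner_toC]
    change (inner ℂ (toC (Λ₀ z)) (toC (Λ₀ w))).im = _
    rw [hΛ₀, hΛ₀, LinearIsometryEquiv.inner_map_map]
  · intro j hj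
    have h : (j : ℕ) < d := by simpa using hj
    change Λ₀ _ ∈ K
    rw [hb j h]
    exact hm _
  · intro u hu
    let u' : K' := ⟨toC u, u, hu, rfl⟩
    have h1 := congrArg Subtype.val (b.sum_repr u')
    have h2 : u = ∑ i, b.repr u' i • toC.symm (b i : EuclideanSpace ℂ (Fin n)) := by
      have h3 := congrArg toC.symm h1
      simp only [u', LinearEquiv.symm_apply_apply, Submodule.coe_sum, map_sum, Submodule.coe_smul,
        map_smul] at h3
      exact h3.symm
    rw [h2]
    refine Submodule.sum_mem _ fun i _ => Submodule.smul_mem _ _ (Submodule.subset_span ?_)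
    refine ⟨⟨i, i.2.trans_le hd⟩, by simp, ?_⟩
    exact (hb ⟨i, i.2.trans_le hd⟩ i.2).symm

end Linear

/-! ### Coisotropic submanifolds contain graphs of exact one-forms -/

section NormalForm
variable {n k : ℕ} {N : Set (E n)} {q : E n}

lemma fderiv_tangent {z u : E n} {f : E n → ℝ} (hf : DifferentiableAt ℝ f z)
    (h0 : ∀ᶠ w in 𝓝 z, w ∈ N → f w = 0) (hu : u ∈ TangentSet n N z) : fderiv ℝ f z u = 0 := by
  obtain ⟨γ, hγ0, hγN, hγ⟩ := hu
  have h1 : HasFDerivAt f (fderiv ℝ f z) (γ 0) := by rw [hγ0]; exact hf.hasFDerivAt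
  have h2 := h1.comp_hasDerivAt 0 hγ
  have h3 : f ∘ γ =ᶠ[𝓝 0] fun _ => 0 := by
    have h4 : Filter.Tendsto γ (𝓝 0) (𝓝 z) := by
      have := hγ.continuousAt.tendsto
      rwa [hγ0] at this
    filter_upwards [hγN, h4.eventually h0] with t ht1 ht2 using ht2 ht1
  exact (h2.congr_of_eventuallyEq h3.symm).unique (hasDerivAt_const (0 : ℝ) (0 : ℝ))

/-- Functions vanishing on a coisotropic set have vanishing Poisson bracket along it. -/
lemma bracket_zero {z : E n} (hco : symplOrth n (TangentSet n N z) ⊆ TangentSet n N z)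
    {f₁ f₂ : E n → ℝ} (h₁ : DifferentiableAt ℝ f₁ z) (h₂ : DifferentiableAt ℝ f₂ z)
    (h₁0 : ∀ᶠ w in 𝓝 z, w ∈ N → f₁ w = 0) (h₂0 : ∀ᶠ w in 𝓝 z, w ∈ N → f₂ w = 0) :
    fderiv ℝ f₁ z (ham f₂ z) = 0 := by
  refine fderiv_tangent h₁ h₁0 (hco fun u hu => ?_)
  rw [omega0_ham]
  exact fderiv_tangent h₂ h₂0 hu

lemma isCoisotropic_preimage (hco : IsCoisotropic n N) (Λ : E n ≃L[ℝ] E n)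
    (hΛ : ∀ z w, omega0 n (Λ z) (Λ w) = omega0 n z w) (q : E n) :
    IsCoisotropic n ((fun z => q + Λ z) ⁻¹' N) := by
  intro z hz v hv
  have h1 : Λ v ∈ symplOrth n (TangentSet n N (q + Λ z)) := by
    rintro u ⟨γ, hγ0, hγN, hγ⟩
    have h2 : Λ.symm u ∈ TangentSet n ((fun z => q + Λ z) ⁻¹' N) z := by
      refine ⟨fun t => Λ.symm (γ t - q), ?_, ?_, ?_⟩
      · simp [hγ0]
      · filter_upwards [hγN] with t ht
        simpa using ht
      · exact (Λ.symm : E n →L[ℝ] E n).hasFDerivAt.comp_hasDerivAt 0 (hγ.sub_const q)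
    have h3 := hv _ h2
    rwa [← hΛ, Λ.apply_symm_apply] at h3
  obtain ⟨γ, hγ0, hγN, hγ⟩ := hco _ hz h1
  refine ⟨fun t => Λ.symm (γ t - q), ?_, ?_, ?_⟩
  · simp [hγ0]
  · filter_upwards [hγN] with t ht
    simpa using ht
  · have := (Λ.symm : E n →L[ℝ] E n).hasFDerivAt.comp_hasDerivAt 0 (hγ.sub_const q)
    exact this.congr_deriv (Λ.symm_apply_apply v)

/-- Implicit function theorem: a level set cut out by functions with differentials `dy_j`,
`j ∈ J`, at the origin is a graph `y_j = g_j` near the origin, where the `g_j` depend on the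
remaining coordinates only and are globally defined with bounded, Lipschitz derivative. -/
lemma exists_graph {J : Finset (Fin n)} {f : Fin n → E n → ℝ}
    (hf : ∀ j, ContDiffAt ℝ 2 (f j) 0) (hf' : ∀ j, HasFDerivAt (f j) (coordL (Sum.inr j)) 0)
    (hf0 : ∀ j, f j 0 = 0) :
    ∃ (g : Fin n → E n → ℝ) (κ : ℝ) (L : NNReal), (∀ j, Differentiable ℝ (g j)) ∧
      (∀ j z, g j (zeroJ J z) = g j z) ∧ 0 ≤ κ ∧ (∀ j z, ‖fderiv ℝ (g j) z‖ ≤ κ) ∧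
      (∀ j, LipschitzWith L (fderiv ℝ (g j))) ∧
      ∀ᶠ z in 𝓝 (0 : E n), ((∀ j ∈ J, f j z = 0) ↔ ∀ j ∈ J, z.2 j = g j z) := by
  set Θ : E n → E n := fun z => (z.1, fun i => if i ∈ J then f i z else z.2 i) with hΘ
  have hΘc : ContDiffAt ℝ 2 Θ 0 := by
    refine contDiff_fst.contDiffAt.prodMk (contDiffAt_pi.2 fun i => ?_)
    by_cases hi : i ∈ J
    · simpa [hi] using hf i
    · simp only [hi, if_false]
      exact (coordL (Sum.inr i) : E n →L[ℝ] ℝ).contDiff.contDiffAt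
  have hΘd : HasFDerivAt Θ ((ContinuousLinearEquiv.refl ℝ (E n) : E n ≃L[ℝ] E n) :
      E n →L[ℝ] E n) 0 := by
    have : HasFDerivAt Θ ((ContinuousLinearMap.fst ℝ (Fin n → ℝ) (Fin n → ℝ)).prod
        (ContinuousLinearMap.pi fun i => coordL (Sum.inr i))) 0 := by
      refine hasFDerivAt_fst.prodMk (hasFDerivAt_pi.2 fun i => ?_)
      by_cases hi : i ∈ J
      · simpa [hi] using hf' i
      · simp only [hi, if_false]
        exact (coordL (Sum.inr i) : E n →L[ℝ] ℝ).hasFDerivAt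
    refine this.congr_fderiv ?_
    ext z i <;> rfl
  have hΘ0 : Θ 0 = 0 := by
    ext i
    · rfl
    · change (if i ∈ J then f i 0 else 0) = 0
      rw [hf0]; simp
  set P := hΘc.toOpenPartialHomeomorph Θ hΘd two_ne_zero with hP
  have hPc : ∀ z, P z = Θ z := fun z => rfl
  have hPs : (0 : E n) ∈ P.source := hΘc.mem_toOpenPartialHomeomorph_source hΘd two_ne_zero
  have hPt : (0 : E n) ∈ P.target := by
    have := hΘc.image_mem_toOpenPartialHomeomorph_target hΘd two_ne_zero
    rwa [hΘ0] at this
  have hΞ : ContDiffAt ℝ 2 P.symm 0 := by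
    have := hΘc.to_localInverse hΘd two_ne_zero
    rwa [hΘ0] at this
  obtain ⟨V, hVs, hVo, h0V⟩ := eventually_nhds_iff.1 (hΞ.eventually (by decide))
  obtain ⟨G, hGs, hGc, hGe⟩ := exists_cutoff (m := 2) hVo h0V
    (fun z hz => (hVs z hz).contDiffWithinAt : ContDiffOn ℝ 2 P.symm V)
  have hGs2 : ContDiff ℝ 2 G := hGs
  have hGd : Differentiable ℝ G := hGs2.differentiable two_ne_zero
  have hG' : ContDiff ℝ 1 (fderiv ℝ G) := hGs2.fderiv_right (by norm_num)
  obtain ⟨C, hC⟩ := (hGc.fderiv ℝ).exists_bound_of_continuous hG'.continuous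
  obtain ⟨L, hL⟩ := ContDiff.lipschitzWith_of_hasCompactSupport (hGc.fderiv ℝ) hG' one_ne_zero
  set g : Fin n → E n → ℝ := fun j z => (G (zeroJ J z)).2 j with hg
  have hzn : ‖zeroJ J‖ ≤ 1 := ContinuousLinearMap.opNorm_le_bound _ zero_le_one fun z => by
    rw [one_mul]; exact norm_zeroJ_le J z
  have hgd : ∀ j z, HasFDerivAt (g j)
      ((coordL (Sum.inr j)).comp ((fderiv ℝ G (zeroJ J z)).comp (zeroJ J))) z := fun j z =>
    (coordL (Sum.inr j)).hasFDerivAt.comp z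
      ((hGd (zeroJ J z)).hasFDerivAt.comp z (zeroJ J).hasFDerivAt)
  -- composition with a coordinate and with the projection does not increase operator norms
  have hcomp : ∀ (j : Fin n) (A : E n →L[ℝ] E n),
      ‖(coordL (Sum.inr j)).comp (A.comp (zeroJ J))‖ ≤ ‖A‖ := by
    intro j A
    refine (ContinuousLinearMap.opNorm_comp_le _ _).trans ?_
    refine (mul_le_mul (norm_coordL_le _) (ContinuousLinearMap.opNorm_comp_le _ _)
      (norm_nonneg _) zero_le_one).trans ?_
    rw [one_mul]
    exact mul_le_of_le_one_right (norm_nonneg _) hzn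
  refine ⟨g, C, L, fun j z => (hgd j z).differentiableAt, fun j z => by simp [hg],
    (norm_nonneg _).trans (hC 0), fun j z => ?_, fun j => ?_, ?_⟩
  · rw [(hgd j z).fderiv]
    exact (hcomp j _).trans (hC _)
  · refine LipschitzWith.of_dist_le_mul fun z w => ?_
    rw [(hgd j z).fderiv, (hgd j w).fderiv, dist_eq_norm, ← ContinuousLinearMap.comp_sub,
      ← ContinuousLinearMap.sub_comp]
    refine (hcomp j _).trans ?_
    rw [← dist_eq_norm]
    refine (hL.dist_le_mul _ _).trans ?_
    gcongr
    rw [dist_eq_norm, dist_eq_norm, ← map_sub]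
    exact norm_zeroJ_le J _
  · have hz0 : Filter.Tendsto (zeroJ J) (𝓝 0) (𝓝 0) := by
      have := (zeroJ J).continuous.tendsto 0
      rwa [map_zero] at this
    filter_upwards [P.open_source.mem_nhds hPs, hz0.eventually (P.open_target.mem_nhds hPt),
      hz0.eventually hGe] with z hzs hzt hzG
    have hgz : ∀ j, g j z = (P.symm (zeroJ J z)).2 j := fun j => by
      simp only [hg]; rw [hzG]
    constructor
    · intro h j hj
      have h1 : Θ z = zeroJ J z := by
        ext i
        · rfl
        · simp only [hΘ, zeroJ_snd]
          split_ifs with hi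
          · exact h i hi
          · rfl
      rw [hgz, ← h1, ← hPc, P.left_inv hzs]
    · intro h j hj
      have h1 : Θ (P.symm (zeroJ J z)) = zeroJ J z := by rw [← hPc, P.right_inv hzt]
      have h2 : P.symm (zeroJ J z) = z := by
        ext i
        · exact congrFun (congrArg Prod.fst h1) i
        · by_cases hi : i ∈ J
          · rw [← hgz, h i hi]
          · have h3 := congrFun (congrArg Prod.snd h1) i
            simpa [hΘ, zeroJ_snd, hi] using h3
      rw [h2] at h1
      have h3 := congrFun (congrArg Prod.snd h1) j
      simpa [hΘ, zeroJ_snd, hj] using h3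

/-- A linear symplectic change of coordinates adapted to the characteristic directions
of a coisotropic submanifold at a point, with defining functions whose differentials there are
coordinate functions `dy_j`. -/
lemma exists_adapted (hN : IsSubmanifold n k N) (hco : IsCoisotropic n N) (hq : q ∈ N) :
    ∃ (Λ : E n ≃L[ℝ] E n) (J : Finset (Fin n)) (f : Fin n → E n → ℝ),
      (∀ z w, omega0 n (Λ z) (Λ w) = omega0 n z w) ∧ (∀ j, ContDiffAt ℝ 2 (f j) 0) ∧
      (∀ j, HasFDerivAt (f j) (coordL (Sum.inr j)) 0) ∧ (∀ j, f j 0 = 0) ∧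
      ∀ᶠ z in 𝓝 (0 : E n), (q + Λ z ∈ N ↔ ∀ j ∈ J, f j z = 0) := by
  obtain ⟨V, Φ, hV, hqV, hΦ, hNV, hT⟩ := exists_chart hN hq
  obtain ⟨e, he, hTe⟩ := hT q hqV hq
  let K : Submodule ℝ (E n) :=
    { carrier := symplOrth n (TangentSet n N q)
      add_mem' := fun {a b} ha hb u hu => by rw [omega0_add_left, ha u hu, hb u hu, add_zero]
      zero_mem' := fun u hu => by simp [omega0]
      smul_mem' := fun c a ha u hu => by rw [omega0_smul_left, ha u hu, mul_zero] }
  obtain ⟨Λ, J, hΛ, hJ, hspan⟩ := exists_linear K fun u hu v hv => hu v (hco q hq hv)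
  have hmem : ∀ z ∈ V, (z ∈ N ↔ ∀ v ∈ K, omega0 n v (e.symm (Φ z)) = 0) := by
    intro z hz
    rw [hNV z hz]
    constructor
    · intro h v hv
      exact hv _ ((hTe _).2 (by simpa using h))
    · intro h c hc
      have h1 : ∀ u, omega0 n (ham (fun w => coordL c (e w)) 0) u = coordL c (e u) := by
        intro u
        rw [omega0_ham]
        have : HasFDerivAt (fun w => coordL c (e w)) ((coordL c).comp (e : E n →L[ℝ] E n)) 0 :=
          ((coordL c).comp (e : E n →L[ℝ] E n)).hasFDerivAt
        rw [this.fderiv]; rfl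
      have h2 := h (ham (fun w => coordL c (e w)) 0) fun u hu => by
        rw [h1]; exact (hTe u).1 hu c hc
      rw [h1] at h2
      simpa using h2
  have hmem' : ∀ z ∈ V, (z ∈ N ↔ ∀ j ∈ J, omega0 n (Λ (Pi.single j 1, 0)) (e.symm (Φ z)) = 0) := by
    intro z hz
    rw [hmem z hz]
    refine ⟨fun h j hj => h _ (hJ j hj), fun h v hv => ?_⟩
    have hv' := hspan hv
    clear hv
    induction hv' using Submodule.span_induction with
    | mem u hu => obtain ⟨j, hj, rfl⟩ := hu; exact h j hj
    | zero => simp [omega0]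
    | add x y _ _ hx hy => rw [omega0_add_left, hx, hy, add_zero]
    | smul c x _ hx => rw [omega0_smul_left, hx, mul_zero]
  let om (v : E n) : E n →L[ℝ] ℝ := LinearMap.toContinuousLinearMap
    { toFun := omega0 n v
      map_add' := fun a b => omega0_add_right _ _ _
      map_smul' := fun c a => omega0_smul_right _ _ _ }
  have h_om : ∀ v u, om v u = omega0 n v u := fun _ _ => rfl
  let A : E n → E n := fun z => q + Λ z
  have hA0 : A 0 = q := by simp [A]
  have hAd : HasFDerivAt A (Λ : E n →L[ℝ] E n) 0 :=
    (Λ : E n →L[ℝ] E n).hasFDerivAt.const_add q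
  have hAc : ContDiff ℝ 2 A := contDiff_const.add Λ.contDiff
  have hΦ2 : ContDiffAt ℝ 2 Φ (A 0) := by
    rw [hA0]; exact (hΦ.contDiffAt (hV.mem_nhds hqV)).of_le ENat.LEInfty.out
  -- subtracting `Φ q` makes the functions with `j ∉ J` vanish at the origin as well
  refine ⟨Λ, J, fun j z => om (Λ (Pi.single j 1, 0)) (e.symm (Φ (A z) - Φ q)), hΛ, fun j => ?_,
    fun j => ?_, fun j => ?_, ?_⟩
  · exact (om _).contDiff.contDiffAt.comp 0 (e.symm.contDiff.contDiffAt.comp 0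
      ((hΦ2.comp 0 hAc.contDiffAt).sub contDiffAt_const))
  · have h1 : HasFDerivAt Φ (e : E n →L[ℝ] E n) (A 0) := by rw [hA0]; exact he
    have h2 := (om (Λ (Pi.single j 1, 0))).hasFDerivAt.comp (0 : E n)
      ((e.symm : E n →L[ℝ] E n).hasFDerivAt.comp (0 : E n)
        ((h1.comp (0 : E n) hAd).sub_const (Φ q)))
    refine h2.congr_fderiv ?_
    refine ContinuousLinearMap.ext fun u => ?_
    change omega0 n (Λ (Pi.single j 1, 0)) (e.symm (e (Λ u))) = u.2 j
    rw [e.symm_apply_apply, hΛ]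
    simp [omega0, Pi.single_apply]
  · simp [hA0]
  · have h1 : ∀ᶠ z in 𝓝 (0 : E n), A z ∈ V :=
      hAc.continuous.continuousAt.eventually (by rw [hA0]; exact hV.mem_nhds hqV)
    have h2 := (hmem' q hqV).1 hq
    filter_upwards [h1] with z hz
    rw [show q + Λ z = A z from rfl, hmem' _ hz]
    refine forall₂_congr fun j hj => ?_
    rw [map_sub, map_sub, h_om, h_om, h2 j hj, sub_zero]

/-- In suitable affine symplectic coordinates centred at any of its points, a coisotropic
submanifold contains the graph of the differential of a `C¹` function `S` on a ball of `ℝⁿ`. -/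
theorem exists_lagrangian_graph (hN : IsSubmanifold n k N) (hco : IsCoisotropic n N)
    (hq : q ∈ N) :
    ∃ Λ : E n ≃L[ℝ] E n, (∀ z w, omega0 n (Λ z) (Λ w) = omega0 n z w) ∧
      ∃ r > 0, ∃ (S : (Fin n → ℝ) → ℝ) (Y : (Fin n → ℝ) → (Fin n → ℝ)),
        (∀ X, ‖X‖ < r → HasFDerivAt S
          (∑ i, Y X i • (ContinuousLinearMap.proj i : (Fin n → ℝ) →L[ℝ] ℝ)) X) ∧
        ContinuousOn Y (Metric.ball 0 r) ∧ Y 0 = 0 ∧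
        ∀ X, ‖X‖ < r → q + Λ (X, Y X) ∈ N := by
  obtain ⟨Λ, J, f, hΛ, hf, hf', hf0, hiff⟩ := exists_adapted hN hco hq
  obtain ⟨g, κ, L, hg, hgP, hκ0, hκ, hL, hiff'⟩ := exists_graph (J := J) hf hf' hf0
  obtain ⟨U, hU, hUo, h0U⟩ := eventually_nhds_iff.1 (hiff.and hiff')
  have hNU : ∀ z ∈ U, (z ∈ (fun z => q + Λ z) ⁻¹' N ↔ ∀ j ∈ J, z.2 j = g j z) := fun z hz =>
    (hU z hz).1.trans (hU z hz).2
  have hco' := isCoisotropic_preimage hco Λ hΛ q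
  refine ⟨Λ, hΛ, exists_generating hg hgP hκ0 hκ hL (hUo.mem_nhds h0U) hNU
    (by simpa using hq) fun z hz hzN i hi j hj => ?_⟩
  have hv : ∀ i ∈ J, ∀ᶠ w in 𝓝 z, w ∈ (fun z => q + Λ z) ⁻¹' N → hfun g i w = 0 := by
    intro i hi
    filter_upwards [hUo.mem_nhds hz] with w hw hwN
    exact sub_eq_zero.2 ((hNU w hw).1 hwN i hi)
  exact bracket_zero (hco' z hzN) (hasFDerivAt_hfun hg i z).differentiableAt
    (hasFDerivAt_hfun hg j z).differentiableAt (hv i hi) (hv j hj)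

end NormalForm

/-! ### Shears along differentials and their smoothing -/

section Shear
open scoped Convolution
variable {n : ℕ}

/-- The gradient of a function on `ℝⁿ`. -/
def grad (S : (Fin n → ℝ) → ℝ) (X : Fin n → ℝ) : Fin n → ℝ :=
  fun i => fderiv ℝ S X (Pi.single i 1)

lemma norm_grad_sub_le (S T : (Fin n → ℝ) → ℝ) (X : Fin n → ℝ) :
    ‖grad S X - grad T X‖ ≤ ‖fderiv ℝ S X - fderiv ℝ T X‖ := by
  rw [pi_norm_le_iff_of_nonneg (norm_nonneg _)]
  intro i
  change ‖(fderiv ℝ S X - fderiv ℝ T X) (Pi.single i 1)‖ ≤ _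
  refine (ContinuousLinearMap.le_opNorm _ _).trans (mul_le_of_le_one_right (norm_nonneg _) ?_)
  rw [Pi.norm_single, norm_one]

lemma apply_eq_sum (A : (Fin n → ℝ) →L[ℝ] ℝ) (u : Fin n → ℝ) :
    A u = ∑ i, u i * A (Pi.single i 1) := by
  conv_lhs => rw [pi_eq_sum_univ' u, map_sum]
  exact Finset.sum_congr rfl fun i _ => by rw [map_smul, smul_eq_mul]

/-- Mollification: `C¹` approximation of compactly supported `C¹` functions by smooth ones. -/
lemma exists_mollified {S : (Fin n → ℝ) → ℝ} (hS : ContDiff ℝ 1 S) (hSc : HasCompactSupport S)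
    {ε : ℝ} (hε : 0 < ε) :
    ∃ T : (Fin n → ℝ) → ℝ, ContDiff ℝ ∞ T ∧ ∀ X, ‖fderiv ℝ T X - fderiv ℝ S X‖ ≤ ε := by
  have hS' : Continuous (fderiv ℝ S) := hS.continuous_fderiv one_ne_zero
  obtain ⟨δ, hδ, hu⟩ := Metric.uniformContinuous_iff.1
    ((hSc.fderiv ℝ).uniformContinuous_of_continuous hS') ε hε
  let φ : ContDiffBump (0 : Fin n → ℝ) := ⟨δ / 2, δ, by linarith, by linarith⟩
  refine ⟨φ.normed MeasureTheory.volume ⋆[ContinuousLinearMap.lsmul ℝ ℝ, MeasureTheory.volume] S,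
    φ.hasCompactSupport_normed.contDiff_convolution_left _ φ.contDiff_normed
      hS.continuous.locallyIntegrable, fun X => ?_⟩
  have h1 := hSc.hasFDerivAt_convolution_right (ContinuousLinearMap.lsmul ℝ ℝ)
    ((φ.continuous_normed (μ := MeasureTheory.volume)).locallyIntegrable
      (μ := MeasureTheory.volume)) hS X
  rw [h1.fderiv]
  have h2 := φ.dist_normed_convolution_le (μ := MeasureTheory.volume) (x₀ := X) (ε := ε)
    hS'.aestronglyMeasurable (fun Z hZ => (hu (Metric.mem_ball.1 hZ)).le)
  rw [dist_eq_norm] at h2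
  have e : (φ.normed MeasureTheory.volume ⋆[ContinuousLinearMap.precompR (Fin n → ℝ)
        (ContinuousLinearMap.lsmul ℝ ℝ), MeasureTheory.volume] fderiv ℝ S) X =
      (φ.normed MeasureTheory.volume ⋆[ContinuousLinearMap.lsmul ℝ ℝ, MeasureTheory.volume]
        fderiv ℝ S) X := by
    rw [MeasureTheory.convolution_def, MeasureTheory.convolution_def]
    rfl
  rw [e]
  exact h2

/-- The map `(x, y) ↦ q + Λ (x, y + G x)`. -/
def shear (q : E n) (Λ : E n ≃L[ℝ] E n) (G : (Fin n → ℝ) → (Fin n → ℝ)) (hG : Continuous G) :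
    E n ≃ₜ E n where
  toFun z := q + Λ (z.1, z.2 + G z.1)
  invFun w := ((Λ.symm (w - q)).1, (Λ.symm (w - q)).2 - G (Λ.symm (w - q)).1)
  left_inv z := by simp
  right_inv w := by
    change q + Λ ((Λ.symm (w - q)).1, (Λ.symm (w - q)).2 - G (Λ.symm (w - q)).1 +
      G (Λ.symm (w - q)).1) = w
    rw [sub_add_cancel, Prod.mk.eta, Λ.apply_symm_apply, add_sub_cancel]
  continuous_toFun := by fun_prop
  continuous_invFun := by fun_prop

lemma shear_apply (q : E n) (Λ : E n ≃L[ℝ] E n) (G : (Fin n → ℝ) → (Fin n → ℝ))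
    (hG : Continuous G) (z : E n) : shear q Λ G hG z = q + Λ (z.1, z.2 + G z.1) := rfl

lemma shear_symm_apply (q : E n) (Λ : E n ≃L[ℝ] E n) (G : (Fin n → ℝ) → (Fin n → ℝ))
    (hG : Continuous G) (w : E n) : (shear q Λ G hG).symm w =
      ((Λ.symm (w - q)).1, (Λ.symm (w - q)).2 - G (Λ.symm (w - q)).1) := rfl

lemma contDiff_grad {S : (Fin n → ℝ) → ℝ} (hS : ContDiff ℝ ∞ S) : ContDiff ℝ ∞ (grad S) :=
  contDiff_pi.2 fun i => (hS.fderiv_right (m := ∞) (by simp)).clm_apply contDiff_const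

lemma contDiff_shear {S : (Fin n → ℝ) → ℝ} (hS : ContDiff ℝ ∞ S) (q : E n) (Λ : E n ≃L[ℝ] E n)
    (hG : Continuous (grad S)) : ContDiff ℝ ∞ (shear q Λ (grad S) hG) := by
  change ContDiff ℝ ∞ fun z : E n => q + Λ (z.1, z.2 + grad S z.1)
  exact contDiff_const.add (Λ.contDiff.comp
    (contDiff_fst.prodMk (contDiff_snd.add ((contDiff_grad hS).comp contDiff_fst))))

/-- Shears along exact one-forms are symplectic because Hessians are symmetric. -/
lemma symplectic_shear {S : (Fin n → ℝ) → ℝ} (hS : ContDiff ℝ ∞ S) (q : E n) (Λ : E n ≃L[ℝ] E n)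
    (hΛ : ∀ z w, omega0 n (Λ z) (Λ w) = omega0 n z w) (hG : Continuous (grad S)) (z u v : E n) :
    omega0 n (fderiv ℝ (shear q Λ (grad S) hG) z u) (fderiv ℝ (shear q Λ (grad S) hG) z v) =
      omega0 n u v := by
  set Hs := fderiv ℝ (fderiv ℝ S) z.1 with hHs
  have hsym : ∀ a b, Hs a b = Hs b a :=
    hS.contDiffAt.isSymmSndFDerivAt (by simp [minSmoothness_of_isRCLikeNormedField]; exact ENat.LEInfty.out)
  have hgd : HasFDerivAt (grad S) (ContinuousLinearMap.pi fun i => Hs.flip (Pi.single i 1)) z.1 := by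
    refine hasFDerivAt_pi.2 fun i => ?_
    have h1 : HasFDerivAt (fderiv ℝ S) Hs z.1 :=
      ((hS.fderiv_right (m := ∞) (by simp)).differentiable (by simp) z.1).hasFDerivAt
    have h2 := h1.clm_apply (hasFDerivAt_const (Pi.single i (1 : ℝ) : Fin n → ℝ) z.1)
    refine h2.congr_fderiv ?_
    ext a
    simp
  have hd : HasFDerivAt (shear q Λ (grad S) hG) ((Λ : E n →L[ℝ] E n).comp
      ((ContinuousLinearMap.fst ℝ _ _).prod ((ContinuousLinearMap.snd ℝ _ _) +
        (ContinuousLinearMap.pi fun i => Hs.flip (Pi.single i 1)).comp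
          (ContinuousLinearMap.fst ℝ _ _)))) z := by
    have h1 : HasFDerivAt (fun z : E n => grad S z.1) _ z := hgd.comp z hasFDerivAt_fst
    exact ((Λ : E n →L[ℝ] E n).hasFDerivAt.comp z
      (hasFDerivAt_fst.prodMk (hasFDerivAt_snd.add h1))).const_add q
  have hda : ∀ u, fderiv ℝ (shear q Λ (grad S) hG) z u =
      Λ (u.1, u.2 + fun i => Hs u.1 (Pi.single i 1)) := fun u => by
    rw [hd.fderiv]; rfl
  rw [hda, hda, hΛ]
  have e1 : ∑ i, u.1 i * Hs v.1 (Pi.single i 1) = Hs v.1 u.1 := (apply_eq_sum _ _).symm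
  have e2 : ∑ i, Hs u.1 (Pi.single i 1) * v.1 i = Hs u.1 v.1 := by
    rw [apply_eq_sum (Hs u.1) v.1]
    exact Finset.sum_congr rfl fun i _ => mul_comm _ _
  simp only [omega0, Pi.add_apply, mul_add, add_mul, Finset.sum_add_distrib, e1, e2, hsym u.1 v.1]
  ring

lemma norm_shear_sub_le (q : E n) (Λ : E n ≃L[ℝ] E n) {G G' : (Fin n → ℝ) → (Fin n → ℝ)}
    (hG : Continuous G) (hG' : Continuous G') {ε : ℝ} (h : ∀ X, ‖G X - G' X‖ ≤ ε) (z : E n) :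
    dist (shear q Λ G hG z) (shear q Λ G' hG' z) ≤ ‖(Λ : E n →L[ℝ] E n)‖ * ε := by
  rw [shear_apply, shear_apply, dist_add_left, dist_eq_norm, ← map_sub]
  refine ((Λ : E n →L[ℝ] E n).le_opNorm _).trans ?_
  gcongr
  rw [Prod.norm_def]
  refine max_le ?_ ?_
  · simpa using (norm_nonneg _).trans (h 0)
  · simpa using h z.1

lemma norm_shear_symm_sub_le (q : E n) (Λ : E n ≃L[ℝ] E n) {G G' : (Fin n → ℝ) → (Fin n → ℝ)}
    (hG : Continuous G) (hG' : Continuous G') {ε : ℝ} (h : ∀ X, ‖G X - G' X‖ ≤ ε) (w : E n) :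
    dist ((shear q Λ G hG).symm w) ((shear q Λ G' hG').symm w) ≤ ε := by
  rw [shear_symm_apply, shear_symm_apply, Prod.dist_eq]
  refine max_le ?_ ?_
  · simpa using (norm_nonneg _).trans (h 0)
  · simpa [dist_eq_norm, norm_sub_rev] using h _

/-- Near any point of a coisotropic submanifold there is a homeomorphism of `E n`, a `C⁰` limit of
symplectomorphisms, which maps a ball of the Lagrangian plane `y = 0` into the submanifold. -/
theorem exists_flattening {k : ℕ} {N : Set (E n)} {q : E n} (hN : IsSubmanifold n k N)
    (hco : IsCoisotropic n N) (hq : q ∈ N) :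
    ∃ (σ : E n ≃ₜ E n) (Sm : ℕ → E n ≃ₜ E n), (∀ m, ContDiff ℝ ∞ (Sm m)) ∧
      (∀ m z u v, omega0 n (fderiv ℝ (Sm m) z u) (fderiv ℝ (Sm m) z v) = omega0 n u v) ∧
      CConv (fun m => Sm m) σ ∧ CConv (fun m => (Sm m).symm) σ.symm ∧ σ 0 = q ∧
      ∃ r > 0, ∀ X : Fin n → ℝ, ‖X‖ < r → σ (X, 0) ∈ N := by
  obtain ⟨Λ, hΛ, r, hr, S, Y, hS, hY, hY0, hgr⟩ := exists_lagrangian_graph hN hco hq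
  have hS1 : ContDiffOn ℝ ((1 : ℕ∞) : WithTop ℕ∞) S (Metric.ball 0 r) := by
    change ContDiffOn ℝ (0 + 1) S (Metric.ball 0 r)
    rw [contDiffOn_succ_iff_fderiv_of_isOpen Metric.isOpen_ball]
    refine ⟨fun X hX => (hS X (by simpa using hX)).differentiableAt.differentiableWithinAt,
      by simp, ?_⟩
    rw [contDiffOn_zero]
    have h1 : ContinuousOn (fun X => ∑ i, Y X i •
        (ContinuousLinearMap.proj i : (Fin n → ℝ) →L[ℝ] ℝ)) (Metric.ball 0 r) :=
      continuousOn_finsetSum _ fun i _ =>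
        ((continuous_apply i).comp_continuousOn hY).smul continuousOn_const
    exact h1.congr fun X hX => (hS X (by simpa using hX)).fderiv
  obtain ⟨T, hT, hTc, hTe⟩ := exists_cutoff Metric.isOpen_ball (Metric.mem_ball_self hr) hS1
  obtain ⟨ρ, hρ, hball⟩ := Metric.eventually_nhds_iff_ball.1 hTe.eventuallyEq_nhds
  have hTg : ∀ X, ‖X‖ < ρ → ‖X‖ < r → grad T X = Y X := by
    intro X hX hX'
    have h1 := hball X (by simpa using hX)
    ext i
    rw [grad, h1.fderiv_eq, (hS X hX').fderiv]
    simp [Pi.single_apply]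
  have hTG : Continuous (grad T) := continuous_pi fun i =>
    (hT.continuous_fderiv one_ne_zero).clm_apply continuous_const
  choose Tm hTm hTm' using fun m : ℕ => exists_mollified hT hTc (Nat.one_div_pos_of_nat (n := m))
  have hTmG : ∀ m, Continuous (grad (Tm m)) := fun m => (contDiff_grad (hTm m)).continuous
  have hb : ∀ m X, ‖grad (Tm m) X - grad T X‖ ≤ 1 / ((m : ℝ) + 1) := fun m X =>
    (norm_grad_sub_le _ _ _).trans (hTm' m X)
  have hlim : Filter.Tendsto (fun m : ℕ => 1 / ((m : ℝ) + 1)) Filter.atTop (𝓝 0) :=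
    tendsto_one_div_add_atTop_nhds_zero_nat
  refine ⟨shear q Λ (grad T) hTG, fun m => shear q Λ (grad (Tm m)) (hTmG m),
    fun m => contDiff_shear (hTm m) q Λ (hTmG m),
    fun m => symplectic_shear (hTm m) q Λ hΛ (hTmG m), ?_, ?_, ?_, min ρ r, lt_min hρ hr,
    fun X hX => ?_⟩
  · intro C _ ε hε
    have h1 := hlim.const_mul ‖(Λ : E n →L[ℝ] E n)‖
    rw [mul_zero] at h1
    filter_upwards [h1.eventually (gt_mem_nhds hε)] with m hm z _
    exact (norm_shear_sub_le q Λ (hTmG m) hTG (hb m) z).trans_lt hm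
  · intro C _ ε hε
    filter_upwards [hlim.eventually (gt_mem_nhds hε)] with m hm z _
    exact (norm_shear_symm_sub_le q Λ (hTmG m) hTG (hb m) z).trans_lt hm
  · rw [shear_apply]
    change q + Λ (0, 0 + grad T 0) = q
    rw [hTg 0 (by simpa using hρ) (by simpa using hr), hY0]
    simp
  · rw [shear_apply]
    have h1 := hX.trans_le (min_le_left _ _)
    have h2 := hX.trans_le (min_le_right _ _)
    simpa [hTg X h1 h2] using hgr X h2

end Shear

/-! ### Reduction to the flat model -/

section Assembly
variable {n : ℕ}

lemma CConv.comp {Ψ Φ : ℕ → E n → E n} {ψ φ : E n → E n} (hΨ : CConv Ψ ψ) (hΦ : CConv Φ φ)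
    (hψ : Continuous ψ) (hφ : Continuous φ) : CConv (fun m z => Ψ m (Φ m z)) fun z => ψ (φ z) := by
  intro S hS ε hε
  have hK : IsCompact (Metric.cthickening 1 (φ '' S)) := (hS.image hφ).cthickening
  obtain ⟨δ, hδ, hu⟩ := Metric.uniformContinuousOn_iff.1
    (hK.uniformContinuousOn_of_continuous hψ.continuousOn) (ε / 2) (by positivity)
  filter_upwards [hΨ _ hK (ε / 2) (by positivity), hΦ S hS (min δ 1) (by positivity)]
    with m h1 h2 z hz
  have h3 := h2 z hz
  have hm : φ z ∈ φ '' S := Set.mem_image_of_mem φ hz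
  have h4 : Φ m z ∈ Metric.cthickening 1 (φ '' S) :=
    Metric.mem_cthickening_of_dist_le _ _ _ _ hm (h3.le.trans (min_le_right _ _))
  have h5 : φ z ∈ Metric.cthickening 1 (φ '' S) := Metric.self_subset_cthickening _ hm
  have h6 := hu _ h4 _ h5 (h3.trans_le (min_le_left _ _))
  have h7 := h1 _ h4
  calc _ ≤ dist (Ψ m (Φ m z)) (ψ (Φ m z)) + dist (ψ (Φ m z)) (ψ (φ z)) := dist_triangle _ _ _
    _ < ε := by linarith

lemma CConv.of_tendsto {Ψ : ℕ → E n → E n} {ψ : E n → E n}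
    (h : TendstoLocallyUniformly Ψ ψ Filter.atTop) : CConv Ψ ψ := by
  intro S hS ε hε
  have h1 := (tendstoLocallyUniformly_iff_forall_isCompact.1 h) S hS
  filter_upwards [Metric.tendstoUniformlyOn_iff.1 h1 ε hε] with m hm z hz
  rw [dist_comm]
  exact hm z hz

lemma contDiff_of_isSymplecto {Ψ : E n ≃ E n} (h : IsSymplecto n Set.univ Ψ) :
    ContDiff ℝ ∞ Ψ ∧ ContDiff ℝ ∞ Ψ.symm := by
  obtain ⟨-, -, -, h1, ⟨g, hg, hgl⟩, -⟩ := h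
  refine ⟨contDiffOn_univ.1 h1, ?_⟩
  rw [Set.image_univ, Ψ.range_eq_univ, contDiffOn_univ] at hg
  have : (Ψ.symm : E n → E n) = g := funext fun w => by
    have := hgl (Ψ.symm w) (Set.mem_univ _)
    rw [Ψ.apply_symm_apply] at this
    exact this.symm
  rw [this]
  exact hg

/-- The rigidity theorem. If the image failed to be coisotropic at `ψ q`, two functions vanishing on
it would have Poisson bracket `1` there, contrary to `core` for the map `ψ ∘ σ`, where `σ` is the
homeomorphism of `exists_flattening`. -/
theorem main {k k' : ℕ} {N : Set (E n)} (hN : IsSubmanifold n k N) (hco : IsCoisotropic n N)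
    (ψ : E n ≃ₜ E n) (hψ : IsSympHomeo n ψ) (hψN : IsSubmanifold n k' (⇑ψ '' N)) :
    IsCoisotropic n (⇑ψ '' N) := by
  rintro p ⟨q, hq, rfl⟩ v hv
  by_contra hv'
  obtain ⟨H, D, hH, hHc, hD, hDc, h0, hbr⟩ := exists_bracket hψN ⟨q, hq, rfl⟩ hv hv'
  obtain ⟨Ψ, hΨ, hc, hc'⟩ := hψ
  obtain ⟨σ, Sm, hSs, hSw, hSc, hSc', hσ0, r, hr, hσN⟩ := exists_flattening hN hco hq
  let Ψh : ℕ → E n ≃ₜ E n := fun m =>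
    ⟨Ψ m, (contDiff_of_isSymplecto (hΨ m)).1.continuous,
      (contDiff_of_isSymplecto (hΨ m)).2.continuous⟩
  have hΨs : ∀ m, ContDiff ℝ ∞ (Ψh m) := fun m => (contDiff_of_isSymplecto (hΨ m)).1
  have hΨw : ∀ m z u v, omega0 n (fderiv ℝ (Ψh m) z u) (fderiv ℝ (Ψh m) z v) = omega0 n u v :=
    fun m z => (hΨ m).2.2.2.2.2 z (Set.mem_univ z)
  -- a smaller ball of the plane is mapped into the region where `H` and `D` vanish on `ψ(N)`
  have hlim : Filter.Tendsto (fun X : Fin n → ℝ => ψ (σ (X, 0))) (𝓝 0) (𝓝 (ψ q)) := by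
    have h1 : Continuous fun X : Fin n → ℝ => ψ (σ (X, 0)) := by fun_prop
    have h2 := h1.tendsto 0
    rwa [show ((0 : Fin n → ℝ), (0 : Fin n → ℝ)) = (0 : E n) from rfl, hσ0] at h2
  obtain ⟨ρ, hρ, hball⟩ := Metric.eventually_nhds_iff_ball.1 (hlim.eventually h0)
  have hvan : ∀ X : Fin n → ℝ, ‖X‖ < min ρ r → H (ψ (σ (X, 0))) = 0 ∧ D (ψ (σ (X, 0))) = 0 :=
    fun X hX => hball X (by simpa using hX.trans_le (min_le_left _ _))
      ⟨_, hσN X (hX.trans_le (min_le_right _ _)), rfl⟩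
  refine core (σ.trans ψ) (fun m => (Sm m).trans (Ψh m)) (fun m => (hΨs m).comp (hSs m))
    (fun m z u v => ?_) ?_ ?_ hH hHc hD hDc (lt_min hρ hr) (fun X hX => (hvan X hX).1)
    (fun X hX => (hvan X hX).2) ?_
  · have h1 : fderiv ℝ ((Sm m).trans (Ψh m)) z =
        (fderiv ℝ (Ψh m) (Sm m z)).comp (fderiv ℝ (Sm m) z) :=
      fderiv_comp z ((hΨs m).differentiable (by simp) _) ((hSs m).differentiable (by simp) _)
    rw [h1]
    exact (hΨw m _ _ _).trans (hSw m z u v)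
  · exact (CConv.of_tendsto hc).comp hSc ψ.continuous σ.continuous
  · exact hSc'.comp (CConv.of_tendsto hc') σ.symm.continuous ψ.symm.continuous
  · change fderiv ℝ D (ψ (σ 0)) (ham H (ψ (σ 0))) = 1
    rw [hσ0]
    exact hbr

end Assembly

end HLS

/-- the Humilière–Leclercq–Seyfaddini theorem. -/
theorem HLS_coisotropic_rigidity
    (n : ℕ) (hn : 1 ≤ n) (k : ℕ) (N : Set (E n)) (hN : IsSubmanifold n k N)
    (hco : IsCoisotropic n N)
    (ψ : E n ≃ₜ E n) (hψ : IsSympHomeo n ψ)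
    (k' : ℕ) (hψN : IsSubmanifold n k' (⇑ψ '' N)) :
    IsCoisotropic n (⇑ψ '' N) := by
  exact HLS.main hN hco ψ hψ hψN
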